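/- arXiv:2301.07353 — 2 statements merged into one kernel-verified Lean document; each statement's English description precedes it below -/
import Mathlib

section
/- Let d ≥ 1 and let P = (p⁽¹⁾,…,p⁽ᵈ⁾) and Q = (q⁽¹⁾,…,q⁽ᵈ⁾) be d-tuples of probability vectors such that the columns of P share a common support and the columns of Q share a common support. Assume the strict inequalities D_α(P) > D_α(Q) for every α ∈ (A₊ ∪ A₋) \ {e₁,…,e_d}, D^T_β(P) > D^T_β(Q) for every β ∈ B₋ \ {0}, and D₁(p⁽ᵏ⁾‖p⁽ˡ⁾) > D₁(q⁽ᵏ⁾‖q⁽ˡ⁾) for all k ≠ ℓ. Then there exists N such that for every n ≥ N there is a stochastic matrix Tₙ satisfying Tₙ (p⁽ᵏ⁾)^{⊗n} = (q⁽ᵏ⁾)^{⊗n} for all k = 1,…,d. -/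
open scoped BigOperators NNReal

noncomputable section

/-- A probability vector on a finite index type. -/
def IsProbVec {ι : Type*} [Fintype ι] (p : ι → ℝ) : Prop :=
  (∀ i, 0 ≤ p i) ∧ ∑ i, p i = 1

/-- A (column-)stochastic matrix: nonnegative entries, every column sums to `1`. -/
def IsStochastic {ι κ : Type*} [Fintype ι] [Fintype κ] (T : ι → κ → ℝ) : Prop :=
  (∀ i j, 0 ≤ T i j) ∧ ∀ j, ∑ i, T i j = 1

/-- Matrix–vector multiplication. -/
def matVec {ι κ : Type*} [Fintype κ] (T : ι → κ → ℝ) (v : κ → ℝ) : ι → ℝ :=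
  fun i => ∑ j, T i j * v j

/-- Kronecker product of two vectors. -/
def kron {ι κ : Type*} (p : ι → ℝ) (q : κ → ℝ) : ι × κ → ℝ :=
  fun x => p x.1 * q x.2

/-- `n`-fold Kronecker power of a vector. -/
def kpow {ι : Type*} (p : ι → ℝ) (n : ℕ) : (Fin n → ι) → ℝ :=
  fun f => ∏ j, p (f j)

/-- Kronecker product reindexed along `Fin (m * n)`. -/
def kronFin {m n : ℕ} (p : Fin m → ℝ) (q : Fin n → ℝ) : Fin (m * n) → ℝ :=
  fun i => kron p q (finProdFinEquiv.symm i)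

/-- The sum of the `k` largest entries of a nonnegative vector, expressed as the
largest sum over subsets of cardinality at most `k`. -/
def topSum {ι : Type*} [Fintype ι] (p : ι → ℝ) (k : ℕ) : ℝ :=
  ⨆ s ∈ {s : Finset ι | s.card ≤ k}, ∑ i ∈ s, p i

/-- Majorization for nonnegative vectors (possibly of different lengths):
equal total sums, and for each `k` the sum of the `k` largest entries of `p` is
at least that of `q`. -/
def Majorizes {ι κ : Type*} [Fintype ι] [Fintype κ] (p : ι → ℝ) (q : κ → ℝ) : Prop :=
  (∑ i, p i = ∑ j, q j) ∧ ∀ k : ℕ, topSum q k ≤ topSum p k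

/-- The size of the support, `‖p‖₀`. -/
def supp0 {ι : Type*} [Fintype ι] (p : ι → ℝ) : ℕ :=
  (Finset.univ.filter fun i => p i ≠ 0).card

/-- Entrywise nonnegativity. -/
def NonnegVec {n : ℕ} (p : Fin n → ℝ) : Prop := ∀ i, 0 ≤ p i

/-- The modified majorization preorder `≽₀,₁`: majorization plus equality of
support sizes. -/
def MajMod {ι κ : Type*} [Fintype ι] [Fintype κ] (p : ι → ℝ) (q : κ → ℝ) : Prop :=
  Majorizes p q ∧ supp0 p = supp0 q

/-- `f_α(p) = ∑_{i ∈ supp p} (p i)^α`. -/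
def fA {ι : Type*} [Fintype ι] (α : ℝ) (p : ι → ℝ) : ℝ :=
  ∑ i, if p i = 0 then 0 else p i ^ α

/-- Shannon entropy (the terms with `p i = 0` vanish). -/
def H1ent {ι : Type*} [Fintype ι] (p : ι → ℝ) : ℝ := -∑ i, p i * Real.log (p i)

/-- `H₀'(p) = ∑_{i ∈ supp p} log p_i`. -/
def H0' {ι : Type*} [Fintype ι] (p : ι → ℝ) : ℝ :=
  ∑ i, if p i = 0 then 0 else Real.log (p i)

/-- Rényi entropy of order `α` (with `α = 1` the Shannon entropy). -/
def Hent {ι : Type*} [Fintype ι] (α : ℝ) (p : ι → ℝ) : ℝ :=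
  if α = 1 then -∑ i, p i * Real.log (p i)
  else (1 / (1 - α)) * Real.log (∑ i, if p i = 0 then 0 else p i ^ α)

/-- Min-entropy `H_∞(p) = - log max_i p_i`. -/
def HentInf {ι : Type*} [Fintype ι] (p : ι → ℝ) : ℝ := -Real.log (⨆ i, p i)

/-- Kullback–Leibler divergence (the terms with `p i = 0` vanish). -/
def KL {n : ℕ} (p q : Fin n → ℝ) : ℝ :=
  ∑ i, p i * Real.log (p i / q i)

/-- Rényi divergence of order `α` for vectors with common support. -/
def Renyi {n : ℕ} (α : ℝ) (p q : Fin n → ℝ) : ℝ :=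
  if α = 1 then ∑ i, p i * Real.log (p i / q i)
  else (1 / (α - 1)) * Real.log (∑ i, if p i = 0 then 0 else p i ^ α * q i ^ (1 - α))

/-- Max-divergence `D_∞(p‖q) = max_{i ∈ supp q} log (p_i / q_i)`. -/
def RenyiInf {n : ℕ} (p q : Fin n → ℝ) : ℝ :=
  ⨆ i ∈ Finset.univ.filter (fun i => q i ≠ 0), Real.log (p i / q i)

/-- Rényi divergence with values in the extended reals `[0, ∞]`. -/
def RenyiE {n : ℕ} (α : ℝ) (p q : Fin n → ℝ) : EReal :=
  if α = 1 then
    (if ∀ i, p i ≠ 0 → q i ≠ 0 then ((∑ i, p i * Real.log (p i / q i) : ℝ) : EReal) else ⊤)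
  else if α < 1 then
    (if ∃ i, p i ≠ 0 ∧ q i ≠ 0 then
      (((1 / (α - 1)) *
        Real.log (∑ i, if p i = 0 ∨ q i = 0 then 0 else p i ^ α * q i ^ (1 - α)) : ℝ) : EReal)
    else (⊤ : EReal))
  else
    (if ∀ i, p i ≠ 0 → q i ≠ 0 then
      (((1 / (α - 1)) *
        Real.log (∑ i, if p i = 0 then 0 else p i ^ α * q i ^ (1 - α)) : ℝ) : EReal)
    else (⊤ : EReal))

/-- The common support of a tuple of vectors. -/
def suppIdx {d n : ℕ} (P : Fin d → Fin n → ℝ) : Finset (Fin n) :=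
  Finset.univ.filter fun i => ∃ k, P k i ≠ 0

/-- `f_α(P) = ∑_{i ∈ I} ∏_k (p_i^{(k)})^{α_k}` with `I` the common support. -/
def fMat {d n : ℕ} (α : Fin d → ℝ) (P : Fin d → Fin n → ℝ) : ℝ :=
  ∑ i ∈ suppIdx P, ∏ k, P k i ^ α k

/-- The matrix `α`-divergence `D_α`. -/
def Dmat {d n : ℕ} (α : Fin d → ℝ) (P : Fin d → Fin n → ℝ) : ℝ :=
  (1 / ((⨆ k, α k) - 1)) * Real.log (∑ i ∈ suppIdx P, ∏ k, P k i ^ α k)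

/-- The tropical matrix divergence `D^𝕋_β`. -/
def DmatT {d n : ℕ} (β : Fin d → ℝ) (P : Fin d → Fin n → ℝ) : ℝ :=
  (1 / (⨆ k, β k)) * Real.log (⨆ i ∈ suppIdx P, ∏ k, P k i ^ β k)

/-- Membership in `A₊`: entries summing to `1`, all nonnegative. -/
def memAplus {d : ℕ} (α : Fin d → ℝ) : Prop := (∑ k, α k = 1) ∧ ∀ k, 0 ≤ α k

/-- Membership in `A₋`: entries summing to `1`, one entry `≥ 1`, the others `≤ 0`. -/
def memAminus {d : ℕ} (α : Fin d → ℝ) : Prop :=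
  (∑ k, α k = 1) ∧ ∃ k, 1 ≤ α k ∧ ∀ l, l ≠ k → α l ≤ 0

/-- Membership in `B₋`: entries summing to `0`, one entry `≥ 0`, the others `≤ 0`. -/
def memBminus {d : ℕ} (β : Fin d → ℝ) : Prop :=
  (∑ k, β k = 0) ∧ ∃ k, 0 ≤ β k ∧ ∀ l, l ≠ k → β l ≤ 0

/-- `α` is none of the standard basis vectors `e₁, …, e_d`. -/
def notBasis {d : ℕ} (α : Fin d → ℝ) : Prop := ∀ k, α ≠ Pi.single k 1

/-- ℓ¹-distance of two vectors, padding with zeros to a common length. -/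
def l1PadDist {m n : ℕ} (p : Fin m → ℝ) (q : Fin n → ℝ) : ℝ :=
  ∑ i : Fin (max m n),
    |(if h : (i : ℕ) < m then p ⟨(i : ℕ), h⟩ else 0) -
      (if h : (i : ℕ) < n then q ⟨(i : ℕ), h⟩ else 0)|

/-- Index type of the direct sum `⨁_{s=0}^{n-1} p^{⊗(n-1-s)} ⊗ q^{⊗s}`. -/
abbrev TrickIdx (m m' n : ℕ) : Type :=
  Σ s : Fin n, (Fin (n - 1 - (s : ℕ)) → Fin m) × (Fin (s : ℕ) → Fin m')

/-- The standard catalyst `(1/n) ⨁_{s=0}^{n-1} p^{⊗(n-1-s)} ⊗ q^{⊗s}`. -/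
def trick {m m' : ℕ} (p : Fin m → ℝ) (q : Fin m' → ℝ) (n : ℕ) : TrickIdx m m' n → ℝ :=
  fun x => (1 / (n : ℝ)) * (kpow p (n - 1 - (x.1 : ℕ)) x.2.1 * kpow q (x.1 : ℕ) x.2.2)

/-- A valid tuple: nonnegative entries and common support across the tuple. -/
def TupOK {d n : ℕ} (P : Fin d → Fin n → ℝ) : Prop :=
  (∀ k i, 0 ≤ P k i) ∧ ∀ k l i, P k i ≠ 0 ↔ P l i ≠ 0

/-- Matrix majorization of tuples: a single stochastic matrix carrying each column
of `P` to the corresponding column of `Q`. -/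
def TupMaj {d m n : ℕ} (P : Fin d → Fin m → ℝ) (Q : Fin d → Fin n → ℝ) : Prop :=
  ∃ T : Fin n → Fin m → ℝ, IsStochastic T ∧ ∀ k, matVec T (P k) = Q k


namespace AMM

/-- exponent group algebra -/
abbrev Alg (d : ℕ) := AddMonoidAlgebra ℝ (Fin d → ℝ)

variable {d : ℕ}

/-- monomial -/
def X (w : Fin d → ℝ) : Alg d := AddMonoidAlgebra.single w 1

/-- row of a monomial -/
def Ev (w : Fin d → ℝ) : Fin d → ℝ := fun k => Real.exp (w k)

/-- constant exponent -/
def cst (s : ℝ) : Fin d → ℝ := fun _ => s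

/-- Linear functional attached to a test function. -/
def Lf (ψ : (Fin d → ℝ) → ℝ) : Alg d →ₗ[ℝ] ℝ :=
  (Finsupp.linearCombination ℝ (fun w => ψ (Ev w))) ∘ₗ
    (AddMonoidAlgebra.coeffLinearEquiv ℝ).toLinearMap

@[simp] lemma Lf_single (ψ : (Fin d → ℝ) → ℝ) (w c) :
    Lf ψ (AddMonoidAlgebra.single w c) = c * ψ (Ev w) := by
  simp [Lf]

/-- norm in column k. -/
def nrm (k : Fin d) : Alg d →ₐ[ℝ] ℝ :=
  AddMonoidAlgebra.lift ℝ ℝ (Fin d → ℝ)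
    { toFun := fun w => Real.exp (w.toAdd k)
      map_one' := by simp
      map_mul' := by intro a b; simp [Real.exp_add] }

@[simp] lemma nrm_single (k : Fin d) (w c) :
    nrm k (AddMonoidAlgebra.single w c) = c * Real.exp (w k) := by
  simp [nrm]

@[simp] lemma nrm_X (k : Fin d) (w) : nrm k (X w) = Real.exp (w k) := by
  simp [X]

lemma X_add (v w : Fin d → ℝ) : X (v + w) = X v * X w := by
  simp [X]

lemma X_zero : X (0 : Fin d → ℝ) = 1 := rfl

lemma X_nsmul (n : ℕ) (w : Fin d → ℝ) : X (n • w) = X w ^ n := by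
  simp [X]

lemma single_eq (w : Fin d → ℝ) (c : ℝ) : AddMonoidAlgebra.single w c = c • X w := by
  simp [X]

/-- strictly positive elements -/
inductive SPos : Alg d → Prop
  | single (w : Fin d → ℝ) (c : ℝ) (hc : 0 < c) : SPos (AddMonoidAlgebra.single w c)
  | add {f g : Alg d} : SPos f → SPos g → SPos (f + g)

lemma SPos.X (w : Fin d → ℝ) : SPos (X w) := SPos.single w 1 one_pos
lemma SPos.one : SPos (1 : Alg d) := SPos.X 0

lemma SPos.mul {f g : Alg d} (hf : SPos f) (hg : SPos g) : SPos (f * g) := by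
  induction hf with
  | single w c hc =>
    induction hg with
    | single v b hb =>
      rw [AddMonoidAlgebra.single_mul_single]
      exact SPos.single _ _ (mul_pos hc hb)
    | add _ _ h1 h2 => rw [mul_add]; exact h1.add h2
  | add _ _ h1 h2 => rw [add_mul]; exact h1.add h2

lemma SPos.pow {f : Alg d} (hf : SPos f) (n : ℕ) : SPos (f ^ n) := by
  induction n with
  | zero => simpa using SPos.one
  | succ n ih => rw [pow_succ]; exact ih.mul hf

lemma SPos.C {c : ℝ} (hc : 0 < c) : SPos (algebraMap ℝ (Alg d) c) := by
  have : algebraMap ℝ (Alg d) c = AddMonoidAlgebra.single 0 c := by simp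
  rw [this]; exact SPos.single 0 c hc

lemma SPos.smul {c : ℝ} (hc : 0 < c) {f : Alg d} (hf : SPos f) : SPos (c • f) := by
  rw [Algebra.smul_def]; exact (SPos.C hc).mul hf

lemma SPos.nrm_pos {f : Alg d} (hf : SPos f) (k : Fin d) : 0 < nrm k f := by
  induction hf with
  | single w c hc => rw [nrm_single]; positivity
  | add _ _ h1 h2 => rw [map_add]; exact add_pos h1 h2

lemma SPos.sum {ι : Type*} {s : Finset ι} (hs : s.Nonempty) {f : ι → Alg d}
    (hf : ∀ i ∈ s, SPos (f i)) : SPos (∑ i ∈ s, f i) := by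
  classical
  induction hs using Finset.Nonempty.cons_induction with
  | singleton a => simpa using hf a (by simp)
  | cons a s ha hs ih =>
    rw [Finset.sum_cons]
    exact (hf a (by simp)).add (ih fun i hi => hf i (by simp [hi]))

lemma exists_sub (a : Alg d) : ∃ f g, SPos f ∧ SPos g ∧ a = f - g := by
  induction a using AddMonoidAlgebra.induction_linear with
  | zero => exact ⟨1, 1, SPos.one, SPos.one, by simp⟩
  | add a b ha hb =>
    obtain ⟨f, g, hf, hg, rfl⟩ := ha
    obtain ⟨f', g', hf', hg', rfl⟩ := hb
    exact ⟨f + f', g + g', hf.add hf', hg.add hg', by ring⟩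
  | single w c =>
    rcases lt_trichotomy c 0 with h | h | h
    · refine ⟨1, 1 + AddMonoidAlgebra.single w (-c), SPos.one,
        SPos.one.add (SPos.single _ _ (by linarith)), ?_⟩
      rw [single_eq, single_eq]; module
    · subst h; exact ⟨1, 1, SPos.one, SPos.one, by simp⟩
    · refine ⟨1 + AddMonoidAlgebra.single w c, 1, SPos.one.add (SPos.single _ _ h),
        SPos.one,  by ring⟩

/-- sublinear test functions -/
structure Sublin (ψ : (Fin d → ℝ) → ℝ) : Prop where
  smul : ∀ (t : ℝ) v, 0 ≤ t → ψ (t • v) = t * ψ v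
  add : ∀ v w, ψ (v + w) ≤ ψ v + ψ w

lemma Sublin.zero {ψ : (Fin d → ℝ) → ℝ} (h : Sublin ψ) : ψ 0 = 0 := by
  have := h.smul 0 0 le_rfl
  simpa using this

lemma Sublin.sum {ψ : (Fin d → ℝ) → ℝ} (h : Sublin ψ) {ι : Type*} (s : Finset ι)
    (f : ι → Fin d → ℝ) : ψ (∑ i ∈ s, f i) ≤ ∑ i ∈ s, ψ (f i) := by
  classical
  induction s using Finset.induction_on with
  | empty => simp [h.zero]
  | insert a s ha ih =>
    rw [Finset.sum_insert ha, Finset.sum_insert ha]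
    exact (h.add _ _).trans (by linarith)

/-- the majorization cone -/
def C0 : Set (Alg d) := {a | ∀ ψ, Sublin ψ → 0 ≤ Lf ψ a}

/-- cones which are stable under positive elements -/
structure Cone (K : Set (Alg d)) : Prop where
  zero : (0 : Alg d) ∈ K
  add : ∀ {a b}, a ∈ K → b ∈ K → a + b ∈ K
  mul : ∀ {f a}, SPos f → a ∈ K → f * a ∈ K

lemma Lf_single_mul (ψ : (Fin d → ℝ) → ℝ) (w c) (a : Alg d) :
    Lf ψ (AddMonoidAlgebra.single w c * a) = c * Lf (fun v => ψ (Ev w * v)) a := by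
  induction a using AddMonoidAlgebra.induction_linear with
  | zero => simp
  | add a b ha hb => rw [mul_add, map_add, map_add, ha, hb, mul_add]
  | single v b =>
    rw [AddMonoidAlgebra.single_mul_single, Lf_single, Lf_single, mul_assoc]
    congr 4
    ext k
    simp [Ev, Real.exp_add]

lemma Sublin.comp {ψ : (Fin d → ℝ) → ℝ} (h : Sublin ψ) (e : Fin d → ℝ) :
    Sublin (fun v => ψ (e * v)) where
  smul t v ht := by
    rw [← h.smul t _ ht]; congr 1; simp
  add v w := by
    show ψ (e * (v + w)) ≤ _
    rw [mul_add]; exact h.add _ _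

lemma C0_cone : Cone (C0 (d := d)) where
  zero := by intro ψ _; simp
  add := by
    intro a b ha hb ψ h
    rw [map_add]; exact add_nonneg (ha ψ h) (hb ψ h)
  mul := by
    intro f a hf
    induction hf generalizing a with
    | single w c hc =>
      intro ha ψ h
      rw [Lf_single_mul]
      exact mul_nonneg hc.le (ha _ (h.comp _))
    | add _ _ h1 h2 =>
      intro ha ψ h
      rw [add_mul, map_add]; exact add_nonneg (h1 ha ψ h) (h2 ha ψ h)

/-- vector of norms -/
def nv (a : Alg d) : Fin d → ℝ := fun k => nrm k a

lemma nv_single (w : Fin d → ℝ) (c : ℝ) : nv (AddMonoidAlgebra.single w c) = c • Ev w := by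
  ext k; simp [nv, Ev]

lemma nv_add (a b : Alg d) : nv (a + b) = nv a + nv b := by
  ext k; simp [nv]

lemma merge {f : Alg d} (hf : SPos f) {ψ : (Fin d → ℝ) → ℝ} (h : Sublin ψ) :
    ψ (nv f) ≤ Lf ψ f := by
  induction hf with
  | single w c hc => rw [nv_single, h.smul c _ hc.le, Lf_single]
  | add _ _ h1 h2 => rw [nv_add, map_add]; exact (h.add _ _).trans (add_le_add h1 h2)

lemma merge_mem {f : Alg d} (hf : SPos f) (w : Fin d → ℝ) (hw : ∀ k, nrm k f = Real.exp (w k)) :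
    f - X w ∈ C0 := by
  intro ψ h
  have : nv f = Ev w := by ext k; exact hw k
  have h2 := merge hf h
  rw [this] at h2
  simp only [map_sub, X, Lf_single]
  linarith

lemma scal_mem (w : Fin d → ℝ) (c : ℝ) (hc : 0 < c) :
    X (w + cst (Real.log c)) - c • X w ∈ C0 ∧ c • X w - X (w + cst (Real.log c)) ∈ C0 := by
  have key : ∀ ψ : (Fin d → ℝ) → ℝ, Sublin ψ →
      Lf ψ (X (w + cst (Real.log c)) - c • X w) = 0 := by
    intro ψ h
    have : Ev (w + cst (Real.log c)) = c • Ev w := by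
      ext k; simp [Ev, cst, Real.exp_add, Real.exp_log hc, mul_comm]
    simp only [map_sub, map_smul, X, Lf_single, this, h.smul c _ hc.le]
    simp
  refine ⟨fun ψ h => (key ψ h).ge, fun ψ h => ?_⟩
  have := key ψ h
  rw [map_sub] at this ⊢
  linarith

lemma Cone.smul {K : Set (Alg d)} (hK : Cone K) {c : ℝ} (hc : 0 ≤ c) {a : Alg d} (ha : a ∈ K) :
    c • a ∈ K := by
  rcases hc.eq_or_lt with h | h
  · rw [← h, zero_smul]; exact hK.zero
  · rw [Algebra.smul_def]; exact hK.mul (SPos.C h) ha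

lemma Cone.sum {K : Set (Alg d)} (hK : Cone K) {ι : Type*} (s : Finset ι) {f : ι → Alg d}
    (h : ∀ i ∈ s, f i ∈ K) : ∑ i ∈ s, f i ∈ K := by
  classical
  induction s using Finset.induction_on with
  | empty => simpa using hK.zero
  | insert a s ha ih =>
    rw [Finset.sum_insert ha]
    exact hK.add (h a (by simp)) (ih fun i hi => h i (by simp [hi]))

end AMM

namespace AMM
variable {d : ℕ}
open Filter Topology Matrix

lemma inv_ineq {a : Alg d} (ha : SPos a) :
    ∀ᶠ N in 𝓝 (1 : Matrix (Fin d) (Fin d) ℝ), ∀ M : Matrix (Fin d) (Fin d) ℝ, N * M = 1 →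
      ∀ ψ, Sublin ψ → Lf ψ a ≤ ∑ l, (nv a ᵥ* N) l * ψ (M l) := by
  induction ha with
  | single w c hc =>
    have hev : ∀ᶠ N in 𝓝 (1 : Matrix (Fin d) (Fin d) ℝ),
        ∀ l, 0 < ((c • Ev w) ᵥ* N) l := by
      rw [eventually_all]
      intro l
      have hcont : Continuous fun N : Matrix (Fin d) (Fin d) ℝ => ((c • Ev w) ᵥ* N) l := by
        have : Continuous fun N : Matrix (Fin d) (Fin d) ℝ => ((c • Ev w) ᵥ* N) := by fun_prop
        exact (continuous_apply l).comp this
      have h0 : 0 < ((c • Ev w) ᵥ* (1 : Matrix (Fin d) (Fin d) ℝ)) l := by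
        rw [vecMul_one]; simp only [Pi.smul_apply, smul_eq_mul, Ev]; positivity
      exact hcont.continuousAt.eventually_const_lt h0
    filter_upwards [hev] with N hN M hNM ψ h
    rw [Lf_single, nv_single, ← h.smul c _ hc.le]
    set r := c • Ev w
    have hr : r = ∑ l, (r ᵥ* N) l • M l := by
      have : r = (r ᵥ* N) ᵥ* M := by rw [vecMul_vecMul, hNM, vecMul_one]
      conv_lhs => rw [this]
      exact vecMul_eq_sum _ _
    conv_lhs => rw [hr]
    refine (h.sum _ _).trans (Finset.sum_le_sum fun l _ => ?_)
    rw [h.smul _ _ (hN l).le]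
  | add _ _ h1 h2 =>
    filter_upwards [h1, h2] with N h1 h2 M hNM ψ h
    rw [map_add, nv_add, add_vecMul]
    refine (add_le_add (h1 M hNM ψ h) (h2 M hNM ψ h)).trans_eq ?_
    rw [← Finset.sum_add_distrib]
    exact Finset.sum_congr rfl fun l _ => by simp [add_mul]

/-- The element of the algebra belonging to a tuple. -/
def tup {ι : Type*} [Fintype ι] (p : ι → Fin d → ℝ) : Alg d := ∑ i, X (p i)

lemma X_sum {α : Type*} (s : Finset α) (g : α → Fin d → ℝ) : X (∑ i ∈ s, g i) = ∏ i ∈ s, X (g i) := by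
  classical
  induction s using Finset.induction_on with
  | empty => simp [X_zero]
  | insert a s ha ih => rw [Finset.sum_insert ha, Finset.prod_insert ha, X_add, ih]

lemma tup_pow {ι : Type*} [Fintype ι] (p : ι → Fin d → ℝ) (n : ℕ) :
    tup p ^ n = ∑ f : Fin n → ι, X (∑ s, p (f s)) := by
  classical
  rw [tup, Fintype.sum_pow]
  exact Finset.sum_congr rfl fun f _ => (X_sum _ _).symm

lemma expsum_pow {ι : Type*} [Fintype ι] (g : ι → ℝ) (n : ℕ) :
    ∑ f : Fin n → ι, Real.exp (∑ s, g (f s)) = (∑ i, Real.exp (g i)) ^ n := by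
  classical
  rw [Fintype.sum_pow]
  exact Finset.sum_congr rfl fun f _ => Real.exp_sum _ _

theorem universal {ι : Type*} [Fintype ι] [Nonempty (Fin d)] (p : ι → Fin d → ℝ)
    (hp : ∀ k, ∑ i, Real.exp (p i k) = 1)
    (hρ : ∀ k l, k ≠ l → ∑ i, Real.exp ((p i k + p i l) / 2) < 1)
    {a : Alg d} (ha : SPos a) (hn : ∀ k, nrm k a = 1) : ∃ j, tup p ^ j - a ∈ C0 := by
  classical
  have hlab : ∀ n, ∀ f : Fin n → ι, ∃ l, ∀ k, (∑ s, p (f s)) k ≤ (∑ s, p (f s)) l :=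
    fun n f => Finite.exists_max _
  choose lab hl using hlab
  let M : ℕ → Matrix (Fin d) (Fin d) ℝ := fun n =>
    Matrix.of fun l k => ∑ f : Fin n → ι, if lab n f = l then Ev (∑ s, p (f s)) k else 0
  have hMrow : ∀ n l, M n l = ∑ f : Fin n → ι, if lab n f = l then Ev (∑ s, p (f s)) else 0 := by
    intro n l
    ext k
    simp only [M, Matrix.of_apply, Finset.sum_apply]
    exact Finset.sum_congr rfl fun f _ => by split_ifs <;> rfl
  have hcol : ∀ n k, ∑ l, M n l k = 1 := by
    intro n k
    simp only [M, Matrix.of_apply]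
    rw [Finset.sum_comm]
    simp only [Finset.sum_ite_eq, Finset.mem_univ, if_true]
    have := expsum_pow (fun i => p i k) n
    rw [hp k, one_pow] at this
    rw [← this]
    exact Finset.sum_congr rfl fun f _ => by simp [Ev]
  have hnn : ∀ n l k, 0 ≤ M n l k := by
    intro n l k
    simp only [M, Matrix.of_apply]
    exact Finset.sum_nonneg fun f _ => by split_ifs <;> simp [Ev, Real.exp_nonneg]
  have hoff : ∀ n l k, l ≠ k → M n l k ≤ (∑ i, Real.exp ((p i k + p i l) / 2)) ^ n := by
    intro n l k _
    rw [← expsum_pow]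
    simp only [M, Matrix.of_apply]
    refine Finset.sum_le_sum fun f _ => ?_
    split_ifs with h
    · simp only [Ev]
      apply Real.exp_le_exp.2
      have h1 := hl n f k
      rw [h] at h1
      have : ∑ s, (p (f s) k + p (f s) l) / 2 =
          ((∑ s, p (f s)) k + (∑ s, p (f s)) l) / 2 := by
        rw [← Finset.sum_div, Finset.sum_add_distrib]; simp
      rw [this]; linarith
    · exact Real.exp_nonneg _
  have hoffT : ∀ l k, l ≠ k → Tendsto (fun n => M n l k) atTop (𝓝 0) := by
    intro l k hlk
    refine squeeze_zero (fun n => hnn n l k) (fun n => hoff n l k hlk)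
      (tendsto_pow_atTop_nhds_zero_of_lt_one
        (Finset.sum_nonneg fun _ _ => Real.exp_nonneg _) (hρ k l hlk.symm))
  have hT : Tendsto M atTop (𝓝 1) := by
    refine tendsto_pi_nhds.2 fun l => ?_
    refine tendsto_pi_nhds.2 fun k => ?_
    by_cases h : l = k
    · subst h
      have h1 : ∀ n, M n l l = 1 - ∑ l' ∈ Finset.univ.erase l, M n l' l := by
        intro n
        have := hcol n l
        rw [← Finset.add_sum_erase _ _ (Finset.mem_univ l)] at this
        linarith
      have h2 : Tendsto (fun n => 1 - ∑ l' ∈ Finset.univ.erase l, M n l' l) atTop (𝓝 (1 - 0)) := by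
        refine tendsto_const_nhds.sub ?_
        rw [← Finset.sum_const_zero (s := Finset.univ.erase l) (M := ℝ)]
        refine tendsto_finsetSum _ fun l' hl' => hoffT l' l (Finset.ne_of_mem_erase hl')
      simp only [h1, Matrix.one_apply_eq]
      simpa using h2
    · rw [Matrix.one_apply_ne h]; exact hoffT l k h
  have hdet : Tendsto (fun n => (M n).det) atTop (𝓝 1) := by
    have : Continuous fun A : Matrix (Fin d) (Fin d) ℝ => A.det := continuous_id.matrix_det
    have := (this.tendsto 1).comp hT
    simpa [Function.comp_def] using this
  have hadj : Tendsto (fun n => (M n).adjugate) atTop (𝓝 1) := by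
    have : Continuous fun A : Matrix (Fin d) (Fin d) ℝ => A.adjugate := continuous_id.matrix_adjugate
    have := (this.tendsto 1).comp hT
    simpa [Function.comp_def] using this
  have hN : Tendsto (fun n => ((M n).det)⁻¹ • (M n).adjugate) atTop (𝓝 1) := by
    have := (hdet.inv₀ one_ne_zero).smul hadj
    simpa using this
  have hd0 : ∀ᶠ n in atTop, (M n).det ≠ 0 := hdet.eventually_ne one_ne_zero
  obtain ⟨j, h1, h2⟩ := ((hN.eventually (inv_ineq ha)).and hd0).exists
  refine ⟨j, fun ψ hψ => ?_⟩
  set N := ((M j).det)⁻¹ • (M j).adjugate with hNdef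
  have hNM : N * M j = 1 := by
    rw [hNdef, smul_mul_assoc, adjugate_mul, smul_smul, inv_mul_cancel₀ h2, one_smul]
  have hMN : M j * N = 1 := by
    rw [hNdef, mul_smul_comm, mul_adjugate, smul_smul, inv_mul_cancel₀ h2, one_smul]
  have h3 := h1 (M j) hNM ψ hψ
  have hnv : nv a = 1 := by ext k; exact hn k
  have h4 : (1 : Fin d → ℝ) ᵥ* M j = 1 := by
    ext k; simp [vecMul, dotProduct, hcol]
  have h5 : (1 : Fin d → ℝ) ᵥ* N = 1 := by
    conv_lhs => rw [← h4]
    rw [vecMul_vecMul, hMN, vecMul_one]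
  rw [hnv, h5] at h3
  simp only [Pi.one_apply, one_mul] at h3
  have h6 : ∑ l, ψ (M j l) ≤ Lf ψ (tup p ^ j) := by
    rw [tup_pow, map_sum]
    calc ∑ l, ψ (M j l) ≤ ∑ l, ∑ f : Fin j → ι,
          ψ (if lab j f = l then Ev (∑ s, p (f s)) else 0) := by
          refine Finset.sum_le_sum fun l _ => ?_
          rw [hMrow]; exact hψ.sum _ _
      _ = ∑ f : Fin j → ι, ∑ l, ψ (if lab j f = l then Ev (∑ s, p (f s)) else 0) :=
          Finset.sum_comm
      _ = _ := by
          refine Finset.sum_congr rfl fun f _ => ?_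
          rw [Finset.sum_eq_single (lab j f)]
          · simp [X]
          · intro l _ hl; rw [if_neg hl.symm, hψ.zero]
          · simp
  rw [map_sub]; linarith

/-- Every element of the ideal is bounded. -/
theorem bounded {ι : Type*} [Fintype ι] [Nonempty (Fin d)] (p : ι → Fin d → ℝ)
    (hp : ∀ k, ∑ i, Real.exp (p i k) = 1)
    (hρ : ∀ k l, k ≠ l → ∑ i, Real.exp ((p i k + p i l) / 2) < 1)
    {a : Alg d} (ha : ∀ k, nrm k a = 0) : ∃ (N : ℝ) (j : ℕ), 0 < N ∧
      N • (tup p ^ j - 1) - a ∈ C0 := by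
  obtain ⟨f, g, hf, hg, rfl⟩ := exists_sub a
  have hfg : ∀ k, nrm k f = nrm k g := fun k => by
    have := ha k; rw [map_sub] at this; linarith
  obtain ⟨k0, hk0⟩ := Finite.exists_max (fun k => nrm k f)
  set N := 1 + nrm k0 f with hN
  have hNpos : 0 < N := by have := hf.nrm_pos k0; linarith
  set b : Fin d → ℝ := fun k => Real.log (N - nrm k f)
  have hb : ∀ k, Real.exp (b k) = N - nrm k f := fun k =>
    Real.exp_log (by have := hk0 k; linarith)
  have h1 : SPos (N⁻¹ • (f + X b)) := (hf.add (SPos.X b)).smul (inv_pos.2 hNpos)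
  have h2 : SPos (N⁻¹ • (g + X b)) := (hg.add (SPos.X b)).smul (inv_pos.2 hNpos)
  obtain ⟨j, hj⟩ := universal p hp hρ h1 (fun k => by
    rw [map_smul, map_add, nrm_X, hb, smul_eq_mul, add_sub_cancel, inv_mul_cancel₀ hNpos.ne'])
  have h3 := merge_mem h2 0 (fun k => by
    rw [map_smul, map_add, nrm_X, hb, smul_eq_mul, ← hfg, add_sub_cancel,
      inv_mul_cancel₀ hNpos.ne']; simp)
  refine ⟨N, j, hNpos, ?_⟩
  have h4 := C0_cone.smul hNpos.le (C0_cone.add hj h3)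
  rw [X_zero] at h4
  convert h4 using 1
  have e1 : f = N • (N⁻¹ • f) := by rw [smul_smul, mul_inv_cancel₀ hNpos.ne', one_smul]
  have e2 : g = N • (N⁻¹ • g) := by rw [smul_smul, mul_inv_cancel₀ hNpos.ne', one_smul]
  conv_lhs => rw [e1, e2]
  module

end AMM

namespace AMM
variable {d : ℕ}

/-- Total saturated cones. -/
structure TCone (u : Alg d) (K : Set (Alg d)) : Prop where
  cone : Cone K
  base : C0 ⊆ K
  total : ∀ a, a ∈ K ∨ -a ∈ K
  sat : ∀ {g a}, SPos g → g * a ∈ K → a ∈ K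
  neg : -u ∉ K

lemma extend_cone {K : Set (Alg d)} (hK : Cone K) (v : Alg d) :
    Cone {a | ∃ c ∈ K, ∃ f, (f = 0 ∨ SPos f) ∧ a = c + f * v} where
  zero := ⟨0, hK.zero, 0, Or.inl rfl, by simp⟩
  add := by
    rintro _ _ ⟨c, hc, f, hf, rfl⟩ ⟨c', hc', f', hf', rfl⟩
    refine ⟨c + c', hK.add hc hc', f + f', ?_, by ring⟩
    rcases hf with rfl | hf
    · simpa using hf'
    · rcases hf' with rfl | hf'
      · right; simpa using hf
      · exact Or.inr (hf.add hf')
  mul := by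
    rintro g _ hg ⟨c, hc, f, hf, rfl⟩
    refine ⟨g * c, hK.mul hg hc, g * f, ?_, by ring⟩
    rcases hf with rfl | hf
    · left; simp
    · exact Or.inr (hg.mul hf)

theorem exists_tcone {u : Alg d} {D : Set (Alg d)} (hD : Cone D) (hC : C0 ⊆ D)
    (hu : ∀ g, SPos g → -(g * u) ∉ D) : ∃ K, D ⊆ K ∧ TCone u K := by
  obtain ⟨K, hDK, hmax⟩ := zorn_subset_nonempty
    {K : Set (Alg d) | Cone K ∧ ∀ g, SPos g → -(g * u) ∉ K} (by
      intro c hc hchain hne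
      refine ⟨⋃₀ c, ⟨⟨?_, ?_, ?_⟩, ?_⟩, fun s hs => Set.subset_sUnion_of_mem hs⟩
      · obtain ⟨s, hs⟩ := hne
        exact ⟨s, hs, (hc hs).1.zero⟩
      · rintro a b ⟨s, hs, ha⟩ ⟨t, ht, hb⟩
        rcases hchain.total hs ht with h | h
        · exact ⟨t, ht, (hc ht).1.add (h ha) hb⟩
        · exact ⟨s, hs, (hc hs).1.add ha (h hb)⟩
      · rintro f a hf ⟨s, hs, ha⟩
        exact ⟨s, hs, (hc hs).1.mul hf ha⟩
      · rintro g hg ⟨s, hs, ha⟩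
        exact (hc hs).2 g hg ha) D ⟨hD, hu⟩
  have hK : Cone K := hmax.prop.1
  have hKu := hmax.prop.2
  have key : ∀ v, v ∉ K → ∃ c ∈ K, ∃ f g, SPos f ∧ SPos g ∧ -(g * u) = c + f * v := by
    intro v hv
    by_contra hcon
    push Not at hcon
    have hsub : K ⊆ {a | ∃ c ∈ K, ∃ f, (f = 0 ∨ SPos f) ∧ a = c + f * v} :=
      fun a ha => ⟨a, ha, 0, Or.inl rfl, by simp⟩
    have := hmax.le_of_ge (y := {a | ∃ c ∈ K, ∃ f, (f = 0 ∨ SPos f) ∧ a = c + f * v})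
      ⟨extend_cone hK v, ?_⟩ hsub
    · exact hv (this ⟨0, hK.zero, 1, Or.inr SPos.one, by simp⟩)
    · rintro g hg ⟨c, hc, f, hf, h⟩
      rcases hf with rfl | hf
      · rw [zero_mul, add_zero] at h
        exact hKu g hg (h ▸ hc)
      · exact hcon c hc f g hf hg h
  refine ⟨K, hDK, hK, hC.trans hDK, ?_, ?_, ?_⟩
  · intro a
    by_contra hcon
    push Not at hcon
    obtain ⟨c, hc, f, g, hf, hg, h⟩ := key a hcon.1
    obtain ⟨c', hc', f', g', hf', hg', h'⟩ := key (-a) hcon.2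
    apply hKu (f' * g + f * g') ((hf'.mul hg).add (hf.mul hg'))
    have : -((f' * g + f * g') * u) = f' * c + f * c' := by
      linear_combination f' * h + f * h'
    rw [this]
    exact hK.add (hK.mul hf' hc) (hK.mul hf hc')
  · intro g a hg ha
    by_contra hcon
    obtain ⟨c, hc, f, g', hf, hg', h⟩ := key a hcon
    apply hKu (g * g') (hg.mul hg')
    have : -(g * g' * u) = g * c + f * (g * a) := by linear_combination g * h
    rw [this]
    exact hK.add (hK.mul hg hc) (hK.mul hf ha)
  · intro h
    exact hKu 1 SPos.one (by simpa using h)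

theorem exists_catalyst {u : Alg d} (hu : u ∈ C0) (s : ℕ → Alg d)
    (hmono : ∀ R R', R ≤ R' → ∃ g e, SPos g ∧ SPos e ∧ g * s R' - e * s R ∈ C0)
    (hbdd : ∀ R, ∃ f, SPos f ∧ f * u + s R ∈ C0)
    (hcontra : ∀ K, TCone u K → ∃ R, -(s R) ∉ K) :
    ∃ R g, SPos g ∧ g * s R ∈ C0 := by
  have hC := C0_cone (d := d)
  by_contra hcon
  push Not at hcon
  set D : Set (Alg d) := {a | ∃ R h f, SPos h ∧ (f = 0 ∨ SPos f) ∧ h * a + f * s R ∈ C0} with hDdef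
  have hmulC : ∀ {f a : Alg d}, (f = 0 ∨ SPos f) → a ∈ C0 → f * a ∈ C0 := by
    rintro f a (rfl | hf) ha
    · simpa using hC.zero
    · exact hC.mul hf ha
  have hmul0 : ∀ {f g : Alg d}, (f = 0 ∨ SPos f) → SPos g → (f * g = 0 ∨ SPos (f * g)) := by
    rintro f g (rfl | hf) hg
    · left; simp
    · exact Or.inr (hf.mul hg)
  have hadd0 : ∀ {f g : Alg d}, (f = 0 ∨ SPos f) → (g = 0 ∨ SPos g) →
      (f + g = 0 ∨ SPos (f + g)) := by
    rintro f g (rfl | hf) (rfl | hg)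
    · left; simp
    · right; simpa using hg
    · right; simpa using hf
    · exact Or.inr (hf.add hg)
  have haddle : ∀ {a b : Alg d} {R R' : ℕ} {h h' f f' : Alg d}, R ≤ R' → SPos h → SPos h' →
      (f = 0 ∨ SPos f) → (f' = 0 ∨ SPos f') → h * a + f * s R ∈ C0 →
      h' * b + f' * s R' ∈ C0 → a + b ∈ D := by
    intro a b R R' h h' f f' hR hh hh' hf hf' ha hb
    obtain ⟨g, e, hg, he, hge⟩ := hmono R R' hR
    refine ⟨R', e * h * h', f * g * h' + f' * (e * h), (he.mul hh).mul hh',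
      hadd0 (hmul0 (hmul0 hf hg) hh') (hmul0 hf' (he.mul hh)), ?_⟩
    have := hC.add (hC.add (hC.mul (he.mul hh') ha) (hC.mul (he.mul hh) hb))
      (hC.mul hh' (hmulC hf hge))
    convert this using 1
    ring
  have hD : Cone D := by
    refine ⟨⟨0, 1, 0, SPos.one, Or.inl rfl, by simpa using hC.zero⟩, ?_, ?_⟩
    · rintro a b ⟨R, h, f, hh, hf, ha⟩ ⟨R', h', f', hh', hf', hb⟩
      rcases le_total R R' with hR | hR
      · exact haddle hR hh hh' hf hf' ha hb
      · rw [add_comm]; exact haddle hR hh' hh hf' hf hb ha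
    · rintro g a hg ⟨R, h, f, hh, hf, ha⟩
      refine ⟨R, h, f * g, hh, hmul0 hf hg, ?_⟩
      convert hC.mul hg ha using 1
      ring
  obtain ⟨K, hDK, hK⟩ := exists_tcone (u := u) hD
    (fun a ha => ⟨0, 1, 0, SPos.one, Or.inl rfl, by simpa using ha⟩) (by
      rintro g hg ⟨R, h, f, hh, hf, ha⟩
      rcases hf with rfl | hf
      · obtain ⟨f', hf', hb⟩ := hbdd R
        apply hcon R (h * g) (hh.mul hg)
        have := hC.add (hC.mul (hh.mul hg) hb) (hC.mul hf' ha)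
        convert this using 1
        ring
      · apply hcon R f hf
        have := hC.add ha (hC.mul (hh.mul hg) hu)
        convert this using 1
        ring)
  obtain ⟨R, hR⟩ := hcontra K hK
  exact hR (hDK ⟨R, 1, 1, SPos.one, Or.inr SPos.one, by simpa using hC.zero⟩)

end AMM

namespace AMM
variable {d : ℕ}

lemma lin_one (h : ℝ → ℝ) (hadd : ∀ s t, h (s + t) = h s + h t)
    (hq : ∀ s θ : ℝ, 0 < θ → θ < 1 → h (Real.log ((1 - θ) + θ * Real.exp s)) ≤ max 0 (h s)) :
    ∃ c, ∀ s, h s = c * s := by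
  have main : ∀ h : ℝ → ℝ, (∀ s t, h (s + t) = h s + h t) →
    (∀ s ∈ Set.Icc (0:ℝ) 1, h s ≤ 0) → ∃ c, ∀ s, h s = c * s := by
    intro h hadd hle
    let H : ℝ →+ ℝ := AddMonoidHom.mk' h hadd
    have hH : ∀ s, H s = h s := fun s => rfl
    have hneg : ∀ s, 0 ≤ s → h s ≤ 0 := by
      intro s hs
      obtain ⟨n, hn⟩ := exists_nat_gt s
      have hn0 : (0:ℝ) < n := lt_of_le_of_lt hs hn
      have h1 : h (s / n) ≤ 0 := hle _ ⟨by positivity, by rw [div_le_one hn0]; exact hn.le⟩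
      have h2 : h s = n * h (s / n) := by
        rw [← hH, ← hH, ← nsmul_eq_mul, ← map_nsmul, nsmul_eq_mul, mul_div_cancel₀ _ hn0.ne']
      rw [h2]; exact mul_nonpos_of_nonneg_of_nonpos hn0.le h1
    have hanti : Antitone H := by
      intro s t hst
      have := hneg (t - s) (by linarith)
      rw [← hH, map_sub] at this; linarith
    have hcont : Continuous H := MeasureTheory.Measure.AddMonoidHom.continuous_of_measurable H hanti.measurable
    refine ⟨h 1, fun s => ?_⟩
    have := map_real_smul H hcont s 1
    simp only [smul_eq_mul, mul_one] at this
    rw [← hH, this, hH]; ring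
  have h0 : h 0 = 0 := by have := hadd 0 0; simp at this; exact this
  have hbet : ∀ s s' : ℝ, (0 ≤ s' ∧ s' ≤ s) ∨ (s ≤ s' ∧ s' ≤ 0) → h s' ≤ max 0 (h s) := by
    intro s s' hss
    by_cases e0 : s' = 0
    · rw [e0, h0]; exact le_max_left _ _
    by_cases e1 : s' = s
    · rw [e1]; exact le_max_right _ _
    have hs : Real.exp s - 1 ≠ 0 := by
      intro h
      have : s = 0 := by rw [← Real.exp_eq_one_iff]; linarith
      rcases hss with h | h
      · exact e0 (le_antisymm (by linarith [h.2]) h.1)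
      · exact e0 (le_antisymm h.2 (by linarith [h.1]))
    set θ := (Real.exp s' - 1) / (Real.exp s - 1) with hθ
    have hval : (1 - θ) + θ * Real.exp s = Real.exp s' := by
      rw [hθ]; field_simp; ring
    have hpos : 0 < θ ∧ θ < 1 := by
      rcases hss with ⟨h1, h2⟩ | ⟨h1, h2⟩
      · have a1 : 0 < s' := lt_of_le_of_ne h1 (Ne.symm e0)
        have a2 : s' < s := lt_of_le_of_ne h2 e1
        have b1 : 1 < Real.exp s' := Real.one_lt_exp_iff.mpr a1
        have b2 := Real.exp_lt_exp.mpr a2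
        exact ⟨div_pos (by linarith) (by linarith), (div_lt_one (by linarith)).mpr (by linarith)⟩
      · have a1 : s' < 0 := lt_of_le_of_ne h2 e0
        have a2 : s < s' := lt_of_le_of_ne h1 (Ne.symm e1)
        have b1 : Real.exp s' < 1 := Real.exp_lt_one_iff.mpr a1
        have b2 := Real.exp_lt_exp.mpr a2
        exact ⟨div_pos_of_neg_of_neg (by linarith) (by linarith),
          (div_lt_one_of_neg (by linarith)).mpr (by linarith)⟩
    have := hq s θ hpos.1 hpos.2
    rwa [hval, Real.log_exp] at this
  have hnegarg : h (-1) = - h 1 := by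
    have := hadd 1 (-1); simp [h0] at this; linarith
  rcases le_total (h 1) 0 with h1 | h1
  · exact main h hadd fun s hs => (hbet 1 s (Or.inl ⟨hs.1, hs.2⟩)).trans (by simp [h1])
  · obtain ⟨c, hc⟩ := main (fun s => h (-s)) (fun s t => by rw [neg_add, hadd]) fun s hs =>
      (hbet (-1) (-s) (Or.inr ⟨by linarith [hs.2], by linarith [hs.1]⟩)).trans
        (by rw [hnegarg]; simp [h1])
    exact ⟨-c, fun s => by have := hc (-s); simp at this; rw [this]; ring⟩

lemma lin_multi (L : (Fin d → ℝ) → ℝ) (hadd : ∀ v w, L (v + w) = L v + L w)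
    (hq : ∀ k (s θ : ℝ), 0 < θ → θ < 1 →
      L (Pi.single k (Real.log ((1 - θ) + θ * Real.exp s))) ≤ max 0 (L (Pi.single k s))) :
    ∃ c : Fin d → ℝ, ∀ w, L w = ∑ k, c k * w k := by
  have : ∀ k, ∃ c, ∀ s, L (Pi.single k s) = c * s := fun k =>
    lin_one (fun s => L (Pi.single k s)) (fun s t => by rw [← hadd, ← Pi.single_add]) (hq k)
  choose c hc using this
  refine ⟨c, fun w => ?_⟩
  let H : (Fin d → ℝ) →+ ℝ := AddMonoidHom.mk' L hadd
  have hH : ∀ s, H s = L s := fun s => rfl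
  conv_lhs => rw [← Finset.univ_sum_single w]
  rw [← hH, map_sum]
  exact Finset.sum_congr rfl fun k _ => by rw [hH, hc]

/-- The generator merging the unit with a single-coordinate monomial. -/
lemma gen_mem (k : Fin d) (s θ : ℝ) (h0 : 0 < θ) (h1 : θ < 1) :
    ((1 - θ) • (1 : Alg d) + θ • X (Pi.single k s))
      - X (Pi.single k (Real.log ((1 - θ) + θ * Real.exp s))) ∈ C0 := by
  apply merge_mem ((SPos.smul (by linarith) SPos.one).add (SPos.smul h0 (SPos.X _)))
  intro l
  simp only [map_add, map_smul, map_one, nrm_X, smul_eq_mul, mul_one]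
  by_cases h : l = k
  · subst h
    rw [Pi.single_eq_same, Pi.single_eq_same, Real.exp_log]
    have := Real.exp_pos s
    have : 0 < θ * Real.exp s := by positivity
    linarith
  · rw [Pi.single_eq_of_ne h, Pi.single_eq_of_ne h]; simp

/-- Elements with vanishing norms. -/
def Nul (a : Alg d) : Prop := ∀ k, nrm k a = 0

lemma Nul.add {a b : Alg d} (ha : Nul a) (hb : Nul b) : Nul (a + b) := fun k => by
  rw [map_add, ha k, hb k, add_zero]
lemma Nul.sub {a b : Alg d} (ha : Nul a) (hb : Nul b) : Nul (a - b) := fun k => by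
  rw [map_sub, ha k, hb k, sub_zero]
lemma Nul.neg {a : Alg d} (ha : Nul a) : Nul (-a) := fun k => by
  rw [map_neg, ha k, neg_zero]
lemma Nul.mul {a : Alg d} (f : Alg d) (ha : Nul a) : Nul (f * a) := fun k => by
  rw [map_mul, ha k, mul_zero]
lemma Nul.smul {a : Alg d} (c : ℝ) (ha : Nul a) : Nul (c • a) := fun k => by
  rw [map_smul, ha k, smul_zero]
lemma Nul.of_eq {a b : Alg d} (h : ∀ k, nrm k a = nrm k b) : Nul (a - b) := fun k => by
  rw [map_sub, h, sub_self]

/-- The functionals obtained in the finite case. -/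
structure FinPhi (u : Alg d) (K : Set (Alg d)) (χ : Alg d →ₐ[ℝ] ℝ) (φ : Alg d → ℝ) : Prop where
  add : ∀ {a b}, Nul a → Nul b → φ (a + b) = φ a + φ b
  smul : ∀ {a} (c : ℝ), Nul a → φ (c • a) = c * φ a
  nonneg : ∀ {a}, Nul a → a ∈ K → 0 ≤ φ a
  one : φ u = 1
  mul : ∀ {a} f, Nul a → φ (f * a) = χ f * φ a
  pos : ∀ w, 0 < χ (X w)

theorem exists_finPhi {u : Alg d} {K : Set (Alg d)} (hK : TCone u K) (hu : Nul u)
    (huK : u ∈ K) (hfin : ∀ a, Nul a → ∃ N : ℝ, N • u - a ∈ K) :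
    ∃ χ φ, FinPhi u K χ φ := by
  have hle : ∀ r : ℝ, r • u ∈ K → 0 ≤ r := by
    intro r hr
    by_contra hneg
    push Not at hneg
    apply hK.neg
    have := hK.cone.smul (c := (-r)⁻¹) (by rw [inv_nonneg]; linarith) hr
    rwa [smul_smul, inv_neg, neg_mul, inv_mul_cancel₀ hneg.ne, neg_smul, one_smul] at this
  set φ : Alg d → ℝ := fun a => sSup {r : ℝ | a - r • u ∈ K} with hφ
  have hne : ∀ a, Nul a → {r : ℝ | a - r • u ∈ K}.Nonempty := by
    intro a ha
    obtain ⟨N, hN⟩ := hfin _ ha.neg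
    refine ⟨-N, ?_⟩
    show _ ∈ K
    convert hN using 1; module
  have hbd : ∀ a, Nul a → BddAbove {r : ℝ | a - r • u ∈ K} := by
    intro a ha
    obtain ⟨N, hN⟩ := hfin _ ha
    refine ⟨N, fun r hr => ?_⟩
    have := hle (N - r) (by convert hK.cone.add hN hr using 1; module)
    linarith
  have lo : ∀ a, Nul a → ∀ r : ℝ, a - r • u ∈ K → r ≤ φ a := fun a ha r hr =>
    le_csSup (hbd a ha) hr
  have up : ∀ a, Nul a → ∀ r : ℝ, r • u - a ∈ K → φ a ≤ r := fun a ha r hr => by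
    apply csSup_le (hne a ha)
    intro r' hr'
    have := hle (r - r') (by convert hK.cone.add hr hr' using 1; module)
    linarith
  have lo' : ∀ a, Nul a → ∀ r : ℝ, r < φ a → a - r • u ∈ K := fun a ha r hr => by
    obtain ⟨r', hr', h⟩ := exists_lt_of_lt_csSup (hne a ha) hr
    convert hK.cone.add hr' (hK.cone.smul (c := r' - r) (by linarith) huK) using 1
    module
  have up' : ∀ a, Nul a → ∀ r : ℝ, φ a < r → r • u - a ∈ K := fun a ha r hr => by
    rcases hK.total (a - r • u) with h | h
    · exact absurd (lo a ha r h) (by linarith)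
    · convert h using 1; module
  have hadd : ∀ {a b}, Nul a → Nul b → φ (a + b) = φ a + φ b := by
    intro a b ha hb
    apply le_antisymm
    · apply le_of_forall_pos_le_add
      intro ε hε
      apply up _ (ha.add hb)
      convert hK.cone.add (up' a ha (φ a + ε/2) (by linarith))
        (up' b hb (φ b + ε/2) (by linarith)) using 1
      module
    · apply le_of_forall_pos_le_add
      intro ε hε
      have := lo _ (ha.add hb) (φ a - ε/2 + (φ b - ε/2)) (by
        convert hK.cone.add (lo' a ha (φ a - ε/2) (by linarith))
          (lo' b hb (φ b - ε/2) (by linarith)) using 1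
        module)
      linarith
  have hnul0 : Nul (0 : Alg d) := fun k => by simp
  have h00 : φ 0 = 0 := by have := hadd hnul0 hnul0; simp at this; exact this
  have hneg : ∀ {a}, Nul a → φ (-a) = - φ a := by
    intro a ha
    have := hadd ha ha.neg
    rw [add_neg_cancel, h00] at this; linarith
  have hmono : ∀ {a b}, Nul a → Nul b → b - a ∈ K → φ a ≤ φ b := by
    intro a b ha hb h
    have := lo (b - a) (hb.sub ha) 0 (by simpa using h)
    rw [sub_eq_add_neg, hadd hb ha.neg, hneg ha] at this; linarith
  have hone : φ u = 1 := by
    apply le_antisymm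
    · exact up u hu 1 (by simpa using hK.cone.zero)
    · exact lo u hu 1 (by simpa using hK.cone.zero)
  have hmul : ∀ {f a}, SPos f → Nul a → φ (f * a) = φ (f * u) * φ a := by
    intro f a hf ha
    have hfu0 : 0 ≤ φ (f * u) := lo _ (hu.mul f) 0 (by simpa using hK.cone.mul hf huK)
    have hsm : ∀ r s : ℝ, s < φ (f * u) → φ (f*u) < s + r → True := fun _ _ _ _ => trivial
    -- scaling of f * u
    have hscale : ∀ {b : Alg d} (c : ℝ), 0 < c → Nul b → φ (c • b) = c * φ b := by
      intro b c hc hb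
      have key : ∀ {b : Alg d} (c : ℝ), 0 < c → Nul b → c * φ b ≤ φ (c • b) := by
        intro b c hc hb
        by_contra hlt
        push Not at hlt
        have h1 : φ (c • b) / c < φ b := by rw [div_lt_iff₀ hc]; linarith
        obtain ⟨r, hr1, hr2⟩ := exists_between h1
        have := lo _ (hb.smul c) (c * r) (by
          convert hK.cone.smul hc.le (lo' b hb r hr2) using 1
          module)
        rw [div_lt_iff₀ hc] at hr1
        linarith
      apply le_antisymm _ (key c hc hb)
      have := key (b := c • b) c⁻¹ (by positivity) (hb.smul c)
      rw [smul_smul, inv_mul_cancel₀ hc.ne', one_smul] at this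
      rw [inv_mul_le_iff₀ hc] at this
      exact this
    have hscale' : ∀ {b : Alg d} (c : ℝ), Nul b → φ (c • b) = c * φ b := by
      intro b c hb
      rcases lt_trichotomy c 0 with h | h | h
      · have := hscale (b := -b) (-c) (by linarith) hb.neg
        rw [hneg hb, neg_smul_neg] at this; rw [this]; ring
      · subst h; simp [h00]
      · exact hscale c h hb
    apply le_antisymm
    · apply le_of_forall_pos_le_add
      intro ε hε
      set δ := ε / (φ (f * u) + 1) with hδ
      have hδ0 : 0 < δ := by positivity
      have h1 := hK.cone.mul hf (up' a ha (φ a + δ) (by linarith))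
      have h2 := hmono (ha.mul f) ((hu.mul f).smul (φ a + δ)) (by
        convert h1 using 1; rw [mul_sub, mul_smul_comm])
      rw [hscale' _ (hu.mul f)] at h2
      have h3 : δ * φ (f * u) ≤ ε := by
        rw [hδ, div_mul_eq_mul_div, div_le_iff₀ (by positivity)]; nlinarith
      nlinarith
    · apply le_of_forall_pos_le_add
      intro ε hε
      set δ := ε / (φ (f * u) + 1) with hδ
      have hδ0 : 0 < δ := by positivity
      have h1 := hK.cone.mul hf (lo' a ha (φ a - δ) (by linarith))
      have h2 := hmono ((hu.mul f).smul (φ a - δ)) (ha.mul f) (by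
        convert h1 using 1; rw [mul_sub, mul_smul_comm])
      rw [hscale' _ (hu.mul f)] at h2
      have h3 : δ * φ (f * u) ≤ ε := by
        rw [hδ, div_mul_eq_mul_div, div_le_iff₀ (by positivity)]; nlinarith
      nlinarith
  have hmul' : ∀ {f a}, Nul a → φ (f * a) = φ (f * u) * φ a := by
    intro f a ha
    obtain ⟨g, h, hg, hh, rfl⟩ := exists_sub f
    rw [sub_mul, sub_mul, sub_eq_add_neg, sub_eq_add_neg, hadd (ha.mul g) (ha.mul h).neg,
      hadd (hu.mul g) (hu.mul h).neg, hneg (ha.mul h), hneg (hu.mul h), hmul hg ha, hmul hh ha]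
    ring
  have hsmul : ∀ {a} (c : ℝ), Nul a → φ (c • a) = c * φ a := by
    have pos : ∀ {a} (c : ℝ), 0 ≤ c → Nul a → φ (c • a) = c * φ a := by
      intro a c hc ha
      rw [Algebra.smul_def, hmul' ha]
      congr 1
      rw [← Algebra.smul_def]
      apply le_antisymm
      · exact up _ (hu.smul c) c (by simpa using hK.cone.zero)
      · exact lo _ (hu.smul c) c (by simpa using hK.cone.zero)
    intro a c ha
    rcases le_total 0 c with h | h
    · exact pos c h ha
    · have := pos (a := -a) (-c) (by linarith) ha.neg
      rw [hneg ha, neg_smul_neg] at this; rw [this]; ring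
  let χl : Alg d →ₗ[ℝ] ℝ :=
    { toFun := fun f => φ (f * u)
      map_add' := fun f g => by rw [add_mul, hadd (hu.mul f) (hu.mul g)]
      map_smul' := fun c f => by rw [smul_mul_assoc, hsmul c (hu.mul f)]; rfl }
  let χ : Alg d →ₐ[ℝ] ℝ := AlgHom.ofLinearMap χl
    (by show φ (1 * u) = 1; rw [one_mul, hone])
    (fun f g => by show φ (f * g * u) = φ (f * u) * φ (g * u); rw [mul_assoc, hmul' (hu.mul g)])
  have hχ : ∀ f, χ f = φ (f * u) := fun f => rfl
  refine ⟨χ, φ, hadd, hsmul, fun ha h => lo _ ha 0 (by simpa using h), hone,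
    fun f ha => by rw [hχ]; exact hmul' ha, fun w => ?_⟩
  have h0 : ∀ w, 0 ≤ χ (X w) := fun w => by
    rw [hχ]; exact lo _ (hu.mul _) 0 (by simpa using hK.cone.mul (SPos.X w) huK)
  refine lt_of_le_of_ne (h0 w) fun h => ?_
  have := map_mul χ (X w) (X (-w))
  rw [← X_add, add_neg_cancel, X_zero, map_one, ← h, zero_mul] at this
  exact one_ne_zero this

end AMM

namespace AMM
variable {d : ℕ}

/-- dot product -/
def dot (α w : Fin d → ℝ) : ℝ := ∑ k, α k * w k

lemma dot_add (α v w : Fin d → ℝ) : dot α (v + w) = dot α v + dot α w := by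
  simp [dot, mul_add, Finset.sum_add_distrib]

lemma dot_smul (α w : Fin d → ℝ) (c : ℝ) : dot α (c • w) = c * dot α w := by
  simp only [dot, Finset.mul_sum, Pi.smul_apply, smul_eq_mul]
  exact Finset.sum_congr rfl fun k _ => by ring

lemma dot_neg (α w : Fin d → ℝ) : dot α (-w) = - dot α w := by
  simp [dot]

lemma dot_single (α : Fin d → ℝ) (k : Fin d) (s : ℝ) : dot α (Pi.single k s) = α k * s := by
  simp only [dot]
  rw [Finset.sum_eq_single k]
  · simp
  · intro l _ h; simp [h]
  · simp

lemma two_pos' (γ : Fin d → ℝ) (k l : Fin d) (hkl : k ≠ l) (hk : 0 < γ k) (hl : 0 < γ l) :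
    ∃ w w' : Fin d → ℝ, dot γ w = 0 ∧
      (∀ j, Real.exp (w j) + Real.exp (-w j) = Real.exp (w' j)) ∧ Real.log 2 < dot γ w' := by
  set c := (∑ j, γ j) - γ k - γ l with hc
  set s := (|c| + 1) * Real.log 2 with hs
  have hlog2 : 0 < Real.log 2 := Real.log_pos (by norm_num)
  have hspos : 0 < s := by positivity
  set w : Fin d → ℝ := Pi.single k (s / γ k) + Pi.single l (-(s / γ l)) with hw
  set w' : Fin d → ℝ := fun j => Real.log (Real.exp (w j) + Real.exp (-w j)) with hw'
  refine ⟨w, w', ?_, fun j => ?_, ?_⟩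
  · rw [hw, dot_add, dot_single, dot_single]; field_simp; ring
  · rw [hw']; simp only; rw [Real.exp_log (by positivity)]
  · have h1 : ∀ j, w j ≤ w' j := fun j => by
      have hpos : 0 < Real.exp (w j) + Real.exp (-w j) := by positivity
      show w j ≤ Real.log (Real.exp (w j) + Real.exp (-w j))
      rw [Real.le_log_iff_exp_le hpos]
      linarith [Real.exp_pos (-w j)]
    have h1' : ∀ j, -w j ≤ w' j := fun j => by
      have hpos : 0 < Real.exp (w j) + Real.exp (-w j) := by positivity
      show -w j ≤ Real.log (Real.exp (w j) + Real.exp (-w j))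
      rw [Real.le_log_iff_exp_le hpos]
      linarith [Real.exp_pos (w j)]
    have hwk : w k = s / γ k := by simp [hw, hkl]
    have hwl : w l = -(s / γ l) := by simp [hw, hkl.symm]
    have hterm : ∀ j, γ j * Real.log 2 + (if j = k then s - γ k * Real.log 2 else 0)
        + (if j = l then s - γ l * Real.log 2 else 0) ≤ γ j * w' j := by
      intro j
      by_cases e1 : j = k
      · have e2 : j ≠ l := fun h => hkl (e1.symm.trans h)
        rw [if_pos e1, if_neg e2]
        rw [e1]
        have := h1 k
        rw [hwk, div_le_iff₀ hk] at this
        linarith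
      · rw [if_neg e1]
        by_cases e2 : j = l
        · rw [if_pos e2, e2]
          have := h1' l
          rw [hwl, neg_neg, div_le_iff₀ hl] at this
          linarith
        · rw [if_neg e2]
          have : w j = 0 := by simp [hw, e1, e2]
          have h2 : w' j = Real.log 2 := by simp only [hw', this]; norm_num
          rw [h2]; linarith
    have hsum := Finset.sum_le_sum (s := Finset.univ) fun j _ => hterm j
    rw [Finset.sum_add_distrib, Finset.sum_add_distrib, ← Finset.sum_mul] at hsum
    simp only [Finset.sum_ite_eq', Finset.mem_univ, if_true] at hsum
    have : dot γ w' = ∑ j, γ j * w' j := rfl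
    rw [this]
    have h3 : -|c| ≤ c := neg_abs_le c
    have h5 : ∑ i, γ i = c + γ k + γ l := by rw [hc]; ring
    rw [h5] at hsum
    have h4 : 0 ≤ |c| := abs_nonneg c
    nlinarith

lemma Aminus_of_convex (α : Fin d → ℝ) (hα : ∑ k, α k = 1)
    (h : ∀ w w' : Fin d → ℝ, (∀ j, Real.exp (w j) + Real.exp (-w j) = Real.exp (w' j)) →
      Real.exp (dot α w') ≤ Real.exp (dot α w) + Real.exp (dot α (-w))) :
    ∃ k, 1 ≤ α k ∧ ∀ l, l ≠ k → α l ≤ 0 := by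
  have hex : ∃ k, 0 < α k := by
    by_contra hcon
    push Not at hcon
    have := Finset.sum_nonpos (s := Finset.univ) fun k _ => hcon k
    linarith
  obtain ⟨k, hk⟩ := hex
  have hl : ∀ l, l ≠ k → α l ≤ 0 := by
    intro l hlk
    by_contra hcon
    push Not at hcon
    obtain ⟨w, w', h1, h2, h3⟩ := two_pos' α k l hlk.symm hk hcon
    have := h w w' h2
    rw [dot_neg, h1, neg_zero, Real.exp_zero] at this
    have h4 := Real.exp_lt_exp.mpr h3
    rw [Real.exp_log (by norm_num)] at h4
    linarith
  refine ⟨k, ?_, hl⟩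
  rw [← Finset.add_sum_erase _ _ (Finset.mem_univ k)] at hα
  have := Finset.sum_nonpos (s := Finset.univ.erase k) fun l hl' => hl l (Finset.ne_of_mem_erase hl')
  linarith

lemma Aplus_of_concave (α : Fin d → ℝ) (hα : ∑ k, α k = 1)
    (h : ∀ w w' : Fin d → ℝ, (∀ j, 1 + Real.exp (w j) = Real.exp (w' j)) →
      1 + Real.exp (dot α w) ≤ Real.exp (dot α w')) (k : Fin d) : 0 ≤ α k := by
  by_contra hk
  push Not at hk
  set M := (1 - α k) * Real.log 2 with hM
  have hlog2 : 0 < Real.log 2 := Real.log_pos (by norm_num)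
  set w : Fin d → ℝ := Pi.single k (M / α k) with hw
  set w' : Fin d → ℝ := fun j => Real.log (1 + Real.exp (w j)) with hw'
  have h1 := h w w' (fun j => by rw [hw']; simp only; rw [Real.exp_log (by positivity)])
  have h2 : dot α w = M := by rw [hw, dot_single, mul_div_cancel₀ _ hk.ne]
  have hterm : ∀ j, α j * w' j ≤ α j * Real.log 2 - (if j = k then α k * Real.log 2 else 0) := by
    intro j
    by_cases e : j = k
    · rw [if_pos e, e, sub_self]
      apply mul_nonpos_of_nonpos_of_nonneg hk.le
      apply Real.log_nonneg
      linarith [Real.exp_pos (w k)]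
    · rw [if_neg e]
      have : w j = 0 := by simp [hw, e]
      have h2 : w' j = Real.log 2 := by simp only [hw', this]; norm_num
      rw [h2]; linarith
  have hsum := Finset.sum_le_sum (s := Finset.univ) fun j _ => hterm j
  rw [Finset.sum_sub_distrib, ← Finset.sum_mul, hα] at hsum
  simp only [Finset.sum_ite_eq', Finset.mem_univ, if_true] at hsum
  have h3 : dot α w' ≤ M := by
    have : dot α w' = ∑ j, α j * w' j := rfl
    rw [this]; linarith
  have := Real.exp_le_exp.mpr h3
  rw [h2] at h1
  linarith

/-- The hypotheses in logarithmic coordinates. -/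
structure Hyp {ι κ : Type*} [Fintype ι] [Fintype κ] (p : ι → Fin d → ℝ) (q : κ → Fin d → ℝ) :
    Prop where
  hp : ∀ k, ∑ i, Real.exp (p i k) = 1
  hq : ∀ k, ∑ i, Real.exp (q i k) = 1
  hρ : ∀ k l, k ≠ l → ∑ i, Real.exp ((p i k + p i l) / 2) < 1
  hAp : ∀ α : Fin d → ℝ, ∑ k, α k = 1 → (∀ k, 0 ≤ α k) → (∀ k, α ≠ Pi.single k 1) →
    ∑ i, Real.exp (dot α (p i)) < ∑ j, Real.exp (dot α (q j))
  hAm : ∀ α : Fin d → ℝ, ∑ k, α k = 1 → (∃ k, 1 ≤ α k ∧ ∀ l, l ≠ k → α l ≤ 0) →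
    (∀ k, α ≠ Pi.single k 1) → ∑ j, Real.exp (dot α (q j)) < ∑ i, Real.exp (dot α (p i))
  hB : ∀ β : Fin d → ℝ, ∑ k, β k = 0 → (∃ k, 0 ≤ β k ∧ ∀ l, l ≠ k → β l ≤ 0) → β ≠ 0 →
    ∃ i, ∀ j, dot β (q j) < dot β (p i)
  hKL : ∀ k l, k ≠ l → ∑ j, Real.exp (q j k) * (q j k - q j l)
    < ∑ i, Real.exp (p i k) * (p i k - p i l)

lemma nrm_tup {ι : Type*} [Fintype ι] (p : ι → Fin d → ℝ) (k : Fin d) :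
    nrm k (tup p) = ∑ i, Real.exp (p i k) := by
  simp [tup, map_sum]

lemma SPos_chi {χ : Alg d →ₐ[ℝ] ℝ} (h : ∀ w, 0 < χ (X w)) {f : Alg d} (hf : SPos f) : 0 < χ f := by
  induction hf with
  | single w c hc => rw [single_eq, map_smul]; exact mul_pos hc (h w)
  | add _ _ h1 h2 => rw [map_add]; exact add_pos h1 h2

lemma tup_SPos {ι : Type*} [Fintype ι] [Nonempty ι] (p : ι → Fin d → ℝ) : SPos (tup p) :=
  SPos.sum Finset.univ_nonempty fun i _ => SPos.X (p i)

section fin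
variable {u : Alg d} {K : Set (Alg d)} {χ : Alg d →ₐ[ℝ] ℝ} {φ : Alg d → ℝ}

lemma FinPhi.neg (h : FinPhi u K χ φ) {a : Alg d} (ha : Nul a) : φ (-a) = - φ a := by
  have := h.smul (-1) ha
  simpa using this

lemma FinPhi.sub (h : FinPhi u K χ φ) {a b : Alg d} (ha : Nul a) (hb : Nul b) :
    φ (a - b) = φ a - φ b := by
  rw [sub_eq_add_neg, h.add ha hb.neg, h.neg hb]; ring

lemma FinPhi.comm (h : FinPhi u K χ φ) (hu : Nul u) {a : Alg d} (ha : Nul a) :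
    χ a = χ u * φ a := by
  have h1 := h.mul a hu
  rw [mul_comm, h.mul u ha, h.one] at h1
  linarith

lemma FinPhi.cst (h : FinPhi u K χ φ) (hK : TCone u K) (hu : Nul u) (s : ℝ) :
    χ (X (cst s)) = Real.exp s := by
  have h1 := scal_mem (0 : Fin d → ℝ) (Real.exp s) (Real.exp_pos s)
  rw [Real.log_exp, zero_add, X_zero] at h1
  have hn : Nul (X (AMM.cst s) - Real.exp s • (1 : Alg d)) := fun k => by
    simp [AMM.cst]
  have h2 := h.nonneg hn (hK.base h1.1)
  have hn' := hn.neg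
  have h3 := h.nonneg hn' (by rw [neg_sub]; exact hK.base h1.2)
  rw [h.neg hn] at h3
  have h4 := h.comm hu hn
  have h5 : φ (X (AMM.cst s) - Real.exp s • (1 : Alg d)) = 0 := by linarith
  rw [h5, mul_zero, map_sub, map_smul, map_one, smul_eq_mul, mul_one] at h4
  linarith

lemma FinPhi.geom (h : FinPhi u K χ φ) {x y z : Alg d} (ht : Nul (x - y)) (hz : Nul (z - 1))
    (R : ℕ) (hv : y ^ R * z - x ^ R ∈ K) :
    (∑ i ∈ Finset.range R, χ x ^ i * χ y ^ (R - 1 - i)) * φ (x - y) ≤ χ y ^ R * φ (z - 1) := by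
  have h1 : y ^ R * z - x ^ R = y ^ R * (z - 1)
      - (∑ i ∈ Finset.range R, x ^ i * y ^ (R - 1 - i)) * (x - y) := by
    rw [geom_sum₂_mul]; ring
  have h2 := h.nonneg (by rw [h1]; exact (hz.mul _).sub (ht.mul _)) hv
  rw [h1, h.sub (hz.mul _) (ht.mul _), h.mul _ hz, h.mul _ ht, map_pow, map_sum] at h2
  simp only [map_mul, map_pow] at h2
  linarith

lemma FinPhi.contra1 (h : FinPhi u K χ φ) {x y z : Alg d} (ht : Nul (x - y)) (hz : Nul (z - 1))
    (hv : ∀ R : ℕ, y ^ R * z - x ^ R ∈ K) (hy : 0 < χ y) (hxy : χ y ≤ χ x) (hφ : 0 < φ (x - y)) :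
    False := by
  obtain ⟨n, hn⟩ := exists_nat_gt (χ y * φ (z - 1) / φ (x - y))
  have h1 := h.geom ht hz (n + 1) (hv (n + 1))
  have h2 : ((n + 1 : ℕ) : ℝ) * χ y ^ n ≤
      ∑ i ∈ Finset.range (n + 1), χ x ^ i * χ y ^ (n + 1 - 1 - i) := by
    have hc : ((n + 1 : ℕ) : ℝ) * χ y ^ n = ∑ _i ∈ Finset.range (n + 1), χ y ^ n := by
      rw [Finset.sum_const, Finset.card_range, nsmul_eq_mul]
    rw [hc]
    apply Finset.sum_le_sum
    intro i hi
    have : i + (n + 1 - 1 - i) = n := by have := Finset.mem_range.mp hi; omega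
    conv_lhs => rw [← this, pow_add]
    exact mul_le_mul_of_nonneg_right (pow_le_pow_left₀ hy.le hxy i) (by positivity)
  have h3 := mul_le_mul_of_nonneg_right h2 hφ.le
  rw [div_lt_iff₀ hφ] at hn
  have h4 : χ y ^ n * (n * φ (x - y)) ≤ χ y ^ n * (χ y * φ (z - 1)) := by
    have : 0 ≤ χ y ^ n * φ (x - y) := by positivity
    rw [Nat.cast_succ] at h3
    rw [pow_succ (χ y)] at h1
    nlinarith
  have h5 := le_of_mul_le_mul_left h4 (by positivity)
  linarith

lemma FinPhi.contra2 (h : FinPhi u K χ φ) (hu : Nul u) {x y z : Alg d} (ht : Nul (x - y))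
    (hz : Nul (z - 1))
    (hv : ∀ R : ℕ, y ^ R * z - x ^ R ∈ K) (hx : 0 < χ x) (hxy : χ x < χ y) (hzp : 0 < χ z)
    (hu0 : χ u < 0) : False := by
  have hy : 0 < χ y := hx.trans hxy
  obtain ⟨n, hn⟩ := exists_pow_lt_of_lt_one hzp ((div_lt_one hy).mpr hxy)
  have h1 : y ^ n * z - x ^ n = y ^ n * (z - 1)
      - (∑ i ∈ Finset.range n, x ^ i * y ^ (n - 1 - i)) * (x - y) := by
    rw [geom_sum₂_mul]; ring
  have hN : Nul (y ^ n * z - x ^ n) := by rw [h1]; exact (hz.mul _).sub (ht.mul _)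
  have h2 := h.nonneg hN (hv n)
  have h3 := h.comm hu hN
  have h4 : χ (y ^ n * z - x ^ n) ≤ 0 := by
    rw [h3]; exact mul_nonpos_of_nonpos_of_nonneg hu0.le h2
  rw [map_sub, map_mul, map_pow, map_pow] at h4
  rw [div_pow, div_lt_iff₀ (by positivity)] at hn
  linarith

end fin

end AMM

namespace AMM
variable {d : ℕ}

section fin
variable {u : Alg d} {K : Set (Alg d)} {χ : Alg d →ₐ[ℝ] ℝ} {φ : Alg d → ℝ}

lemma FinPhi.merge (h : FinPhi u K χ φ) (hK : TCone u K) (hu : Nul u) {f : Alg d} (hf : SPos f)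
    (w : Fin d → ℝ) (hw : ∀ k, nrm k f = Real.exp (w k)) :
    Nul (f - X w) ∧ 0 ≤ φ (f - X w) ∧ χ f - χ (X w) = χ u * φ (f - X w) := by
  have hn : Nul (f - X w) := Nul.of_eq fun k => by rw [hw, nrm_X]
  refine ⟨hn, h.nonneg hn (hK.base (merge_mem hf w hw)), ?_⟩
  rw [← map_sub, h.comm hu hn]

lemma gen_nrm (k : Fin d) (s θ : ℝ) (h0 : 0 < θ) (h1 : θ < 1) (l : Fin d) :
    nrm l ((1 - θ) • (1 : Alg d) + θ • X (Pi.single k s))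
      = Real.exp ((Pi.single k (Real.log ((1 - θ) + θ * Real.exp s)) : Fin d → ℝ) l) := by
  simp only [map_add, map_smul, map_one, nrm_X, smul_eq_mul, mul_one]
  by_cases h : l = k
  · subst h
    rw [Pi.single_eq_same, Pi.single_eq_same, Real.exp_log]
    have := Real.exp_pos s
    have : 0 < θ * Real.exp s := by positivity
    linarith
  · rw [Pi.single_eq_of_ne h, Pi.single_eq_of_ne h]; simp

lemma gen_SPos (k : Fin d) (s θ : ℝ) (h0 : 0 < θ) (h1 : θ < 1) :
    SPos ((1 - θ) • (1 : Alg d) + θ • X (Pi.single k s)) :=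
  (SPos.smul (by linarith) SPos.one).add (SPos.smul h0 (SPos.X _))

lemma FinPhi.exists_alpha (h : FinPhi u K χ φ) (hK : TCone u K) (hu : Nul u) :
    ∃ α : Fin d → ℝ, ∀ w, χ (X w) = Real.exp (dot α w) := by
  have hexp : ∀ w, Real.exp (Real.log (χ (X w))) = χ (X w) := fun w => Real.exp_log (h.pos w)
  have hadd : ∀ v w, Real.log (χ (X (v + w))) = Real.log (χ (X v)) + Real.log (χ (X w)) := by
    intro v w
    rw [X_add, map_mul, Real.log_mul (h.pos v).ne' (h.pos w).ne']
  rcases le_total 0 (χ u) with hχ | hχ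
  · obtain ⟨c, hc⟩ := lin_multi (fun w => Real.log (χ (X w))) hadd (by
      intro k s θ h0 h1
      obtain ⟨-, h3, h4⟩ := h.merge hK hu (gen_SPos k s θ h0 h1) _ (gen_nrm k s θ h0 h1)
      have h5 := mul_nonneg hχ h3
      rw [← h4] at h5
      simp only [map_add, map_smul, map_one, smul_eq_mul, mul_one] at h5
      rw [← Real.exp_le_exp, hexp]
      rcases le_total 0 (Real.log (χ (X (Pi.single k s)))) with h6 | h6
      · rw [max_eq_right h6, hexp]
        have := Real.exp_le_exp.mpr h6
        rw [hexp, Real.exp_zero] at this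
        nlinarith
      · rw [max_eq_left h6]
        have := Real.exp_le_exp.mpr h6
        rw [hexp, Real.exp_zero] at this
        rw [Real.exp_zero]
        nlinarith)
    exact ⟨c, fun w => by rw [← hexp, hc]; rfl⟩
  · obtain ⟨c, hc⟩ := lin_multi (fun w => -Real.log (χ (X w)))
      (fun v w => by rw [hadd]; ring) (by
      intro k s θ h0 h1
      obtain ⟨-, h3, h4⟩ := h.merge hK hu (gen_SPos k s θ h0 h1) _ (gen_nrm k s θ h0 h1)
      have h5 := mul_nonpos_of_nonpos_of_nonneg hχ h3
      rw [← h4] at h5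
      simp only [map_add, map_smul, map_one, smul_eq_mul, mul_one] at h5
      rw [neg_le, ← Real.exp_le_exp, hexp]
      rcases le_total 0 (Real.log (χ (X (Pi.single k s)))) with h6 | h6
      · rw [max_eq_left (by linarith), neg_zero]
        have := Real.exp_le_exp.mpr h6
        rw [hexp, Real.exp_zero] at this
        rw [Real.exp_zero]
        nlinarith
      · rw [max_eq_right (by linarith), neg_neg]
        have := Real.exp_le_exp.mpr h6
        rw [hexp, Real.exp_zero] at this
        rw [hexp]
        nlinarith)
    refine ⟨-c, fun w => ?_⟩
    rw [← hexp]
    congr 1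
    have := hc w
    rw [← neg_neg (Real.log _), this]
    simp [dot]

lemma FinPhi.sum_alpha (h : FinPhi u K χ φ) (hK : TCone u K) (hu : Nul u) (α : Fin d → ℝ)
    (hα : ∀ w, χ (X w) = Real.exp (dot α w)) : ∑ k, α k = 1 := by
  have h1 := h.cst hK hu 1
  rw [hα, Real.exp_eq_exp] at h1
  simpa [dot, AMM.cst] using h1

lemma chi_tup {ι : Type*} [Fintype ι] (p : ι → Fin d → ℝ) (α : Fin d → ℝ)
    (hα : ∀ w, χ (X w) = Real.exp (dot α w)) : χ (tup p) = ∑ i, Real.exp (dot α (p i)) := by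
  simp [tup, map_sum, hα]

/-- The derivation-like case. -/
lemma FinPhi.deriv (h : FinPhi u K χ φ) (hK : TCone u K) (hu : Nul u) (k : Fin d)
    (hχ : ∀ f, χ f = nrm k f) :
    ∃ c : Fin d → ℝ, (∀ l, l ≠ k → 0 ≤ c l) ∧
      ∀ {ι κ : Type} [Fintype ι] [Fintype κ] (p : ι → Fin d → ℝ) (q : κ → Fin d → ℝ),
        (∀ k, nrm k (tup p) = nrm k (tup q)) →
        φ (tup p - tup q) = ∑ l ∈ Finset.univ.erase k, c l *
          (∑ i, Real.exp (p i k) * (p i k - p i l) - ∑ j, Real.exp (q j k) * (q j k - q j l)) := by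
  set ρ : Alg d := X (Pi.single k (Real.log 2)) - 1 with hρdef
  have hρk : nrm k ρ = 1 := by
    rw [hρdef, map_sub, nrm_X, map_one, Pi.single_eq_same, Real.exp_log (by norm_num)]; norm_num
  have hρl : ∀ l, l ≠ k → nrm l ρ = 0 := fun l hl => by
    rw [hρdef, map_sub, nrm_X, map_one, Pi.single_eq_of_ne hl]; simp
  have hN : ∀ f : Alg d, Nul (ρ * (f - nrm k f • 1)) := by
    intro f l
    rw [map_mul]
    by_cases hl : l = k
    · subst hl; simp
    · rw [hρl l hl, zero_mul]
  set D : Alg d → ℝ := fun f => φ (ρ * (f - nrm k f • 1)) with hD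
  have hDadd : ∀ f g, D (f + g) = D f + D g := by
    intro f g
    simp only [hD]
    rw [← h.add (hN f) (hN g)]
    congr 1
    rw [map_add, add_smul]; ring
  have hDsmul : ∀ (c : ℝ) f, D (c • f) = c * D f := by
    intro c f
    simp only [hD]
    rw [← h.smul c (hN f)]
    congr 1
    rw [map_smul, smul_eq_mul, ← mul_smul_comm, smul_sub, smul_smul]
  have hDmul : ∀ f g, D (f * g) = nrm k f * D g + nrm k g * D f := by
    intro f g
    simp only [hD]
    have e1 := h.mul f (hN g)
    rw [hχ] at e1
    rw [← e1, ← h.smul (nrm k g) (hN f), ← h.add ((hN g).mul f) ((hN f).smul _)]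
    congr 1
    rw [map_mul]
    simp only [Algebra.smul_def, map_mul, mul_one]
    ring
  have hDnul : ∀ a, Nul a → D a = φ a := by
    intro a ha
    simp only [hD]
    rw [ha k, zero_smul, sub_zero, h.mul ρ ha, hχ, hρk, one_mul]
  have hD1 : D 1 = 0 := by
    have := hDmul 1 1
    simp at this
    linarith
  set lam : (Fin d → ℝ) → ℝ := fun w => D (X w) / Real.exp (w k) with hlam
  have hDX : ∀ w, D (X w) = Real.exp (w k) * lam w := fun w => by
    simp only [hlam]; field_simp
  have hladd : ∀ v w, lam (v + w) = lam v + lam w := by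
    intro v w
    simp only [hlam]
    rw [X_add, hDmul, nrm_X, nrm_X, Pi.add_apply, Real.exp_add]
    field_simp
    ring
  have hgen : ∀ l (s θ : ℝ), 0 < θ → θ < 1 →
      (1 - θ + θ * Real.exp ((Pi.single l s : Fin d → ℝ) k)) *
        lam (Pi.single l (Real.log ((1 - θ) + θ * Real.exp s)))
      ≤ θ * Real.exp ((Pi.single l s : Fin d → ℝ) k) * lam (Pi.single l s) := by
    intro l s θ h0 h1
    obtain ⟨h2, h3, -⟩ := h.merge hK hu (gen_SPos l s θ h0 h1) _ (gen_nrm l s θ h0 h1)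
    have h4 := gen_nrm l s θ h0 h1 k
    simp only [map_add, map_smul, map_one, nrm_X, smul_eq_mul, mul_one] at h4
    rw [← hDnul _ h2, sub_eq_add_neg, ← neg_one_smul ℝ, hDadd, hDadd, hDsmul, hDsmul, hDsmul,
      hD1, hDX, hDX] at h3
    rw [h4]
    linarith
  obtain ⟨c, hc⟩ := lin_multi lam hladd (by
    intro l s θ h0 h1
    have h2 := hgen l s θ h0 h1
    set E := Real.exp ((Pi.single l s : Fin d → ℝ) k) with hE
    have hEpos : 0 < E := Real.exp_pos _
    have hθE : 0 < θ * E := by positivity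
    have hpos : 0 < 1 - θ + θ * E := by linarith
    rcases le_total 0 (lam (Pi.single l s)) with h6 | h6
    · rw [max_eq_right h6]
      apply le_of_mul_le_mul_left _ hpos
      nlinarith
    · rw [max_eq_left h6]
      apply le_of_mul_le_mul_left _ hpos
      nlinarith)
  have hcs : ∑ l, c l = 0 := by
    have h1 := scal_mem (0 : Fin d → ℝ) (Real.exp 1) (Real.exp_pos 1)
    rw [Real.log_exp, zero_add, X_zero] at h1
    have hn : Nul (X (AMM.cst 1) - Real.exp 1 • (1 : Alg d)) := fun k => by
      simp [AMM.cst]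
    have h2 := h.nonneg hn (hK.base h1.1)
    have h3 := h.nonneg hn.neg (by rw [neg_sub]; exact hK.base h1.2)
    rw [h.neg hn] at h3
    have h4 : φ (X (AMM.cst 1) - Real.exp 1 • (1 : Alg d)) = 0 := by linarith
    rw [← hDnul _ hn, sub_eq_add_neg, ← neg_one_smul ℝ, hDadd, hDsmul, hDsmul, hD1, hDX] at h4
    have h5 : lam (AMM.cst 1) = 0 := by
      have : Real.exp ((AMM.cst 1 : Fin d → ℝ) k) ≠ 0 := (Real.exp_pos _).ne'
      simpa [this] using h4
    rw [hc] at h5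
    simpa [AMM.cst] using h5
  have hcl : ∀ l, l ≠ k → c l ≤ 0 := by
    intro l hl
    have h2 := hgen l 2 (1/2) (by norm_num) (by norm_num)
    have hval : ∀ s, lam (Pi.single l s) = c l * s := fun s => by
      rw [hc]; exact dot_single c l s
    rw [hval, hval, Pi.single_eq_of_ne (Ne.symm hl), Real.exp_zero] at h2
    have h3 : 1 < Real.log (1 - 1/2 + 1/2 * Real.exp 2) := by
      rw [Real.lt_log_iff_exp_lt (by positivity)]
      have h4 : Real.exp 2 = Real.exp 1 * Real.exp 1 := by rw [← Real.exp_add]; norm_num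
      have h5 : 1 < Real.exp 1 := Real.one_lt_exp_iff.mpr one_pos
      nlinarith [sq_nonneg (Real.exp 1 - 1)]
    nlinarith
  have hlk : ∀ w, lam w = ∑ l ∈ Finset.univ.erase k, (-c l) * (w k - w l) := by
    intro w
    rw [hc, ← Finset.add_sum_erase _ _ (Finset.mem_univ k)]
    rw [← Finset.add_sum_erase _ _ (Finset.mem_univ k)] at hcs
    have : c k = - ∑ l ∈ Finset.univ.erase k, c l := by linarith
    rw [this, neg_mul, Finset.sum_mul, ← Finset.sum_neg_distrib, ← Finset.sum_add_distrib]
    exact Finset.sum_congr rfl fun l _ => by ring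
  have hD0 : D 0 = 0 := by have := hDadd 0 0; simp at this; exact this
  have hDtup : ∀ {ι : Type} [Fintype ι] (p : ι → Fin d → ℝ), D (tup p) =
      ∑ l ∈ Finset.univ.erase k, (-c l) * ∑ i, Real.exp (p i k) * (p i k - p i l) := by
    intro ι _ p
    let DH : Alg d →+ ℝ := AddMonoidHom.mk' D hDadd
    have : D (tup p) = ∑ i, D (X (p i)) := by
      show DH (∑ i, X (p i)) = _
      rw [map_sum]; rfl
    rw [this]
    simp only [hDX, hlk, Finset.mul_sum]
    rw [Finset.sum_comm]
    exact Finset.sum_congr rfl fun l _ => Finset.sum_congr rfl fun i _ => by ring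
  refine ⟨-c, fun l hl => by simpa using hcl l hl, ?_⟩
  intro ι κ _ _ p q hpq
  rw [← hDnul _ (Nul.of_eq hpq), sub_eq_add_neg, ← neg_one_smul ℝ, hDadd, hDsmul, hDtup, hDtup,
    neg_one_mul, ← sub_eq_add_neg, ← Finset.sum_sub_distrib]
  exact Finset.sum_congr rfl fun l _ => by simp only [Pi.neg_apply]; ring

end fin

theorem finite_case {ι κ : Type} [Fintype ι] [Fintype κ] [Nonempty ι] [Nonempty κ]
    {p : ι → Fin d → ℝ} {q : κ → Fin d → ℝ}
    (H : Hyp p q) {K : Set (Alg d)} (hK : TCone (tup p - 1) K)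
    {χ : Alg d →ₐ[ℝ] ℝ} {φ : Alg d → ℝ} (h : FinPhi (tup p - 1) K χ φ)
    {z : Alg d} (hz : SPos z) (hz1 : ∀ k, nrm k z = 1)
    (hv : ∀ R : ℕ, tup q ^ R * z - tup p ^ R ∈ K) : False := by
  have hxn : ∀ k, nrm k (tup p) = 1 := fun k => by rw [nrm_tup, H.hp]
  have hyn : ∀ k, nrm k (tup q) = 1 := fun k => by rw [nrm_tup, H.hq]
  have hu : Nul (tup p - 1) := Nul.of_eq fun k => by rw [hxn, map_one]
  have ht : Nul (tup p - tup q) := Nul.of_eq fun k => by rw [hxn, hyn]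
  have hzN : Nul (z - 1) := Nul.of_eq fun k => by rw [hz1, map_one]
  have hx0 : 0 < χ (tup p) := SPos_chi h.pos (tup_SPos p)
  have hy0 : 0 < χ (tup q) := SPos_chi h.pos (tup_SPos q)
  have hz0 : 0 < χ z := SPos_chi h.pos hz
  obtain ⟨α, hα⟩ := h.exists_alpha hK hu
  have hα1 := h.sum_alpha hK hu α hα
  have hχu : χ (tup p - 1) = χ (tup p) - 1 := by rw [map_sub, map_one]
  have hxα := chi_tup p α hα
  have hyα := chi_tup q α hα
  have hcomm := h.comm hu ht
  rw [map_sub] at hcomm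
  have minus : 0 ≤ χ (tup p - 1) → ∃ k, 1 ≤ α k ∧ ∀ l, l ≠ k → α l ≤ 0 := by
    intro h0
    apply Aminus_of_convex α hα1
    intro w w' hw
    obtain ⟨-, h2, h3⟩ := h.merge hK hu ((SPos.X w).add (SPos.X (-w))) w' (fun k => by
      simp [hw])
    have := mul_nonneg h0 h2
    rw [← h3, map_add, hα, hα, hα] at this
    linarith
  have plus : χ (tup p - 1) ≤ 0 → ∀ k, 0 ≤ α k := by
    intro h0
    apply Aplus_of_concave α hα1
    intro w w' hw
    obtain ⟨-, h2, h3⟩ := h.merge hK hu (SPos.one.add (SPos.X w)) w' (fun k => by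
      simp [hw])
    have := mul_nonpos_of_nonpos_of_nonneg h0 h2
    rw [← h3, map_add, hα, hα, map_one] at this
    linarith
  have hbasis : χ (tup p - 1) ≠ 0 → ∀ k, α ≠ Pi.single k 1 := by
    intro h0 k hk
    apply h0
    rw [hχu, hxα, hk]
    have : ∀ i, dot (Pi.single k 1) (p i) = p i k := fun i => by
      simp only [dot]
      rw [Finset.sum_eq_single k]
      · simp
      · intro l _ hl; simp [hl]
      · simp
    simp only [this]
    rw [H.hp, sub_self]
  rcases lt_trichotomy (χ (tup p - 1)) 0 with h0 | h0 | h0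
  · have := H.hAp α hα1 (plus h0.le) (hbasis h0.ne)
    rw [← hxα, ← hyα] at this
    exact h.contra2 hu ht hzN hv hx0 this hz0 h0
  · obtain ⟨k, hk1, hkl⟩ := minus h0.ge
    have hpl := plus h0.le
    have hl0 : ∀ l, l ≠ k → α l = 0 := fun l hl => le_antisymm (hkl l hl) (hpl l)
    have hαk : α k = 1 := by
      rw [Finset.sum_eq_single k (fun l _ hl => hl0 l hl) (by simp)] at hα1
      exact hα1
    have hχX : ∀ w, χ (X w) = Real.exp (w k) := by
      intro w
      rw [hα, dot, Finset.sum_eq_single k (fun l _ hl => by rw [hl0 l hl, zero_mul]) (by simp),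
        hαk, one_mul]
    have hχ : ∀ f, χ f = nrm k f := by
      intro f
      induction f using AddMonoidAlgebra.induction_linear with
      | zero => simp
      | add a b ha hb => rw [map_add, map_add, ha, hb]
      | single w c => rw [single_eq, map_smul, map_smul, nrm_X, hχX]
    obtain ⟨c, hc, hφ⟩ := h.deriv hK hu k hχ
    have h1 := hφ p (fun _ : Fin 1 => (0 : Fin d → ℝ)) (fun k => by rw [hxn, nrm_tup]; simp)
    have h2 : tup (fun _ : Fin 1 => (0 : Fin d → ℝ)) = (1 : Alg d) := by simp [tup, X_zero]
    rw [h2, h.one] at h1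
    have h3 := hφ p q (fun k => by rw [hxn, hyn])
    have h4 : 0 < φ (tup p - tup q) := by
      rw [h3]
      by_contra hcon
      have hz : ∀ l ∈ Finset.univ.erase k, 0 ≤ c l *
          (∑ i, Real.exp (p i k) * (p i k - p i l) - ∑ j, Real.exp (q j k) * (q j k - q j l)) := by
        intro l hl
        have hlk := Finset.ne_of_mem_erase hl
        exact mul_nonneg (hc l hlk) (by linarith [H.hKL k l hlk.symm])
      have hs := le_antisymm (not_lt.mp hcon) (Finset.sum_nonneg hz)
      rw [Finset.sum_eq_zero_iff_of_nonneg hz] at hs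
      have : ∀ l ∈ Finset.univ.erase k, c l = 0 := by
        intro l hl
        have hlk := Finset.ne_of_mem_erase hl
        rcases mul_eq_zero.mp (hs l hl) with h | h
        · exact h
        · linarith [H.hKL k l hlk.symm]
      rw [Finset.sum_eq_zero (fun l hl => by rw [this l hl, zero_mul])] at h1
      exact one_ne_zero h1
    refine h.contra1 ht hzN hv hy0 ?_ h4
    rw [hχ, hχ, hxn, hyn]
  · have := H.hAm α hα1 (minus h0.le) (hbasis h0.ne')
    rw [← hxα, ← hyα] at this
    refine h.contra1 ht hzN hv hy0 this.le ?_
    by_contra hcon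
    have := mul_nonpos_of_nonneg_of_nonpos h0.le (not_lt.mp hcon)
    linarith

end AMM

namespace AMM
variable {d : ℕ}

/-- Data of the infinite case: `π` dominates. -/
structure Inf (u : Alg d) (K : Set (Alg d)) (π : Fin d → ℝ) : Prop where
  tc : TCone u K
  nul : Nul u
  mem : u ∈ K
  big : ∀ N : ℝ, X π * u - N • u ∈ K
  spos : SPos (u + 1)
  dom : (u + 1) * u - X π * u ∈ K
  cof : ∀ a, Nul a → ∃ j : ℕ, X ((j : ℝ) • π) * u - a ∈ K

/-- The preorder on exponents. -/
def le' (u : Alg d) (K : Set (Alg d)) (v w : Fin d → ℝ) : Prop := X w * u - X v * u ∈ K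

section
variable {u : Alg d} {K : Set (Alg d)} {π : Fin d → ℝ}

lemma TCone.le_refl (h : TCone u K) (v : Fin d → ℝ) : le' u K v v := by
  unfold le'; rw [sub_self]; exact h.cone.zero

lemma TCone.le_trans (h : TCone u K) {v w t : Fin d → ℝ} (h1 : le' u K v w) (h2 : le' u K w t) :
    le' u K v t := by
  have := h.cone.add h1 h2
  unfold le'
  convert this using 1; ring

lemma TCone.le_total (h : TCone u K) (v w : Fin d → ℝ) : le' u K v w ∨ le' u K w v := by
  rcases h.total (X w * u - X v * u) with h1 | h1
  · exact Or.inl h1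
  · right; unfold le'; rwa [neg_sub] at h1

lemma TCone.le_add_right (h : TCone u K) {v w : Fin d → ℝ} (t : Fin d → ℝ) (h1 : le' u K v w) :
    le' u K (v + t) (w + t) := by
  have := h.cone.mul (SPos.X t) h1
  unfold le'
  convert this using 1
  rw [X_add, X_add]; ring

lemma TCone.le_add (h : TCone u K) {v w v' w' : Fin d → ℝ} (h1 : le' u K v w)
    (h2 : le' u K v' w') : le' u K (v + v') (w + w') := by
  refine h.le_trans (h.le_add_right v' h1) ?_
  rw [add_comm w v', add_comm w w']
  exact h.le_add_right w h2

lemma TCone.le_cancel (h : TCone u K) {v w t : Fin d → ℝ} (h1 : le' u K (v + t) (w + t)) :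
    le' u K v w := by
  have := h.le_add_right (-t) h1
  simpa using this

lemma TCone.le_nsmul (h : TCone u K) {v w : Fin d → ℝ} (n : ℕ) (h1 : le' u K v w) :
    le' u K (n • v) (n • w) := by
  induction n with
  | zero => simpa using h.le_refl 0
  | succ n ih => rw [succ_nsmul, succ_nsmul]; exact h.le_add ih h1

lemma TCone.le_of_nsmul (h : TCone u K) {v w : Fin d → ℝ} (n : ℕ) (hn : 0 < n)
    (h1 : le' u K (n • v) (n • w)) : le' u K v w := by
  unfold le' at *
  rw [X_nsmul, X_nsmul, ← sub_mul, ← geom_sum₂_mul, mul_assoc] at h1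
  rw [← sub_mul]
  apply h.sat _ h1
  exact SPos.sum ⟨0, by simpa using hn⟩ fun i _ => ((SPos.X _).pow _).mul ((SPos.X _).pow _)

lemma Inf.pi_not (h : Inf u K π) : ¬ le' u K π 0 := by
  intro h1
  apply h.tc.neg
  have := h.tc.cone.add h1 (h.big 2)
  convert this using 1
  rw [X_zero, two_smul]; ring

lemma Inf.pi_pos (h : Inf u K π) : le' u K 0 π := by
  rcases h.tc.le_total 0 π with h1 | h1
  · exact h1
  · exact absurd h1 h.pi_not

lemma Inf.rat_nonneg (h : Inf u K π) (r : ℚ) (hr : 0 ≤ r) : le' u K 0 ((r : ℝ) • π) := by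
  apply h.tc.le_of_nsmul r.den r.den_pos
  have h1 := h.tc.le_nsmul r.num.toNat h.pi_pos
  simp only [smul_zero] at h1 ⊢
  convert h1 using 1
  rw [← Nat.cast_smul_eq_nsmul ℝ, ← Nat.cast_smul_eq_nsmul ℝ, smul_smul]
  congr 1
  have h2 : (r.num.toNat : ℤ) = r.num := Int.toNat_of_nonneg (Rat.num_nonneg.mpr hr)
  have h3 : (r.den : ℚ) * r = r.num := by rw [mul_comm]; exact Rat.mul_den_eq_num r
  have h4 : (r.den : ℝ) * (r : ℝ) = ((r.num : ℤ) : ℝ) := by exact_mod_cast h3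
  have h5 : ((r.num.toNat : ℤ) : ℝ) = (r.num : ℝ) := by rw [h2]
  rw [h4, ← h5, Int.cast_natCast]

lemma Inf.rat_mono (h : Inf u K π) {r s : ℚ} (hr : r ≤ s) : le' u K ((r : ℝ) • π) ((s : ℝ) • π) := by
  have h1 := h.tc.le_add_right ((r : ℝ) • π) (h.rat_nonneg (s - r) (by linarith))
  convert h1 using 1
  · simp
  · rw [← add_smul]; push_cast; ring_nf

lemma Inf.rat_pos (h : Inf u K π) (r : ℚ) (hr : 0 < r) : ¬ le' u K ((r : ℝ) • π) 0 := by
  intro h1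
  have h2 := h.tc.le_nsmul r.den h1
  apply h.pi_not
  have h3 := h.rat_mono (r := 1) (s := r.num) (by
    have : 0 < r.num := Rat.num_pos.mpr hr
    exact_mod_cast this)
  simp only [smul_zero, Rat.cast_one, one_smul] at h2 h3
  refine h.tc.le_trans h3 ?_
  convert h2 using 1
  rw [← Nat.cast_smul_eq_nsmul ℝ, smul_smul]
  congr 1
  have h3 : (r.den : ℚ) * r = r.num := by rw [mul_comm]; exact Rat.mul_den_eq_num r
  exact_mod_cast h3.symm

lemma Inf.rat_le (h : Inf u K π) {r s : ℚ} (h1 : le' u K ((r : ℝ) • π) ((s : ℝ) • π)) : r ≤ s := by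
  by_contra hlt
  push Not at hlt
  apply h.rat_pos (r - s) (by linarith)
  apply h.tc.le_cancel (t := (s : ℝ) • π)
  convert h1 using 1
  · rw [← add_smul]; push_cast; ring_nf
  · simp

theorem Inf.exists_tau (h : Inf u K π) : ∃ τ : (Fin d → ℝ) → ℝ,
    (∀ v w, τ (v + w) = τ v + τ w) ∧ τ π = 1 ∧ ∀ v w, τ v < τ w → le' u K v w := by
  set S : (Fin d → ℝ) → Set ℝ := fun w => {r | ∃ q : ℚ, (q : ℝ) = r ∧ le' u K ((q : ℝ) • π) w} with hS
  have hup : ∀ w, ∃ j : ℕ, le' u K w ((j : ℝ) • π) := fun w => h.cof _ (h.nul.mul (X w))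
  have hlow : ∀ w, ∃ j : ℕ, le' u K ((-(j : ℝ)) • π) w := fun w => by
    obtain ⟨j, hj⟩ := hup (-w)
    refine ⟨j, ?_⟩
    have := h.tc.le_add_right (w + (-(j : ℝ)) • π) hj
    convert this using 1
    · simp
    · simp
  have hne : ∀ w, (S w).Nonempty := fun w => by
    obtain ⟨j, hj⟩ := hlow w
    exact ⟨_, -(j : ℚ), rfl, by simpa using hj⟩
  have hbd : ∀ w, BddAbove (S w) := fun w => by
    obtain ⟨j, hj⟩ := hup w
    refine ⟨j, ?_⟩
    rintro _ ⟨q, rfl, hq⟩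
    have h1 := h.rat_le (r := q) (s := j) (by simpa using h.tc.le_trans hq hj)
    exact_mod_cast h1
  set τ : (Fin d → ℝ) → ℝ := fun w => sSup (S w) with hτ
  have lo : ∀ w (q : ℚ), le' u K ((q : ℝ) • π) w → (q : ℝ) ≤ τ w := fun w q hq =>
    le_csSup (hbd w) ⟨q, rfl, hq⟩
  have up : ∀ w (q : ℚ), le' u K w ((q : ℝ) • π) → τ w ≤ q := fun w q hq => by
    apply csSup_le (hne w)
    rintro _ ⟨r, rfl, hr⟩
    exact_mod_cast h.rat_le (h.tc.le_trans hr hq)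
  have lo' : ∀ w (q : ℚ), (q : ℝ) < τ w → le' u K ((q : ℝ) • π) w := fun w q hq => by
    rcases h.tc.le_total ((q : ℝ) • π) w with h1 | h1
    · exact h1
    · exact absurd (up w q h1) (by linarith)
  have up' : ∀ w (q : ℚ), τ w < q → le' u K w ((q : ℝ) • π) := fun w q hq => by
    rcases h.tc.le_total w ((q : ℝ) • π) with h1 | h1
    · exact h1
    · exact absurd (lo w q h1) (by linarith)
  refine ⟨τ, fun v w => ?_, ?_, fun v w hvw => ?_⟩
  · apply le_antisymm
    · by_contra hlt
      push Not at hlt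
      set ε := (τ (v + w) - (τ v + τ w)) / 2 with hε
      obtain ⟨r, hr1, hr2⟩ := exists_rat_btwn (show τ v < τ v + ε by linarith)
      obtain ⟨s, hs1, hs2⟩ := exists_rat_btwn (show τ w < τ w + ε by linarith)
      have := up (v + w) (r + s) (by
        push_cast; rw [add_smul]; exact h.tc.le_add (up' v r hr1) (up' w s hs1))
      push_cast at this
      linarith
    · by_contra hlt
      push Not at hlt
      set ε := ((τ v + τ w) - τ (v + w)) / 2 with hε
      obtain ⟨r, hr1, hr2⟩ := exists_rat_btwn (show τ v - ε < τ v by linarith)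
      obtain ⟨s, hs1, hs2⟩ := exists_rat_btwn (show τ w - ε < τ w by linarith)
      have := lo (v + w) (r + s) (by
        push_cast; rw [add_smul]; exact h.tc.le_add (lo' v r hr2) (lo' w s hs2))
      push_cast at this
      linarith
  · apply le_antisymm
    · simpa using up π 1 (by simpa using h.tc.le_refl π)
    · simpa using lo π 1 (by simpa using h.tc.le_refl π)
  · obtain ⟨r, hr1, hr2⟩ := exists_rat_btwn hvw
    exact h.tc.le_trans (up' v r hr1) (lo' w r hr2)

lemma TCone.mul_null (h : TCone u K) {a : Alg d} (h1 : a ∈ K) (h2 : -a ∈ K) (b : Alg d) :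
    b * a ∈ K := by
  obtain ⟨f, g, hf, hg, rfl⟩ := exists_sub b
  have := h.cone.add (h.cone.mul hf h1) (h.cone.mul hg h2)
  convert this using 1; ring

lemma TCone.scal_le (h : TCone u K) (w : Fin d → ℝ) (c : ℝ) (hc : 0 < c) :
    X (w + cst (Real.log c)) * u - c • (X w * u) ∈ K ∧
    c • (X w * u) - X (w + cst (Real.log c)) * u ∈ K := by
  obtain ⟨h1, h2⟩ := scal_mem w c hc
  have h1' := h.base h1
  have h2' := h.base h2
  constructor
  · have := h.mul_null h1' (by rwa [neg_sub]) u
    convert this using 1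
    rw [← smul_mul_assoc]; ring
  · have := h.mul_null h2' (by rwa [neg_sub]) u
    convert this using 1
    rw [← smul_mul_assoc]; ring

lemma Inf.pow_dom (h : Inf u K π) (n : ℕ) : (u + 1) ^ n * u - X ((n : ℝ) • π) * u ∈ K := by
  induction n with
  | zero => simpa [X_zero] using h.tc.cone.zero
  | succ n ih =>
    have h1 := h.tc.cone.mul h.spos ih
    have h2 := h.tc.cone.mul (SPos.X ((n : ℝ) • π)) h.dom
    convert h.tc.cone.add h1 h2 using 1
    rw [Nat.cast_succ, add_smul, one_smul, X_add, pow_succ]; ring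

/-- Key contradiction. -/
lemma Inf.contra (h : Inf u K π) {v : Alg d} (hv : Nul v) (hvK : v ∈ K) {c : ℝ} (hc : 0 < c)
    (w : Fin d → ℝ) (h1 : -(u * v) - c • (X w * u) ∈ K) : False := by
  have hK := h.tc.cone
  -- `v ≥ c x^n X^w u`
  have h2 : ∀ n : ℕ, v - (u + 1) ^ n * v ∈ K := by
    intro n
    induction n with
    | zero => simpa using hK.zero
    | succ n ih =>
      have h3 : -(u * v) ∈ K := by
        have := hK.add h1 (hK.smul hc.le (hK.mul (SPos.X w) h.mem))
        convert this using 1; ring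
      have h4 := hK.mul (h.spos.pow n) h3
      convert hK.add ih h4 using 1
      ring
  have h3 : v - c • (X w * u) ∈ K := by
    have := hK.add h1 (hK.mul h.spos hvK)
    convert this using 1; ring
  obtain ⟨j, hj⟩ := h.cof v hv
  obtain ⟨j', hj'⟩ := h.cof _ (h.nul.mul (X (-w)))
  set n := j + j' + 1 with hn
  have h4 := hK.mul (h.spos.pow n) h3
  have h5 := hK.smul hc.le (hK.mul (SPos.X w) (h.pow_dom n))
  have h6 := hK.smul hc.le (hK.mul ((SPos.X w).mul (SPos.X (((j + 1 : ℕ) : ℝ) • π))) hj')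
  -- total : X(jπ) u ≥ v ≥ x^n v ≥ c x^n X^w u ≥ c X^w X(nπ) u ≥ c X((j+1)π) u
  have hXn : X ((n : ℝ) • π) = X (((j + 1 : ℕ) : ℝ) • π) * X ((j' : ℝ) • π) := by
    rw [← X_add, ← add_smul]; congr 2; rw [hn]; push_cast; ring
  have hXw : X w * X (-w) = 1 := by rw [← X_add, add_neg_cancel, X_zero]
  have h7 : X ((j : ℝ) • π) * (u - c • (X π * u)) ∈ K := by
    have := hK.add (hK.add (hK.add hj (h2 n)) h4) (hK.add h5 h6)
    convert this using 1
    have hXj : X (((j + 1 : ℕ) : ℝ) • π) = X ((j : ℝ) • π) * X π := by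
      rw [← X_add, Nat.cast_succ, add_smul, one_smul]
    rw [hXn, hXj]
    generalize X ((j : ℝ) • π) = A
    generalize X ((j' : ℝ) • π) = B
    simp only [Algebra.smul_def]
    linear_combination (algebraMap ℝ (Alg d) c * (A * X π) * u) * hXw
  have h8 := h.tc.sat (SPos.X _) h7
  apply h.tc.neg
  have h9 := hK.add h8 (hK.smul hc.le (h.big (2 / c)))
  convert h9 using 1
  rw [smul_sub, smul_smul, mul_div_cancel₀ _ hc.ne', two_smul]
  ring

/-- Consequences of `τ`. -/
structure Tau (u : Alg d) (K : Set (Alg d)) (π : Fin d → ℝ) (τ : (Fin d → ℝ) → ℝ) : Prop where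
  add : ∀ v w, τ (v + w) = τ v + τ w
  pi : τ π = 1
  lt : ∀ v w, τ v < τ w → ∀ N : ℝ, X w * u - N • (X v * u) ∈ K
  cst : ∀ s, τ (cst s) = 0

lemma Inf.tau (h : Inf u K π) : ∃ τ, Tau u K π τ := by
  obtain ⟨τ, hadd, hpi, hlt⟩ := h.exists_tau
  let H : (Fin d → ℝ) →+ ℝ := AddMonoidHom.mk' τ hadd
  have hH : ∀ w, H w = τ w := fun w => rfl
  have hle1 : ∀ s, τ (cst s) ≤ 1 := by
    intro s
    by_contra hcon
    push Not at hcon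
    rw [← hpi] at hcon
    have h1 := hlt _ _ hcon
    have h2 := (h.tc.scal_le 0 (Real.exp s) (Real.exp_pos s)).2
    rw [Real.log_exp, zero_add, X_zero, one_mul] at h2
    apply h.tc.neg
    have := h.tc.cone.add (h.tc.cone.add h1 h2) (h.big (Real.exp s + 1))
    convert this using 1
    rw [add_smul, one_smul]; ring
  have hle0 : ∀ s, τ (cst s) ≤ 0 := by
    intro s
    by_contra hcon
    push Not at hcon
    obtain ⟨n, hn⟩ := exists_nat_gt (1 / τ (cst s))
    rw [div_lt_iff₀ hcon] at hn
    have h1 := hle1 (n * s)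
    have h2 : (cst (n * s) : Fin d → ℝ) = n • cst s := by
      ext k; simp [AMM.cst]
    rw [h2, ← hH, map_nsmul, hH, nsmul_eq_mul] at h1
    linarith
  have hcst : ∀ s, τ (cst s) = 0 := by
    intro s
    apply le_antisymm (hle0 s)
    have h1 := hle0 (-s)
    have h2 : (cst (-s) : Fin d → ℝ) = - cst s := by ext k; simp [AMM.cst]
    rw [h2, ← hH, map_neg, hH] at h1
    linarith
  refine ⟨τ, hadd, hpi, fun v w hvw N => ?_, hcst⟩
  have hm : 0 < |N| + 1 := by positivity
  have h1 := hlt (v + cst (Real.log (|N| + 1))) w (by rw [hadd, hcst]; linarith)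
  have h2 := (h.tc.scal_le v (|N| + 1) hm).1
  have h3 := h.tc.cone.smul (c := |N| + 1 - N) (by linarith [le_abs_self N])
    (h.tc.cone.mul (SPos.X v) h.mem)
  convert h.tc.cone.add (h.tc.cone.add h1 h2) h3 using 1
  rw [sub_smul]; ring

lemma Tau.qc {τ : (Fin d → ℝ) → ℝ} (ht : Tau u K π τ) (h : Inf u K π) (v1 v2 w : Fin d → ℝ)
    (c1 c2 : ℝ) (hc1 : 0 < c1) (hc2 : 0 < c2)
    (hw : ∀ k, nrm k (c1 • X v1 + c2 • X v2) = Real.exp (w k)) : τ w ≤ max (τ v1) (τ v2) := by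
  by_contra hcon
  push Not at hcon
  rw [max_lt_iff] at hcon
  have hm := merge_mem ((SPos.smul hc1 (SPos.X v1)).add (SPos.smul hc2 (SPos.X v2))) w hw
  apply h.contra (v := c1 • X v1 + c2 • X v2 - X w) (Nul.of_eq fun k => by rw [hw, nrm_X])
    (h.tc.base hm) (c := 1/2) (by norm_num) w
  have h1 := h.tc.cone.smul (c := 1/4) (by norm_num) (ht.lt _ _ hcon.1 (4 * c1))
  have h2 := h.tc.cone.smul (c := 1/4) (by norm_num) (ht.lt _ _ hcon.2 (4 * c2))
  convert h.tc.cone.add h1 h2 using 1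
  rw [smul_sub, smul_sub, smul_smul, smul_smul]
  have e1 : (1/4 : ℝ) * (4 * c1) = c1 := by ring
  have e2 : (1/4 : ℝ) * (4 * c2) = c2 := by ring
  have e3 : ((1/2 : ℝ)) = 1 - 1/4 - 1/4 := by norm_num
  rw [e1, e2, e3, sub_smul, sub_smul, one_smul]
  simp only [Algebra.smul_def]
  ring

lemma Tau.exists_beta {τ : (Fin d → ℝ) → ℝ} (ht : Tau u K π τ) (h : Inf u K π) :
    ∃ β : Fin d → ℝ, (∀ w, τ w = dot β w) ∧ ∑ k, β k = 0 ∧ β ≠ 0 ∧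
      (∃ k, 0 ≤ β k ∧ ∀ l, l ≠ k → β l ≤ 0) := by
  have h0 : τ 0 = 0 := by have := ht.add 0 0; simp at this; exact this
  obtain ⟨β, hβ⟩ := lin_multi τ ht.add (by
    intro k s θ h1 h2
    have := ht.qc h 0 (Pi.single k s) _ (1 - θ) θ (by linarith) h1 (gen_nrm k s θ h1 h2)
    rwa [h0] at this)
  have hβ' : ∀ w, τ w = dot β w := hβ
  have hs : ∑ k, β k = 0 := by
    have := ht.cst 1
    rw [hβ] at this
    simpa [AMM.cst] using this
  have hne : β ≠ 0 := by
    rintro rfl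
    have := ht.pi
    rw [hβ] at this
    simp at this
  refine ⟨β, hβ', hs, hne, ?_⟩
  have hex : ∃ k, 0 < β k := by
    by_contra hcon
    push Not at hcon
    apply hne
    ext k
    exact (Finset.sum_eq_zero_iff_of_nonpos fun k _ => hcon k).mp hs k (Finset.mem_univ k)
  obtain ⟨k, hk⟩ := hex
  refine ⟨k, hk.le, fun l hlk => ?_⟩
  by_contra hcon
  push Not at hcon
  obtain ⟨w, w', h1, h2, h3⟩ := two_pos' β k l hlk.symm hk hcon
  have h4 := ht.qc h w (-w) w' 1 1 one_pos one_pos (fun k => by simp [h2])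
  rw [hβ', hβ', hβ', dot_neg, h1] at h4
  simp at h4
  have : 0 < Real.log 2 := Real.log_pos (by norm_num)
  linarith

end

lemma Tau.sum {u : Alg d} {K : Set (Alg d)} {π : Fin d → ℝ} {τ : (Fin d → ℝ) → ℝ}
    (ht : Tau u K π τ) {α : Type*} (s : Finset α) (f : α → Fin d → ℝ) :
    τ (∑ i ∈ s, f i) = ∑ i ∈ s, τ (f i) := by
  let H : (Fin d → ℝ) →+ ℝ := AddMonoidHom.mk' τ ht.add
  show H (∑ i ∈ s, f i) = ∑ i ∈ s, H (f i)
  rw [map_sum]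

theorem Inf.false {ι κ : Type} [Fintype ι] [Fintype κ] [Nonempty ι] [Nonempty κ]
    {p : ι → Fin d → ℝ} {q : κ → Fin d → ℝ}
    (H : Hyp p q) {K : Set (Alg d)} {π : Fin d → ℝ} (h : Inf (tup p - 1) K π)
    {z : Alg d} (hz1 : ∀ k, nrm k z = 1)
    (hv : ∀ R : ℕ, tup q ^ R * z - tup p ^ R ∈ K) : False := by
  obtain ⟨τ, ht⟩ := h.tau
  obtain ⟨β, hβ, hs, hne, hm⟩ := ht.exists_beta h
  obtain ⟨i, hi⟩ := H.hB β hs hm hne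
  simp only [← hβ] at hi
  obtain ⟨j0, hj0⟩ := Finite.exists_max (fun j => τ (q j))
  obtain ⟨J, hJ⟩ := h.cof _ (h.nul.mul z)
  obtain ⟨R, hR⟩ := exists_nat_gt ((J : ℝ) / (τ (p i) - τ (q j0)))
  have hpos : 0 < τ (p i) - τ (q j0) := by linarith [hi j0]
  rw [div_lt_iff₀ hpos] at hR
  set u := tup p - 1 with hu
  have hK := h.tc.cone
  have hτR : ∀ (n : ℕ) w, τ (((n : ℕ) : ℝ) • w) = n * τ w := fun n w => by
    rw [hβ, hβ, dot_smul]
  have hxn : ∀ k, nrm k (tup p) = 1 := fun k => by rw [nrm_tup, H.hp]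
  have hyn : ∀ k, nrm k (tup q) = 1 := fun k => by rw [nrm_tup, H.hq]
  refine h.contra (v := tup q ^ R * z - tup p ^ R) (Nul.of_eq fun k => ?_) (hv R) (c := 1/2)
    (by norm_num) ((R : ℝ) • p i) ?_
  · simp [hxn, hyn, hz1]
  -- `x^R u ≥ X(R p_i) u`
  have hx : ∀ n : ℕ, tup p ^ n * u - X ((n : ℝ) • p i) * u ∈ K := by
    classical
    have hb : tup p * u - X (p i) * u ∈ K := by
      have : tup p * u - X (p i) * u = ∑ l ∈ Finset.univ.erase i, X (p l) * u := by
        rw [tup, ← Finset.add_sum_erase _ _ (Finset.mem_univ i), add_mul, Finset.sum_mul]; ring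
      rw [this]
      exact hK.sum _ fun l _ => hK.mul (SPos.X _) h.mem
    intro n
    induction n with
    | zero => simpa [X_zero] using hK.zero
    | succ n ih =>
      have h1 := hK.mul (tup_SPos p) ih
      have h2 := hK.mul (SPos.X ((n : ℝ) • p i)) hb
      convert hK.add h1 h2 using 1
      rw [Nat.cast_succ, add_smul, one_smul, X_add, pow_succ]; ring
  -- `y^R z u ≤ 1/2 X(R p_i) u`
  have hy1 := hK.mul ((tup_SPos q).pow R) hJ
  set M : ℝ := (Fintype.card (Fin R → κ) : ℝ) with hM
  have hMpos : 0 < M := by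
    rw [hM]; exact_mod_cast Fintype.card_pos
  have hterm : ∀ f : Fin R → κ, (1/2 : ℝ) • (M⁻¹ • (X ((R : ℝ) • p i) * u)) -
      X (∑ s, q (f s)) * (X ((J : ℝ) • π) * u) ∈ K := by
    intro f
    have h1 := ht.lt (∑ s, q (f s) + (J : ℝ) • π) ((R : ℝ) • p i) (by
      rw [ht.add, ht.sum, hτR, hτR, ht.pi]
      have : ∑ s, τ (q (f s)) ≤ ∑ s : Fin R, τ (q j0) := Finset.sum_le_sum fun s _ => hj0 (f s)
      rw [Finset.sum_const, Finset.card_univ, Fintype.card_fin, nsmul_eq_mul] at this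
      linarith) (2 * M)
    have h2 := hK.smul (c := 1/2 * M⁻¹) (by positivity) h1
    convert h2 using 1
    rw [smul_sub, smul_smul, smul_smul, X_add, mul_assoc (X _) (X _) u]
    have : (1/2 * M⁻¹) * (2 * M) = 1 := by field_simp
    rw [this, one_smul]
  have hsum := hK.sum Finset.univ fun f _ => hterm f
  rw [Finset.sum_sub_distrib, Finset.sum_const, ← Finset.sum_mul, ← tup_pow, Finset.card_univ,
    ← Nat.cast_smul_eq_nsmul ℝ, ← hM, smul_smul, smul_smul] at hsum
  have hMM : M * (1 / 2) * M⁻¹ = 1/2 := by field_simp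
  rw [hMM] at hsum
  convert hK.add (hK.add (hx R) hy1) hsum using 1
  have e3 : X ((R : ℝ) • p i) * u = (1/2 : ℝ) • (X ((R : ℝ) • p i) * u)
      + (1/2 : ℝ) • (X ((R : ℝ) • p i) * u) := by
    rw [← add_smul]; norm_num
  linear_combination e3

end AMM

namespace AMM
variable {d : ℕ}

section
variable {ι κ : Type} [Fintype ι] [Fintype κ] [Nonempty ι] [Nonempty κ] [Nonempty (Fin d)]
    {p : ι → Fin d → ℝ} {q : κ → Fin d → ℝ}

lemma Hyp.u_mem (H : Hyp p q) : tup p - 1 ∈ C0 := by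
  have := merge_mem (tup_SPos p) 0 (fun k => by rw [nrm_tup, H.hp]; simp)
  rwa [X_zero] at this

lemma Hyp.key (H : Hyp p q) {K : Set (Alg d)} (hK : TCone (tup p - 1) K)
    {z : Alg d} (hz : SPos z) (hz1 : ∀ k, nrm k z = 1) :
    ∃ R : ℕ, -(tup p ^ R - tup q ^ R * z) ∉ K := by
  by_contra hcon
  push Not at hcon
  have hv : ∀ R : ℕ, tup q ^ R * z - tup p ^ R ∈ K := fun R => by
    have := hcon R; rwa [neg_sub] at this
  have hxn : ∀ k, nrm k (tup p) = 1 := fun k => by rw [nrm_tup, H.hp]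
  have hu : Nul (tup p - 1) := Nul.of_eq fun k => by rw [hxn, map_one]
  have huK : tup p - 1 ∈ K := hK.base H.u_mem
  have hC := hK.cone
  by_cases hfin : ∃ N : ℝ, N • (tup p - 1) - tup p * (tup p - 1) ∈ K
  · obtain ⟨N, hN⟩ := hfin
    have hN' : |N| • (tup p - 1) - tup p * (tup p - 1) ∈ K := by
      have := hC.add hN (hC.smul (c := |N| - N) (by linarith [le_abs_self N]) huK)
      convert this using 1
      rw [sub_smul]; ring
    have h1 : ∀ j : ℕ, |N| ^ j • (tup p - 1) - tup p ^ j * (tup p - 1) ∈ K := by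
      intro j
      induction j with
      | zero => simpa using hC.zero
      | succ j ih =>
        have h2 := hC.mul ((tup_SPos p).pow j) hN'
        have h3 := hC.smul (abs_nonneg N) ih
        convert hC.add h2 h3 using 1
        simp only [Algebra.smul_def, map_mul, map_pow]
        ring
    have h2 : ∀ j : ℕ, ∃ c : ℝ, c • (tup p - 1) - (tup p ^ j - 1) ∈ K := by
      intro j
      refine ⟨∑ i ∈ Finset.range j, |N| ^ i, ?_⟩
      have := hC.sum (Finset.range j) fun i _ => h1 i
      rw [Finset.sum_sub_distrib, ← Finset.sum_smul, ← Finset.sum_mul, geom_sum_mul] at this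
      exact this
    obtain ⟨χ, φ, hφ⟩ := exists_finPhi hK hu huK (by
      intro a ha
      obtain ⟨N', j, hN0, hb⟩ := bounded p H.hp H.hρ ha
      obtain ⟨c, hc⟩ := h2 j
      refine ⟨N' * c, ?_⟩
      convert hC.add (hK.base hb) (hC.smul hN0.le hc) using 1
      simp only [Algebra.smul_def, map_mul]
      ring)
    exact finite_case H hK hφ hz hz1 hv
  · push Not at hfin
    have hbig : ∀ N : ℝ, tup p * (tup p - 1) - N • (tup p - 1) ∈ K := by
      intro N
      rcases hK.total (N • (tup p - 1) - tup p * (tup p - 1)) with h | h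
      · exact absurd h (hfin N)
      · rwa [neg_sub] at h
    set u := tup p - 1 with hudef
    haveI : IsTrans (Fin d → ℝ) (le' u K) := ⟨fun _ _ _ h1 h2 => hK.le_trans h1 h2⟩
    have hdir : Directed (le' u K) p := by
      intro i j
      rcases hK.le_total (p i) (p j) with h | h
      · exact ⟨j, h, hK.le_refl _⟩
      · exact ⟨i, hK.le_refl _, h⟩
    obtain ⟨i0, hi0⟩ := hdir.finite_le (id : ι → ι)
    simp only [id] at hi0
    set π := p i0 with hπ
    set m : ℝ := (Fintype.card ι : ℝ) with hm
    have hmpos : 0 < m := by rw [hm]; exact_mod_cast Fintype.card_pos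
    have hxm : m • (X π * u) - tup p * u ∈ K := by
      have := hC.sum Finset.univ fun i _ => hi0 i
      rw [Finset.sum_sub_distrib, Finset.sum_const, Finset.card_univ,
        ← Nat.cast_smul_eq_nsmul ℝ, ← Finset.sum_mul] at this
      exact this
    have hdom : tup p * u - X π * u ∈ K := by
      classical
      have : tup p * u - X (p i0) * u = ∑ l ∈ Finset.univ.erase i0, X (p l) * u := by
        rw [tup, ← Finset.add_sum_erase _ _ (Finset.mem_univ i0), add_mul, Finset.sum_mul]; ring
      rw [this]
      exact hC.sum _ fun l _ => hC.mul (SPos.X _) huK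
    have hpi : ∀ N : ℝ, X π * u - N • u ∈ K := by
      intro N
      have := hC.smul (c := m⁻¹) (by positivity) (hC.add hxm (hbig (m * N)))
      convert this using 1
      rw [sub_add_sub_cancel]
      generalize X π * u = B
      generalize u = C
      rw [smul_sub, smul_smul, smul_smul, ← mul_assoc,
        inv_mul_cancel₀ hmpos.ne', one_smul, one_mul]
    have hXu : ∀ j : ℕ, X ((j : ℝ) • π) * u - u ∈ K := by
      intro j
      induction j with
      | zero => simpa [X_zero] using hC.zero
      | succ j ih =>
        have h1 := hC.mul (SPos.X ((j : ℝ) • π)) (hpi 1)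
        convert hC.add ih h1 using 1
        rw [Nat.cast_succ, add_smul, one_smul, one_smul, X_add]; ring
    have hpow : ∀ j : ℕ, ∃ c : ℝ, 0 ≤ c ∧ c • (X ((j : ℝ) • π) * u) - (tup p ^ j - 1) ∈ K := by
      intro j
      induction j with
      | zero => exact ⟨0, le_rfl, by simpa using hC.zero⟩
      | succ j ih =>
        obtain ⟨c, hc0, hc⟩ := ih
        refine ⟨c * m + 1, by positivity, ?_⟩
        have h1 := hC.mul (tup_SPos p) hc
        have h2 := hC.smul hc0 (hC.mul (SPos.X ((j : ℝ) • π)) hxm)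
        convert hC.add (hC.add h1 h2) (hXu (j + 1)) using 1
        rw [Nat.cast_succ, add_smul (j : ℝ), one_smul, X_add, hudef]
        generalize X ((j : ℝ) • π) = A
        simp only [Algebra.smul_def, map_add, map_mul, map_one]
        ring
    have hI : Inf u K π :=
      { tc := hK
        nul := hu
        mem := huK
        big := hpi
        spos := by rw [hudef, sub_add_cancel]; exact tup_SPos p
        dom := by rw [show u + 1 = tup p by rw [hudef, sub_add_cancel]]; exact hdom
        cof := by
          intro a ha
          obtain ⟨N', j, hN0, hb⟩ := bounded p H.hp H.hρ ha
          obtain ⟨c, -, hc⟩ := hpow j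
          refine ⟨j + 1, ?_⟩
          have h1 := hC.smul hN0.le hc
          have h2 := hC.mul (SPos.X ((j : ℝ) • π)) (hpi (N' * c))
          convert hC.add (hC.add (hK.base hb) h1) h2 using 1
          rw [Nat.cast_succ, add_smul (j : ℝ), one_smul, X_add]
          generalize X ((j : ℝ) • π) = A
          simp only [Algebra.smul_def, map_mul]
          ring }
    exact Inf.false H hI hz1 hv

lemma Hyp.hbdd (H : Hyp p q) {a : Alg d} (ha : Nul a) :
    ∃ f, SPos f ∧ f * (tup p - 1) + a ∈ C0 := by
  obtain ⟨N, j, hN0, hb⟩ := bounded p H.hp H.hρ ha.neg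
  refine ⟨N • (∑ i ∈ Finset.range (j + 1), tup p ^ i),
    SPos.smul hN0 (SPos.sum ⟨0, by simp⟩ fun i _ => (tup_SPos p).pow i), ?_⟩
  have h1 := C0_cone.smul hN0.le (C0_cone.mul ((tup_SPos p).pow j) H.u_mem)
  convert C0_cone.add hb h1 using 1
  rw [Finset.sum_range_succ, smul_mul_assoc, add_mul, geom_sum_mul, smul_add]
  ring

lemma geom_SPos {x y : Alg d} (hx : SPos x) (hy : SPos y) (n : ℕ) :
    SPos (∑ i ∈ Finset.range (n + 1), x ^ i * y ^ (n + 1 - 1 - i)) :=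
  SPos.sum ⟨0, by simp⟩ fun i _ => (hx.pow _).mul (hy.pow _)

theorem Hyp.catalyst (H : Hyp p q) :
    ∃ (r : ℕ) (g : Alg d), 0 < r ∧ SPos g ∧ g * (tup p ^ r - tup q ^ r * tup p) ∈ C0 := by
  have hxn : ∀ k, nrm k (tup p) = 1 := fun k => by rw [nrm_tup, H.hp]
  have hyn : ∀ k, nrm k (tup q) = 1 := fun k => by rw [nrm_tup, H.hq]
  have hx := tup_SPos p
  have hy := tup_SPos q
  have hC := C0_cone (d := d)
  obtain ⟨-, g0, hg0, h0⟩ := exists_catalyst H.u_mem (fun _ => tup p - tup q)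
    (fun _ _ _ => ⟨1, 1, SPos.one, SPos.one, by rw [sub_self]; exact hC.zero⟩)
    (fun _ => H.hbdd (Nul.of_eq fun k => by rw [hxn, hyn]))
    (by
      intro K hK
      obtain ⟨R, hR⟩ := H.key hK SPos.one (fun k => map_one _)
      refine ⟨0, fun hmem => hR ?_⟩
      rw [mul_one]
      cases R with
      | zero => simpa using hK.cone.zero
      | succ n =>
        rw [← geom_sum₂_mul, ← mul_neg]
        exact hK.cone.mul (geom_SPos hx hy n) hmem)
  have hmono : ∀ R n : ℕ, g0 * (tup p ^ (R + n) - tup q ^ (R + n) * tup p)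
      - (g0 * tup q ^ n) * (tup p ^ R - tup q ^ R * tup p) ∈ C0 := by
    intro R n
    have h1 : g0 * (tup p ^ (R + n) - tup q ^ (R + n) * tup p)
      - (g0 * tup q ^ n) * (tup p ^ R - tup q ^ R * tup p)
      = (tup p ^ R * g0) * (tup p ^ n - tup q ^ n) := by ring
    rw [h1]
    cases n with
    | zero => simpa using hC.zero
    | succ n =>
      rw [← geom_sum₂_mul]
      convert hC.mul ((hx.pow R).mul (geom_SPos hx hy n)) h0 using 1
      ring
  obtain ⟨r, g, hg, h1⟩ := exists_catalyst H.u_mem (fun R => tup p ^ R - tup q ^ R * tup p)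
    (by
      intro R R' hR
      obtain ⟨n, rfl⟩ := Nat.exists_eq_add_of_le hR
      exact ⟨g0, g0 * tup q ^ n, hg0, hg0.mul (hy.pow n), hmono R n⟩)
    (fun R => H.hbdd (Nul.of_eq fun k => by simp [hxn, hyn]))
    (fun K hK => H.key hK hx hxn)
  refine ⟨r + 1, g * g0, Nat.succ_pos r, hg.mul hg0, ?_⟩
  have h2 := hC.mul hg (hmono r 1)
  have h3 := hC.mul (hg0.mul (hy.pow 1)) h1
  convert hC.add h2 h3 using 1
  ring

theorem Hyp.main (H : Hyp p q) : ∃ N : ℕ, ∀ n, N ≤ n → tup p ^ n - tup q ^ n ∈ C0 := by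
  have hxn : ∀ k, nrm k (tup p) = 1 := fun k => by rw [nrm_tup, H.hp]
  have hyn : ∀ k, nrm k (tup q) = 1 := fun k => by rw [nrm_tup, H.hq]
  have hx := tup_SPos p
  have hy := tup_SPos q
  have hC := C0_cone (d := d)
  obtain ⟨r, g1, hr, hg1, h1⟩ := H.catalyst
  set g := X (fun k => -Real.log (nrm k g1)) * g1 with hgdef
  have hg : SPos g := (SPos.X _).mul hg1
  have hgn : ∀ k, nrm k g = 1 := fun k => by
    rw [hgdef, map_mul, nrm_X, Real.exp_neg, Real.exp_log (hg1.nrm_pos k),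
      inv_mul_cancel₀ (hg1.nrm_pos k).ne']
  have hgx : g * (tup p ^ r - tup q ^ r * tup p) ∈ C0 := by
    rw [hgdef, mul_assoc]; exact hC.mul (SPos.X _) h1
  obtain ⟨k, hk⟩ := universal p H.hp H.hρ hg hgn
  obtain ⟨j, hj⟩ := universal p H.hp H.hρ hy hyn
  have hg1' : g - 1 ∈ C0 := by
    have := merge_mem hg 0 (fun k => by rw [hgn]; simp)
    rwa [X_zero] at this
  have hpow1 : ∀ n : ℕ, tup p ^ n - 1 ∈ C0 := by
    intro n
    have := merge_mem (hx.pow n) 0 (fun k => by simp [hxn])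
    rwa [X_zero] at this
  have hmain : ∀ n : ℕ, tup p ^ (r * n) * g - tup q ^ (r * n) * tup p ^ n * g ∈ C0 := by
    intro n
    induction n with
    | zero => simpa using hC.zero
    | succ n ih =>
      have h2 := hC.mul (hx.pow r) ih
      have h3 := hC.mul ((hy.pow (r * n)).mul (hx.pow n)) hgx
      convert hC.add h2 h3 using 1
      rw [Nat.mul_succ, pow_add, pow_add, pow_succ]; ring
  have hjp : ∀ s : ℕ, tup p ^ (j * s) - tup q ^ s ∈ C0 := by
    intro s
    rw [pow_mul]
    cases s with
    | zero => simpa using hC.zero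
    | succ n =>
      rw [← geom_sum₂_mul]
      exact hC.mul (geom_SPos (hx.pow j) hy n) hj
  refine ⟨r * (j * (k + r)) + k, fun N hN => ?_⟩
  set n := (N - k) / r with hn
  set i := (N - k) % r with hi
  have hNeq : N = r * n + (k + i) := by
    have h5 := Nat.div_add_mod (N - k) r
    rw [← hn, ← hi] at h5
    have h6 : k ≤ N := le_trans (Nat.le_add_left _ _) hN
    omega
  have hir : i < r := Nat.mod_lt _ hr
  have hnj : j * (k + r) ≤ n := by
    rw [hn, Nat.le_div_iff_mul_le hr, mul_comm _ r]; exact Nat.le_sub_of_add_le hN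
  have hle : j * (k + i) ≤ n := le_trans (Nat.mul_le_mul_left j (by omega)) hnj
  obtain ⟨e, he⟩ := Nat.exists_eq_add_of_le hle
  -- chain of inequalities
  have c1 := hC.mul ((hx.pow (r * n)).mul (hx.pow i)) hk
  have c2 := hC.mul ((hx.pow (r * n)).mul hg) (hpow1 i)
  have c3 := hmain n
  have c4 := hC.mul ((hy.pow (r * n)).mul (hx.pow n)) hg1'
  have c5 := hC.mul ((hy.pow (r * n)).mul (hx.pow (j * (k + i)))) (hpow1 e)
  have c6 := hC.mul (hy.pow (r * n)) (hjp (k + i))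
  have hn' : tup p ^ n = tup p ^ (j * (k + i)) * tup p ^ e := by rw [← pow_add, ← he]
  rw [hNeq]
  have := hC.add (hC.add (hC.add c1 c2) (hC.add c3 c4)) (hC.add c5 c6)
  convert this using 1
  rw [pow_add (tup p) (r * n), pow_add (tup p) k, pow_add (tup q) (r * n), hn']
  ring

end
end AMM

namespace AMM
variable {d : ℕ}

lemma blackwell {A B : Type} [Fintype A] [Fintype B] [Nonempty B]
    (a : A → Fin d → ℝ) (b : B → Fin d → ℝ)
    (h : ∀ ψ : (Fin d → ℝ) → ℝ, Sublin ψ → ∑ j, ψ (b j) ≤ ∑ i, ψ (a i)) :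
    ∃ T : B → A → ℝ, IsStochastic T ∧ ∀ k j, ∑ i, T j i * a i k = b j k := by
  classical
  let L : (A → B → ℝ) →ₗ[ℝ] (B → Fin d → ℝ) :=
    { toFun := fun T j k => ∑ i, T i j * a i k
      map_add' := fun S T => by
        funext j k; simp [add_mul, Finset.sum_add_distrib]
      map_smul' := fun c T => by
        funext j k; simp [mul_assoc, Finset.mul_sum] }
  let S : Set (A → B → ℝ) := Set.pi Set.univ fun _ => stdSimplex ℝ B
  have hSc : Convex ℝ S := convex_pi fun _ _ => convex_stdSimplex ℝ B
  have hSk : IsCompact S := isCompact_univ_pi fun _ => isCompact_stdSimplex ℝ B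
  have hLc : Continuous L := LinearMap.continuous_of_finiteDimensional L
  by_cases hb : b ∈ L '' S
  · obtain ⟨T, hT, hTb⟩ := hb
    refine ⟨fun j i => T i j, ⟨fun j i => (hT i trivial).1 j, fun i => (hT i trivial).2⟩, ?_⟩
    intro k j
    exact congrFun (congrFun hTb j) k
  · exfalso
    obtain ⟨f, u, hf, hu⟩ := geometric_hahn_banach_closed_point
      (hSc.linear_image L) (hSk.image hLc).isClosed hb
    let c : B → (Fin d → ℝ) → ℝ := fun j v => f (Pi.single j v)
    have hfc : ∀ x : B → Fin d → ℝ, f x = ∑ j, c j (x j) := by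
      intro x
      have : x = ∑ j, Pi.single j (x j) := (Finset.univ_sum_single x).symm
      conv_lhs => rw [this]
      rw [map_sum]
    let ψ : (Fin d → ℝ) → ℝ := fun v => Finset.univ.sup' Finset.univ_nonempty fun j => c j v
    have hψle : ∀ j v, c j v ≤ ψ v := fun j v =>
      Finset.le_sup' (fun j => c j v) (Finset.mem_univ j)
    have hψex : ∀ v, ∃ j, ψ v = c j v := fun v => by
      obtain ⟨j, -, hj⟩ := Finset.exists_mem_eq_sup' Finset.univ_nonempty (fun j => c j v)
      exact ⟨j, hj⟩
    have hcadd : ∀ j v w, c j (v + w) = c j v + c j w := fun j v w => by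
      simp only [c]; rw [Pi.single_add, map_add]
    have hcsmul : ∀ j (t : ℝ) v, c j (t • v) = t * c j v := fun j t v => by
      simp only [c]; rw [Pi.single_smul, map_smul, smul_eq_mul]
    have hψ : Sublin ψ := by
      refine ⟨?_, ?_⟩
      · intro t v ht
        apply le_antisymm
        · obtain ⟨j, hj⟩ := hψex (t • v)
          rw [hj, hcsmul]
          exact mul_le_mul_of_nonneg_left (hψle j v) ht
        · obtain ⟨j, hj⟩ := hψex v
          rw [hj, ← hcsmul]
          exact hψle j _
      · intro v w
        obtain ⟨j, hj⟩ := hψex (v + w)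
        rw [hj, hcadd]
        exact add_le_add (hψle j v) (hψle j w)
    choose J hJ using fun i => hψex (a i)
    have hTS : (fun i => Pi.single (J i) 1 : A → B → ℝ) ∈ S := fun i _ =>
      ⟨fun j => by
        by_cases hij : j = J i
        · subst hij; simp
        · simp [hij], by simp⟩
    have h1 := hf _ ⟨_, hTS, rfl⟩
    have h2 : f (L fun i => Pi.single (J i) 1) = ∑ i, ψ (a i) := by
      have : L (fun i => Pi.single (J i) 1) = ∑ i, Pi.single (J i) (a i) := by
        funext j k
        simp only [L, LinearMap.coe_mk, AddHom.coe_mk, Finset.sum_apply]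
        refine Finset.sum_congr rfl fun i _ => ?_
        by_cases hij : j = J i
        · subst hij; simp
        · simp [hij]
      rw [this, map_sum]
      exact Finset.sum_congr rfl fun i _ => (hJ i).symm
    have h3 : f b ≤ ∑ j, ψ (b j) := by
      rw [hfc]
      exact Finset.sum_le_sum fun j _ => hψle j _
    have := h ψ hψ
    rw [h2] at h1
    linarith

def lg {m : ℕ} (P : Fin d → Fin m → ℝ) : suppIdx P → Fin d → ℝ :=
  fun i k => Real.log (P k i)

section
variable {m : ℕ} {P : Fin d → Fin m → ℝ}

lemma supp_pos (hP : ∀ k, IsProbVec (P k)) (hPs : ∀ k l i, P k i ≠ 0 ↔ P l i ≠ 0)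
    {i : Fin m} (hi : i ∈ suppIdx P) (k : Fin d) : 0 < P k i := by
  obtain ⟨l, hl⟩ := (Finset.mem_filter.1 hi).2
  exact lt_of_le_of_ne ((hP k).1 i) (Ne.symm ((hPs l k i).1 hl))

lemma supp_zero {i : Fin m} (hi : i ∉ suppIdx P) (k : Fin d) : P k i = 0 := by
  by_contra h
  exact hi (Finset.mem_filter.2 ⟨Finset.mem_univ _, k, h⟩)

lemma supp_nonempty (hP : ∀ k, IsProbVec (P k)) (k : Fin d) : (suppIdx P).Nonempty := by
  by_contra h
  rw [Finset.not_nonempty_iff_eq_empty] at h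
  have h1 := (hP k).2
  rw [Finset.sum_eq_zero fun i _ => supp_zero (by simp [h]) k] at h1
  exact zero_ne_one h1

lemma exp_lg (hP : ∀ k, IsProbVec (P k)) (hPs : ∀ k l i, P k i ≠ 0 ↔ P l i ≠ 0)
    (i : suppIdx P) (k : Fin d) : Real.exp (lg P i k) = P k i :=
  Real.exp_log (supp_pos hP hPs i.2 k)

lemma sum_supp (f : Fin m → ℝ) (hf : ∀ i, i ∉ suppIdx P → f i = 0) :
    ∑ i, f i = ∑ i : suppIdx P, f i := by
  rw [Finset.sum_coe_sort (suppIdx P) f]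
  exact (Finset.sum_subset (Finset.subset_univ _) fun i _ hi => hf i hi).symm

lemma prod_lg (hP : ∀ k, IsProbVec (P k)) (hPs : ∀ k l i, P k i ≠ 0 ↔ P l i ≠ 0)
    (α : Fin d → ℝ) (i : suppIdx P) : ∏ k, P k i ^ α k = Real.exp (dot α (lg P i)) := by
  rw [dot, Real.exp_sum]
  refine Finset.prod_congr rfl fun k _ => ?_
  rw [Real.rpow_def_of_pos (supp_pos hP hPs i.2 k), mul_comm]; rfl

lemma fsum_lg (hP : ∀ k, IsProbVec (P k)) (hPs : ∀ k l i, P k i ≠ 0 ↔ P l i ≠ 0)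
    (α : Fin d → ℝ) :
    ∑ i ∈ suppIdx P, ∏ k, P k i ^ α k = ∑ i : suppIdx P, Real.exp (dot α (lg P i)) := by
  rw [← Finset.sum_coe_sort (suppIdx P) fun i => ∏ k, P k i ^ α k]
  exact Finset.sum_congr rfl fun i _ => prod_lg hP hPs α i

lemma fsum_pos (hP : ∀ k, IsProbVec (P k)) (α : Fin d → ℝ) (k : Fin d) :
    0 < ∑ i : suppIdx P, Real.exp (dot α (lg P i)) := by
  obtain ⟨i, hi⟩ := supp_nonempty hP k
  exact Finset.sum_pos (fun i _ => Real.exp_pos _) ⟨⟨i, hi⟩, Finset.mem_univ _⟩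

lemma sup_supp (hP : ∀ k, IsProbVec (P k)) (hPs : ∀ k l i, P k i ≠ 0 ↔ P l i ≠ 0)
    (k0 : Fin d) (β : Fin d → ℝ) :
    ∃ i0 : suppIdx P, (⨆ i ∈ suppIdx P, ∏ k, P k i ^ β k) = Real.exp (dot β (lg P i0)) ∧
      ∀ i : suppIdx P, Real.exp (dot β (lg P i)) ≤ Real.exp (dot β (lg P i0)) := by
  haveI : Nonempty (suppIdx P) := (supp_nonempty hP k0).to_subtype
  obtain ⟨i0, hi0⟩ := Finite.exists_max fun i : suppIdx P => Real.exp (dot β (lg P i))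
  refine ⟨i0, ?_, hi0⟩
  haveI : Nonempty (Fin m) := ⟨i0.1⟩
  apply le_antisymm
  · refine ciSup_le fun i => ?_
    by_cases hi : i ∈ suppIdx P
    · rw [ciSup_pos hi, prod_lg hP hPs β ⟨i, hi⟩]
      exact hi0 _
    · haveI : IsEmpty (i ∈ suppIdx P) := ⟨hi⟩
      rw [Real.iSup_of_isEmpty]
      exact (Real.exp_pos _).le
  · refine le_ciSup_of_le (Set.finite_range _).bddAbove i0.1 ?_
    rw [ciSup_pos i0.2, prod_lg hP hPs β i0]

lemma KL_lg (hP : ∀ k, IsProbVec (P k)) (hPs : ∀ k l i, P k i ≠ 0 ↔ P l i ≠ 0)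
    (k l : Fin d) :
    KL (P k) (P l) = ∑ i : suppIdx P, Real.exp (lg P i k) * (lg P i k - lg P i l) := by
  rw [KL, sum_supp (P := P) _ fun i hi => by rw [supp_zero hi k, zero_mul]]
  refine Finset.sum_congr rfl fun i _ => ?_
  rw [exp_lg hP hPs, Real.log_div (supp_pos hP hPs i.2 k).ne' (supp_pos hP hPs i.2 l).ne']
  rfl

lemma tup_lg_pow (hP : ∀ k, IsProbVec (P k)) (hPs : ∀ k l i, P k i ≠ 0 ↔ P l i ≠ 0)
    (k0 : Fin d) (n : ℕ) {ψ : (Fin d → ℝ) → ℝ} (hψ : Sublin ψ) :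
    Lf ψ (tup (lg P) ^ n) = ∑ f : Fin n → Fin m, ψ fun k => kpow (P k) n f := by
  classical
  rw [tup_pow, map_sum]
  have h1 : ∀ f : Fin n → suppIdx P,
      Lf ψ (X (∑ s, lg P (f s))) = ψ fun k => kpow (P k) n fun s => (f s : Fin m) := by
    intro f
    rw [X, Lf_single, one_mul]
    congr 1
    funext k
    rw [Ev, Finset.sum_apply, Real.exp_sum, kpow]
    exact Finset.prod_congr rfl fun s _ => exp_lg hP hPs _ _
  rw [Finset.sum_congr rfl fun f _ => h1 f]
  have hinj : Function.Injective fun (f : Fin n → suppIdx P) (s : Fin n) => (f s : Fin m) := by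
    intro f g hfg
    funext s
    exact Subtype.ext (congrFun hfg s)
  refine Finset.sum_of_injOn (fun f s => (f s : Fin m)) hinj.injOn (by simp) ?_ (by simp)
  intro f _ hf
  have : ∃ s, f s ∉ suppIdx P := by
    by_contra hcon
    push Not at hcon
    exact hf ⟨fun s => ⟨f s, hcon s⟩, by simp, rfl⟩
  obtain ⟨s, hs⟩ := this
  rw [show (fun k => kpow (P k) n f) = 0 from funext fun k =>
    Finset.prod_eq_zero (Finset.mem_univ s) (supp_zero hs k)]
  exact hψ.zero

end

lemma eq_basis {α : Fin d → ℝ} {k : Fin d} (hs : ∑ l, α l = 1) (hk : α k = 1)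
    (h : (∀ l, l ≠ k → 0 ≤ α l) ∨ (∀ l, l ≠ k → α l ≤ 0)) : α = Pi.single k 1 := by
  classical
  have h0 : ∑ l ∈ Finset.univ.erase k, α l = 0 := by
    have := Finset.add_sum_erase Finset.univ α (Finset.mem_univ k)
    linarith
  have h1 : ∀ l ∈ Finset.univ.erase k, α l = 0 := by
    rcases h with h | h
    · exact (Finset.sum_eq_zero_iff_of_nonneg fun l hl => h l (Finset.ne_of_mem_erase hl)).1 h0
    · exact (Finset.sum_eq_zero_iff_of_nonpos fun l hl => h l (Finset.ne_of_mem_erase hl)).1 h0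
  funext l
  by_cases hl : l = k
  · subst hl; simp [hk]
  · rw [Pi.single_eq_of_ne hl]
    exact h1 l (Finset.mem_erase.2 ⟨hl, Finset.mem_univ _⟩)

theorem mkHyp {m m' : ℕ} (k0 : Fin d)
    (P : Fin d → Fin m → ℝ) (Q : Fin d → Fin m' → ℝ)
    (hP : ∀ k, IsProbVec (P k)) (hQ : ∀ k, IsProbVec (Q k))
    (hPs : ∀ k l i, P k i ≠ 0 ↔ P l i ≠ 0)
    (hQs : ∀ k l i, Q k i ≠ 0 ↔ Q l i ≠ 0)
    (hA : ∀ α : Fin d → ℝ, (memAplus α ∨ memAminus α) → notBasis α →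
      Dmat α Q < Dmat α P)
    (hB : ∀ β : Fin d → ℝ, memBminus β → β ≠ 0 → DmatT β Q < DmatT β P)
    (hKL : ∀ k l, k ≠ l → KL (Q k) (Q l) < KL (P k) (P l)) : Hyp (lg P) (lg Q) := by
  classical
  haveI : Nonempty (Fin d) := ⟨k0⟩
  have hp : ∀ k, ∑ i, Real.exp (lg P i k) = 1 := fun k => by
    rw [← (hP k).2, sum_supp (P := P) _ fun i hi => supp_zero hi k]
    exact Finset.sum_congr rfl fun i _ => exp_lg hP hPs i k
  have hq : ∀ k, ∑ i, Real.exp (lg Q i k) = 1 := fun k => by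
    rw [← (hQ k).2, sum_supp (P := Q) _ fun i hi => supp_zero hi k]
    exact Finset.sum_congr rfl fun i _ => exp_lg hQ hQs i k
  have hAp : ∀ α, ∑ k, α k = 1 → (∀ k, 0 ≤ α k) → (∀ k, α ≠ Pi.single k 1) →
      ∑ i, Real.exp (dot α (lg P i)) < ∑ j, Real.exp (dot α (lg Q j)) := by
    intro α hs hn hb
    have h := hA α (Or.inl ⟨hs, hn⟩) hb
    rw [Dmat, Dmat, fsum_lg hP hPs, fsum_lg hQ hQs] at h
    obtain ⟨k, hk⟩ := exists_eq_ciSup_of_finite (f := α)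
    have hk1 : α k < 1 := by
      refine lt_of_le_of_ne ?_ fun he => hb k (eq_basis hs he (Or.inl fun l _ => hn l))
      rw [← hs]
      exact Finset.single_le_sum (fun l _ => hn l) (Finset.mem_univ k)
    rw [← hk] at h
    have hneg : 1 / (α k - 1) < 0 := one_div_neg.2 (by linarith)
    exact (Real.log_lt_log_iff (fsum_pos hP α k0) (fsum_pos hQ α k0)).1
      ((mul_lt_mul_left_of_neg hneg).1 h)
  have hAm : ∀ α, ∑ k, α k = 1 → (∃ k, 1 ≤ α k ∧ ∀ l, l ≠ k → α l ≤ 0) →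
      (∀ k, α ≠ Pi.single k 1) →
      ∑ j, Real.exp (dot α (lg Q j)) < ∑ i, Real.exp (dot α (lg P i)) := by
    intro α hs hk hb
    have h := hA α (Or.inr ⟨hs, hk⟩) hb
    rw [Dmat, Dmat, fsum_lg hP hPs, fsum_lg hQ hQs] at h
    obtain ⟨k, hk1, hk2⟩ := hk
    have hk3 : 1 < α k := lt_of_le_of_ne hk1 fun he => hb k (eq_basis hs he.symm (Or.inr hk2))
    have hk4 : α k ≤ ⨆ k, α k := le_ciSup (Set.finite_range α).bddAbove k
    have hpos : 0 < 1 / ((⨆ k, α k) - 1) := one_div_pos.2 (by linarith)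
    exact (Real.log_lt_log_iff (fsum_pos hQ α k0) (fsum_pos hP α k0)).1
      ((mul_lt_mul_iff_right₀ hpos).1 h)
  refine ⟨hp, hq, ?_, hAp, hAm, ?_, ?_⟩
  · intro k l hkl
    let α : Fin d → ℝ := Pi.single k (1 / 2) + Pi.single l (1 / 2)
    have hdot : ∀ w, dot α w = (w k + w l) / 2 := by
      intro w
      simp only [dot, α, Pi.add_apply, add_mul, Finset.sum_add_distrib, Pi.single_apply, ite_mul,
        zero_mul, Finset.sum_ite_eq', Finset.mem_univ, if_true]
      ring
    have h1 := hAp α (by simp [α, Finset.sum_add_distrib]; norm_num)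
      (fun j => by
        simp only [α, Pi.add_apply, Pi.single_apply]
        split_ifs <;> norm_num)
      (fun j hj => by
        have h2 := congrFun hj k
        simp only [α, Pi.add_apply, Pi.single_apply, hkl, if_true, if_false] at h2
        split_ifs at h2 <;> norm_num at h2)
    simp only [hdot] at h1
    refine lt_of_lt_of_le h1 ?_
    have h3 : ∀ j : suppIdx Q, Real.exp ((lg Q j k + lg Q j l) / 2) ≤
        (Real.exp (lg Q j k) + Real.exp (lg Q j l)) / 2 := by
      intro j
      have e1 : Real.exp ((lg Q j k + lg Q j l) / 2) =
          Real.exp (lg Q j k / 2) * Real.exp (lg Q j l / 2) := by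
        rw [← Real.exp_add]; congr 1; ring
      have e2 : ∀ x : ℝ, Real.exp x = Real.exp (x / 2) ^ 2 := fun x => by
        rw [← Real.exp_nat_mul]; congr 1; push_cast; ring
      rw [e1, e2 (lg Q j k), e2 (lg Q j l)]
      nlinarith [sq_nonneg (Real.exp (lg Q j k / 2) - Real.exp (lg Q j l / 2))]
    refine (Finset.sum_le_sum fun j _ => h3 j).trans ?_
    rw [← Finset.sum_div, Finset.sum_add_distrib, hq, hq]
    norm_num
  · intro β hs hk hb
    have h := hB β ⟨hs, hk⟩ hb
    obtain ⟨k, hk1, hk2⟩ := hk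
    have hk3 : 0 < β k := by
      refine lt_of_le_of_ne hk1 fun he => hb ?_
      have hle : ∀ l ∈ Finset.univ, β l ≤ 0 := fun l _ => by
        by_cases hl : l = k
        · rw [hl, ← he]
        · exact hk2 l hl
      funext l
      exact (Finset.sum_eq_zero_iff_of_nonpos hle).1 hs l (Finset.mem_univ l)
    have hk4 : β k ≤ ⨆ k, β k := le_ciSup (Set.finite_range β).bddAbove k
    have hpos : 0 < 1 / (⨆ k, β k) := one_div_pos.2 (by linarith)
    obtain ⟨i0, hi0, -⟩ := sup_supp hP hPs k0 β
    obtain ⟨j0, hj0, hj1⟩ := sup_supp hQ hQs k0 β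
    rw [DmatT, DmatT, hi0, hj0, Real.log_exp, Real.log_exp] at h
    refine ⟨i0, fun j => ?_⟩
    exact lt_of_le_of_lt (Real.exp_le_exp.1 (hj1 j)) ((mul_lt_mul_iff_right₀ hpos).1 h)
  · intro k l hkl
    have := hKL k l hkl
    rwa [KL_lg hP hPs, KL_lg hQ hQs] at this

end AMM

/-- **Asymptotic matrix majorization, sufficiency.**  If all the matrix
`α`-divergences, the tropical divergences and the Kullback–Leibler divergences
are strictly ordered between the tuples `P` and `Q`, then for all sufficiently
large `n` some stochastic matrix carries the `n`-th Kronecker powers of the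
columns of `P` to those of `Q`. -/
theorem asymptotic_matrix_majorization_sufficient
    {d m m' : ℕ} (hd : 1 ≤ d)
    (P : Fin d → Fin m → ℝ) (Q : Fin d → Fin m' → ℝ)
    (hP : ∀ k, IsProbVec (P k)) (hQ : ∀ k, IsProbVec (Q k))
    (hPs : ∀ k l i, P k i ≠ 0 ↔ P l i ≠ 0)
    (hQs : ∀ k l i, Q k i ≠ 0 ↔ Q l i ≠ 0)
    (hA : ∀ α : Fin d → ℝ, (memAplus α ∨ memAminus α) → notBasis α →
      Dmat α Q < Dmat α P)
    (hB : ∀ β : Fin d → ℝ, memBminus β → β ≠ 0 → DmatT β Q < DmatT β P)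
    (hKL : ∀ k l, k ≠ l → KL (Q k) (Q l) < KL (P k) (P l)) :
    ∃ N : ℕ, ∀ n : ℕ, N ≤ n →
      ∃ T : (Fin n → Fin m') → (Fin n → Fin m) → ℝ,
        IsStochastic T ∧ ∀ k, matVec T (kpow (P k) n) = kpow (Q k) n := by
  classical
  have k0 : Fin d := ⟨0, hd⟩
  haveI : Nonempty (Fin d) := ⟨k0⟩
  haveI : Nonempty (suppIdx P) := (AMM.supp_nonempty hP k0).to_subtype
  haveI : Nonempty (suppIdx Q) := (AMM.supp_nonempty hQ k0).to_subtype
  obtain ⟨N, hN⟩ := (AMM.mkHyp k0 P Q hP hQ hPs hQs hA hB hKL).main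
  refine ⟨N, fun n hn => ?_⟩
  haveI : Nonempty (Fin m') := ⟨(Classical.arbitrary (suppIdx Q)).1⟩
  obtain ⟨T, hT, hTk⟩ := AMM.blackwell
    (fun (f : Fin n → Fin m) k => kpow (P k) n f) (fun (f : Fin n → Fin m') k => kpow (Q k) n f)
    (by
      intro ψ hψ
      have h := hN n hn ψ hψ
      rw [map_sub, AMM.tup_lg_pow hP hPs k0 n hψ, AMM.tup_lg_pow hQ hQs k0 n hψ] at h
      linarith)
  exact ⟨T, hT, fun k => funext fun j => hTk k j⟩
end
end

section
/- Let d ≥ 1 and let P = (p⁽¹⁾,…,p⁽ᵈ⁾) and Q = (q⁽¹⁾,…,q⁽ᵈ⁾) be d-tuples of probability vectors such that the columns of P share a common support and the columns of Q share a common support. If for some n ≥ 1 there exists a stochastic matrix T with T (p⁽ᵏ⁾)^{⊗n} = (q⁽ᵏ⁾)^{⊗n} for all k = 1,…,d, then D_α(P) ≥ D_α(Q) for every α ∈ (A₊ ∪ A₋) \ {e₁,…,e_d}, D^T_β(P) ≥ D^T_β(Q) for every β ∈ B₋ \ {0}, and D₁(p⁽ᵏ⁾‖p⁽ˡ⁾)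 ≥ D₁(q⁽ᵏ⁾‖q⁽ˡ⁾) for all k ≠ ℓ. -/
open scoped BigOperators NNReal

noncomputable section

section Helpers

variable {d : ℕ} {ι κ : Type*}

lemma aux_holder (s : Finset κ) (T : κ → ℝ) (hT : ∀ j, 0 ≤ T j)
    (p : Fin d → κ → ℝ) (hp : ∀ k, ∀ j ∈ s, 0 < p k j) (q : Fin d → ℝ) (hq : ∀ k, 0 < q k)
    (hpq : ∀ k, ∑ j ∈ s, T j * p k j = q k) (α : Fin d → ℝ) (hα : ∀ k, 0 ≤ α k)
    (hα1 : ∑ k, α k = 1) :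
    ∑ j ∈ s, T j * ∏ k, p k j ^ α k ≤ ∏ k, q k ^ α k := by
  have hQ : 0 < ∏ k, q k ^ α k := Finset.prod_pos fun k _ => Real.rpow_pos_of_pos (hq k) _
  have h1 : ∀ j ∈ s, T j * ∏ k, p k j ^ α k ≤
      (∏ k, q k ^ α k) * ∑ k, α k * (T j * p k j / q k) := by
    intro j hj
    have := Real.geom_mean_le_arith_mean_weighted Finset.univ α (fun k => p k j / q k)
      (fun k _ => hα k) hα1 (fun k _ => (div_pos (hp k j hj) (hq k)).le)
    have e : ∏ k, (p k j / q k) ^ α k = (∏ k, p k j ^ α k) / ∏ k, q k ^ α k := by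
      rw [← Finset.prod_div_distrib]
      exact Finset.prod_congr rfl fun k _ => Real.div_rpow (hp k j hj).le (hq k).le _
    rw [e, div_le_iff₀ hQ] at this
    calc _ ≤ T j * ((∑ k, α k * (p k j / q k)) * ∏ k, q k ^ α k) :=
          mul_le_mul_of_nonneg_left this (hT j)
      _ = (∏ k, q k ^ α k) * (T j * ∑ k, α k * (p k j / q k)) := by ring
      _ = _ := by
          rw [Finset.mul_sum]
          congr 1
          exact Finset.sum_congr rfl fun k _ => by ring
  refine (Finset.sum_le_sum h1).trans (le_of_eq ?_)
  rw [← Finset.mul_sum, Finset.sum_comm]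
  have : ∀ k ∈ Finset.univ, ∑ j ∈ s, α k * (T j * p k j / q k) = α k := by
    intro k _
    rw [← Finset.mul_sum, ← Finset.sum_div, hpq k, div_self (hq k).ne', mul_one]
  rw [Finset.sum_congr rfl this, hα1, mul_one]

/-- reverse weighted AM-GM -/
lemma aux_reverse_amgm (α x : Fin d → ℝ) (hx : ∀ k, 0 < x k) (k : Fin d) (hk : 1 ≤ α k)
    (hα : ∀ l, l ≠ k → α l ≤ 0) (hα1 : ∑ k, α k = 1) :
    ∑ l, α l * x l ≤ ∏ l, x l ^ α l := by
  have hk0 : 0 < α k := by linarith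
  set w : Fin d → ℝ := fun l => if l = k then 1 / α k else -α l / α k with hw
  set z : Fin d → ℝ := fun l => if l = k then ∏ l, x l ^ α l else x l with hz
  have hprod : 0 < ∏ l, x l ^ α l := Finset.prod_pos fun k _ => Real.rpow_pos_of_pos (hx k) _
  have hsum := Finset.add_sum_erase Finset.univ α (Finset.mem_univ k)
  have hne : ∀ l ∈ Finset.univ.erase k, l ≠ k := fun l hl => Finset.ne_of_mem_erase hl
  have key := Real.geom_mean_le_arith_mean_weighted Finset.univ w z ?_ ?_ ?_
  · rw [← Finset.mul_prod_erase _ _ (Finset.mem_univ k),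
      ← Finset.add_sum_erase _ _ (Finset.mem_univ k)] at key
    have e1 : ∏ l ∈ Finset.univ.erase k, z l ^ w l
        = ((∏ l ∈ Finset.univ.erase k, x l ^ α l) ^ (1 / α k))⁻¹ := by
      rw [← Real.finsetProd_rpow _ _ (fun l _ => (Real.rpow_pos_of_pos (hx l) _).le),
        ← Finset.prod_inv_distrib]
      refine Finset.prod_congr rfl fun l hl => ?_
      simp only [hw, hz, if_neg (hne l hl)]
      rw [← Real.rpow_mul (hx l).le, ← Real.rpow_neg (hx l).le]
      congr 1; ring
    have e2 : ∑ l ∈ Finset.univ.erase k, w l * z l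
        = -(∑ l ∈ Finset.univ.erase k, α l * x l) / α k := by
      rw [neg_div, Finset.sum_div, ← Finset.sum_neg_distrib]
      refine Finset.sum_congr rfl fun l hl => ?_
      simp only [hw, hz, if_neg (hne l hl)]
      ring
    have hpe : 0 < ∏ l ∈ Finset.univ.erase k, x l ^ α l :=
      Finset.prod_pos fun k _ => Real.rpow_pos_of_pos (hx k) _
    have e3 : z k ^ w k = x k * (∏ l ∈ Finset.univ.erase k, x l ^ α l) ^ (1 / α k) := by
      simp only [hw, hz, if_true]
      rw [← Finset.mul_prod_erase _ _ (Finset.mem_univ k),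
        Real.mul_rpow (Real.rpow_pos_of_pos (hx k) _).le hpe.le, ← Real.rpow_mul (hx k).le,
        mul_one_div_cancel hk0.ne', Real.rpow_one]
    have e4 : w k * z k = (∏ l, x l ^ α l) / α k := by
      simp only [hw, hz, if_true]; ring
    rw [e1, e2, e3, e4, mul_assoc, mul_inv_cancel₀ (Real.rpow_pos_of_pos hpe _).ne', mul_one,
      ← add_div, le_div_iff₀ hk0] at key
    rw [← Finset.add_sum_erase _ _ (Finset.mem_univ k)]
    linarith
  · intro l _
    simp only [hw]
    split_ifs with h
    · positivity
    · exact div_nonneg (by linarith [hα l h]) hk0.le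
  · rw [← Finset.add_sum_erase _ _ (Finset.mem_univ k)]
    have e2 : ∑ l ∈ Finset.univ.erase k, w l
        = -(∑ l ∈ Finset.univ.erase k, α l) / α k := by
      rw [neg_div, Finset.sum_div, ← Finset.sum_neg_distrib]
      refine Finset.sum_congr rfl fun l hl => ?_
      simp only [hw, if_neg (hne l hl)]
      ring
    rw [e2]
    simp only [hw, if_true]
    rw [← add_div, div_eq_one_iff_eq hk0.ne']
    linarith
  · intro l _
    simp only [hz]
    split_ifs with h
    · exact hprod.le
    · exact (hx l).le

lemma aux_reverse_holder (s : Finset κ) (T : κ → ℝ) (hT : ∀ j, 0 ≤ T j)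
    (p : Fin d → κ → ℝ) (hp : ∀ k, ∀ j ∈ s, 0 < p k j) (q : Fin d → ℝ) (hq : ∀ k, 0 < q k)
    (hpq : ∀ k, ∑ j ∈ s, T j * p k j = q k) (α : Fin d → ℝ) (k₀ : Fin d) (hk : 1 ≤ α k₀)
    (hα : ∀ l, l ≠ k₀ → α l ≤ 0)
    (hα1 : ∑ k, α k = 1) :
    ∏ k, q k ^ α k ≤ ∑ j ∈ s, T j * ∏ k, p k j ^ α k := by
  have hQ : 0 < ∏ k, q k ^ α k := Finset.prod_pos fun k _ => Real.rpow_pos_of_pos (hq k) _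
  have h1 : ∀ j ∈ s, (∏ k, q k ^ α k) * ∑ k, α k * (T j * p k j / q k) ≤
      T j * ∏ k, p k j ^ α k := by
    intro j hj
    have := aux_reverse_amgm α (fun k => p k j / q k)
      (fun k => (div_pos (hp k j hj) (hq k))) k₀ hk hα hα1
    have e : ∏ k, (p k j / q k) ^ α k = (∏ k, p k j ^ α k) / ∏ k, q k ^ α k := by
      rw [← Finset.prod_div_distrib]
      exact Finset.prod_congr rfl fun k _ => Real.div_rpow (hp k j hj).le (hq k).le _
    rw [e, le_div_iff₀ hQ] at this
    calc _ = (∏ k, q k ^ α k) * (T j * ∑ k, α k * (p k j / q k)) := by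
          rw [Finset.mul_sum _ _ (T j)]
          congr 1
          exact Finset.sum_congr rfl fun k _ => by ring
      _ = T j * ((∑ k, α k * (p k j / q k)) * ∏ k, q k ^ α k) := by ring
      _ ≤ _ := mul_le_mul_of_nonneg_left this (hT j)
  refine le_trans (le_of_eq ?_) (Finset.sum_le_sum h1)
  rw [← Finset.mul_sum, Finset.sum_comm]
  have : ∀ k ∈ Finset.univ, ∑ j ∈ s, α k * (T j * p k j / q k) = α k := by
    intro k _
    rw [← Finset.mul_sum, ← Finset.sum_div, hpq k, div_self (hq k).ne', mul_one]
  rw [Finset.sum_congr rfl this, hα1, mul_one]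

lemma aux_swap (s : Finset κ) (t : Finset ι) (T : ι → κ → ℝ)
    (hT1 : ∀ j ∈ s, ∑ i ∈ t, T i j = 1) (g : κ → ℝ) :
    ∑ i ∈ t, ∑ j ∈ s, T i j * g j = ∑ j ∈ s, g j := by
  rw [Finset.sum_comm]
  refine Finset.sum_congr rfl fun j hj => ?_
  rw [← Finset.sum_mul, hT1 j hj, one_mul]

lemma aux_KL (s : Finset κ) (T : κ → ℝ) (hT : ∀ j, 0 ≤ T j)
    (p r : κ → ℝ) (hp : ∀ j ∈ s, 0 < p j) (hr : ∀ j ∈ s, 0 < r j) (a b : ℝ)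
    (ha : 0 < a) (hb : 0 < b) (hpa : ∑ j ∈ s, T j * p j = a) (hrb : ∑ j ∈ s, T j * r j = b) :
    a * Real.log (a / b) ≤ ∑ j ∈ s, T j * (p j * Real.log (p j / r j)) := by
  have h1 : ∀ j ∈ s, T j * p j * Real.log (a / b) + (T j * p j - T j * r j * (a / b)) ≤
      T j * (p j * Real.log (p j / r j)) := by
    intro j hj
    have hpj := hp j hj
    have hrj := hr j hj
    have hab : 0 < a / b := div_pos ha hb
    have hpr : 0 < p j / r j := div_pos hpj hrj
    have h := Real.log_le_sub_one_of_pos (div_pos hab hpr)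
    rw [Real.log_div hab.ne' hpr.ne'] at h
    have h2 : T j * p j * (Real.log (a / b) - Real.log (p j / r j)) ≤
        T j * p j * ((a / b) / (p j / r j) - 1) :=
      mul_le_mul_of_nonneg_left h (mul_nonneg (hT j) hpj.le)
    have e : T j * p j * ((a / b) / (p j / r j) - 1) = T j * r j * (a / b) - T j * p j := by
      field_simp
    linarith
  refine le_trans (le_of_eq ?_) (Finset.sum_le_sum h1)
  rw [Finset.sum_add_distrib, Finset.sum_sub_distrib, ← Finset.sum_mul, ← Finset.sum_mul,
    hpa, hrb]
  field_simp
  ring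

/-- products of powers for Kronecker powers -/
lemma aux_kpow_prod (P : Fin d → ι → ℝ) (hP : ∀ k i, 0 ≤ P k i) (n : ℕ) (α : Fin d → ℝ)
    (f : Fin n → ι) : ∏ k, kpow (P k) n f ^ α k = ∏ j, ∏ k, P k (f j) ^ α k := by
  rw [Finset.prod_comm]
  refine Finset.prod_congr rfl fun k _ => ?_
  rw [kpow, Real.finsetProd_rpow _ _ (fun j _ => hP k _)]

lemma aux_kpow_sum [DecidableEq ι] (P : Fin d → ι → ℝ) (hP : ∀ k i, 0 ≤ P k i) (n : ℕ)
    (α : Fin d → ℝ) (s : Finset ι) :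
    ∑ f ∈ Fintype.piFinset (fun _ : Fin n => s), ∏ k, kpow (P k) n f ^ α k
      = (∑ i ∈ s, ∏ k, P k i ^ α k) ^ n := by
  have := Finset.prod_univ_sum (fun _ : Fin n => s) (fun _ i => ∏ k, P k i ^ α k)
  simp only [Finset.prod_const, Finset.card_univ, Fintype.card_fin] at this
  rw [this]
  exact Finset.sum_congr rfl fun f _ => aux_kpow_prod P hP n α f

lemma aux_kpow_KL [DecidableEq ι] (p r : ι → ℝ) (n : ℕ) (s : Finset ι)
    (hp : ∀ i ∈ s, 0 < p i) (hr : ∀ i ∈ s, 0 < r i) (hp1 : ∑ i ∈ s, p i = 1) :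
    ∑ f ∈ Fintype.piFinset (fun _ : Fin n => s), kpow p n f * Real.log (kpow p n f / kpow r n f)
      = n * ∑ i ∈ s, p i * Real.log (p i / r i) := by
  have h1 : ∀ f ∈ Fintype.piFinset (fun _ : Fin n => s),
      kpow p n f * Real.log (kpow p n f / kpow r n f) =
      ∑ t : Fin n, ∏ j, (if j = t then p (f j) * Real.log (p (f j) / r (f j)) else p (f j)) := by
    intro f hf
    rw [Fintype.mem_piFinset] at hf
    rw [kpow, kpow, ← Finset.prod_div_distrib, Real.log_prod
      (fun j _ => (div_pos (hp _ (hf j)) (hr _ (hf j))).ne'), Finset.mul_sum]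
    refine Finset.sum_congr rfl fun t _ => ?_
    rw [← Finset.mul_prod_erase _ _ (Finset.mem_univ t),
      ← Finset.mul_prod_erase _ (fun j => if j = t then _ else _) (Finset.mem_univ t)]
    have : ∏ x ∈ Finset.univ.erase t,
        (if x = t then p (f x) * Real.log (p (f x) / r (f x)) else p (f x))
        = ∏ x ∈ Finset.univ.erase t, p (f x) :=
      Finset.prod_congr rfl fun x hx => if_neg (Finset.ne_of_mem_erase hx)
    rw [this]
    simp only [if_true]
    ring
  rw [Finset.sum_congr rfl h1, Finset.sum_comm]
  have h2 : ∀ t ∈ (Finset.univ : Finset (Fin n)),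
      ∑ f ∈ Fintype.piFinset (fun _ : Fin n => s),
        ∏ j, (if j = t then p (f j) * Real.log (p (f j) / r (f j)) else p (f j))
      = ∑ i ∈ s, p i * Real.log (p i / r i) := by
    intro t _
    have := Finset.prod_univ_sum (fun _ : Fin n => s)
      (fun j i => if j = t then p i * Real.log (p i / r i) else p i)
    rw [← this, ← Finset.mul_prod_erase _ _ (Finset.mem_univ t)]
    rw [Finset.prod_eq_one, mul_one]
    · simp
    · intro x hx
      simp [Finset.ne_of_mem_erase hx, hp1]
  rw [Finset.sum_congr rfl h2]
  simp

end Helpers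

section Tropical

lemma aux_tropical {d : ℕ} {κ : Type*} (s : Finset κ) (T : κ → ℝ) (hT : ∀ j, 0 ≤ T j)
    (p : Fin d → κ → ℝ) (hp : ∀ k, ∀ j ∈ s, 0 < p k j) (q : Fin d → ℝ) (hq : ∀ k, 0 < q k)
    (hpq : ∀ k, ∑ j ∈ s, T j * p k j = q k) (β : Fin d → ℝ) (k : Fin d) (hk : 0 < β k)
    (hβ : ∀ l, l ≠ k → β l ≤ 0) (hβ0 : ∑ k, β k = 0) (M : ℝ) (hM : 0 < M)
    (hpM : ∀ j ∈ s, ∏ k, p k j ^ β k ≤ M) : ∏ k, q k ^ β k ≤ M := by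
  set w : Fin d → ℝ := fun l => if l = k then 0 else -β l / β k with hw
  have hne : ∀ l ∈ Finset.univ.erase k, l ≠ k := fun l hl => Finset.ne_of_mem_erase hl
  have hsum := Finset.add_sum_erase Finset.univ β (Finset.mem_univ k)
  have hw0 : ∀ l, 0 ≤ w l := by
    intro l
    simp only [hw]
    split_ifs with h
    · exact le_rfl
    · exact div_nonneg (by linarith [hβ l h]) hk.le
  have hw1 : ∑ l, w l = 1 := by
    rw [← Finset.add_sum_erase _ _ (Finset.mem_univ k)]
    have e2 : ∑ l ∈ Finset.univ.erase k, w l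
        = -(∑ l ∈ Finset.univ.erase k, β l) / β k := by
      rw [neg_div, Finset.sum_div, ← Finset.sum_neg_distrib]
      refine Finset.sum_congr rfl fun l hl => ?_
      simp only [hw, if_neg (hne l hl)]
      ring
    rw [e2]
    simp only [hw, if_true, zero_add]
    rw [div_eq_one_iff_eq hk.ne']
    linarith
  -- the product of powers in terms of the weights
  have e : ∀ x : Fin d → ℝ, (∀ l, 0 < x l) →
      ∏ l, x l ^ β l = (x k / ∏ l, x l ^ w l) ^ β k := by
    intro x hx
    have hpw : 0 < ∏ l, x l ^ w l := Finset.prod_pos fun l _ => Real.rpow_pos_of_pos (hx l) _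
    rw [Real.div_rpow (hx k).le hpw.le, ← Real.finsetProd_rpow _ _
      (fun l _ => (Real.rpow_pos_of_pos (hx l) _).le),
      ← Finset.mul_prod_erase _ _ (Finset.mem_univ k),
      ← Finset.mul_prod_erase _ (fun l => (x l ^ w l) ^ β k) (Finset.mem_univ k)]
    have h1 : (x k ^ w k) ^ β k = 1 := by simp [hw]
    rw [h1, one_mul, div_eq_mul_inv, ← Finset.prod_inv_distrib]
    congr 1
    refine Finset.prod_congr rfl fun l hl => ?_
    simp only [hw, if_neg (hne l hl)]
    rw [← Real.rpow_mul (hx l).le, ← Real.rpow_neg (hx l).le]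
    congr 1
    field_simp
  have hqw : 0 < ∏ l, q l ^ w l := Finset.prod_pos fun l _ => Real.rpow_pos_of_pos (hq l) _
  have hole := aux_holder s T hT p hp q hq hpq w hw0 hw1
  set C := M ^ (1 / β k) with hC
  have hC0 : 0 < C := Real.rpow_pos_of_pos hM _
  have hCM : C ^ β k = M := by
    rw [hC, ← Real.rpow_mul hM.le, one_div_mul_cancel hk.ne', Real.rpow_one]
  have hj : ∀ j ∈ s, T j * p k j ≤ C * (T j * ∏ l, p l j ^ w l) := by
    intro j hj
    have hpw : 0 < ∏ l, p l j ^ w l :=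
      Finset.prod_pos fun l _ => Real.rpow_pos_of_pos (hp l j hj) _
    have h := hpM j hj
    rw [e (fun l => p l j) (fun l => hp l j hj), ← hCM,
      Real.rpow_le_rpow_iff (div_pos (hp k j hj) hpw).le hC0.le hk, div_le_iff₀ hpw] at h
    calc _ ≤ T j * (C * ∏ l, p l j ^ w l) := mul_le_mul_of_nonneg_left h (hT j)
      _ = _ := by ring
  rw [e q hq, ← hCM, Real.rpow_le_rpow_iff (div_pos (hq k) hqw).le hC0.le hk, div_le_iff₀ hqw,
    ← hpq k]
  refine (Finset.sum_le_sum hj).trans ?_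
  rw [← Finset.mul_sum]
  exact mul_le_mul_of_nonneg_left hole hC0.le

end Tropical

/-- **Asymptotic matrix majorization, necessity.**  If some stochastic matrix
carries the `n`-th Kronecker powers of the columns of `P` to those of `Q` for
some `n ≥ 1`, then all the matrix `α`-divergences, tropical divergences and
Kullback–Leibler divergences are ordered (non-strictly) between `P` and `Q`. -/
theorem asymptotic_matrix_majorization_necessary
    {d m m' : ℕ} (hd : 1 ≤ d)
    (P : Fin d → Fin m → ℝ) (Q : Fin d → Fin m' → ℝ)
    (hP : ∀ k, IsProbVec (P k)) (hQ : ∀ k, IsProbVec (Q k))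
    (hPs : ∀ k l i, P k i ≠ 0 ↔ P l i ≠ 0)
    (hQs : ∀ k l i, Q k i ≠ 0 ↔ Q l i ≠ 0)
    (n : ℕ) (hn : 1 ≤ n)
    (T : (Fin n → Fin m') → (Fin n → Fin m) → ℝ) (hT : IsStochastic T)
    (hTP : ∀ k, matVec T (kpow (P k) n) = kpow (Q k) n) :
    (∀ α : Fin d → ℝ, (memAplus α ∨ memAminus α) → notBasis α →
      Dmat α Q ≤ Dmat α P) ∧
    (∀ β : Fin d → ℝ, memBminus β → β ≠ 0 → DmatT β Q ≤ DmatT β P) ∧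
    (∀ k l, k ≠ l → KL (Q k) (Q l) ≤ KL (P k) (P l)) := by
  classical
  have hd0 : 0 < d := hd
  let z : Fin d := ⟨0, hd0⟩
  haveI : Nonempty (Fin d) := ⟨z⟩
  have hP0 : ∀ k i, 0 ≤ P k i := fun k i => (hP k).1 i
  have hQ0 : ∀ k i, 0 ≤ Q k i := fun k i => (hQ k).1 i
  have memP : ∀ k i, i ∈ suppIdx P ↔ P k i ≠ 0 := by
    intro k i
    simp only [suppIdx, Finset.mem_filter, Finset.mem_univ, true_and]
    exact ⟨fun ⟨l, hl⟩ => (hPs l k i).1 hl, fun h => ⟨k, h⟩⟩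
  have memQ : ∀ k i, i ∈ suppIdx Q ↔ Q k i ≠ 0 := by
    intro k i
    simp only [suppIdx, Finset.mem_filter, Finset.mem_univ, true_and]
    exact ⟨fun ⟨l, hl⟩ => (hQs l k i).1 hl, fun h => ⟨k, h⟩⟩
  have posP : ∀ k, ∀ i ∈ suppIdx P, 0 < P k i := fun k i hi =>
    lt_of_le_of_ne (hP0 k i) ((memP k i).1 hi).symm
  have posQ : ∀ k, ∀ i ∈ suppIdx Q, 0 < Q k i := fun k i hi =>
    lt_of_le_of_ne (hQ0 k i) ((memQ k i).1 hi).symm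
  have zeroP : ∀ k i, i ∉ suppIdx P → P k i = 0 := fun k i hi => by
    by_contra h; exact hi ((memP k i).2 h)
  have zeroQ : ∀ k i, i ∉ suppIdx Q → Q k i = 0 := fun k i hi => by
    by_contra h; exact hi ((memQ k i).2 h)
  have sumP : ∀ k, ∑ i ∈ suppIdx P, P k i = 1 := fun k => by
    rw [← (hP k).2]
    exact Finset.sum_subset (Finset.subset_univ _) fun i _ hi => zeroP k i hi
  have sumQ : ∀ k, ∑ i ∈ suppIdx Q, Q k i = 1 := fun k => by
    rw [← (hQ k).2]
    exact Finset.sum_subset (Finset.subset_univ _) fun i _ hi => zeroQ k i hi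
  have neP : (suppIdx P).Nonempty := by
    by_contra h
    have := sumP z
    rw [Finset.not_nonempty_iff_eq_empty.1 h] at this
    simp at this
  have neQ : (suppIdx Q).Nonempty := by
    by_contra h
    have := sumQ z
    rw [Finset.not_nonempty_iff_eq_empty.1 h] at this
    simp at this
  set s := Fintype.piFinset (fun _ : Fin n => suppIdx P) with hs
  set t := Fintype.piFinset (fun _ : Fin n => suppIdx Q) with ht
  have posPn : ∀ k, ∀ f ∈ s, 0 < kpow (P k) n f := fun k f hf =>
    Finset.prod_pos fun j _ => posP k _ (Fintype.mem_piFinset.1 hf j)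
  have posQn : ∀ k, ∀ f ∈ t, 0 < kpow (Q k) n f := fun k f hf =>
    Finset.prod_pos fun j _ => posQ k _ (Fintype.mem_piFinset.1 hf j)
  have zeroPn : ∀ k, ∀ f, f ∉ s → kpow (P k) n f = 0 := fun k f hf => by
    rw [hs, Fintype.mem_piFinset, not_forall] at hf
    obtain ⟨j, hj⟩ := hf
    exact Finset.prod_eq_zero (Finset.mem_univ j) (zeroP k _ hj)
  have zeroQn : ∀ k, ∀ f, f ∉ t → kpow (Q k) n f = 0 := fun k f hf => by
    rw [ht, Fintype.mem_piFinset, not_forall] at hf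
    obtain ⟨j, hj⟩ := hf
    exact Finset.prod_eq_zero (Finset.mem_univ j) (zeroQ k _ hj)
  have hTs : ∀ i k, ∑ j ∈ s, T i j * kpow (P k) n j = kpow (Q k) n i := by
    intro i k
    rw [← hTP k, matVec]
    exact Finset.sum_subset (Finset.subset_univ _) fun j _ hj => by rw [zeroPn k j hj, mul_zero]
  have hT1 : ∀ j ∈ s, ∑ i ∈ t, T i j = 1 := by
    intro j hj
    rw [← hT.2 j]
    refine Finset.sum_subset (Finset.subset_univ _) fun i _ hi => ?_
    have h := hTs i z
    rw [zeroQn z i hi, Finset.sum_eq_zero_iff_of_nonneg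
      (fun j hj => mul_nonneg (hT.1 i j) (posPn z j hj).le)] at h
    exact (mul_eq_zero.1 (h j hj)).resolve_right (posPn z j hj).ne'
  have hn0 : n ≠ 0 := by omega
  have fP : ∀ α : Fin d → ℝ, 0 < ∑ i ∈ suppIdx P, ∏ k, P k i ^ α k := fun α =>
    Finset.sum_pos (fun i hi => Finset.prod_pos fun k _ => Real.rpow_pos_of_pos (posP k i hi) _) neP
  have fQ : ∀ α : Fin d → ℝ, 0 < ∑ i ∈ suppIdx Q, ∏ k, Q k i ^ α k := fun α =>
    Finset.sum_pos (fun i hi => Finset.prod_pos fun k _ => Real.rpow_pos_of_pos (posQ k i hi) _) neQ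
  refine ⟨?_, ?_, ?_⟩
  · rintro α (⟨hα1, hα⟩ | ⟨hα1, k₀, hk, hα⟩) hb
    · have hle : ∑ i ∈ suppIdx P, ∏ k, P k i ^ α k ≤ ∑ i ∈ suppIdx Q, ∏ k, Q k i ^ α k := by
        refine le_of_pow_le_pow_left₀ hn0 (fQ α).le ?_
        rw [← aux_kpow_sum P hP0, ← aux_kpow_sum Q hQ0, ← aux_swap s t T hT1]
        exact Finset.sum_le_sum fun i hi => aux_holder s (T i) (hT.1 i)
          (fun k => kpow (P k) n) posPn (fun k => kpow (Q k) n i) (fun k => posQn k i hi)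
          (hTs i) α hα hα1
      have hmax : (⨆ k, α k) < 1 := by
        obtain ⟨k, hk⟩ := exists_eq_ciSup_of_finite (f := α)
        rw [← hk]
        by_contra hge
        push Not at hge
        apply hb k
        have hsum := Finset.add_sum_erase Finset.univ α (Finset.mem_univ k)
        have hnn : 0 ≤ ∑ l ∈ Finset.univ.erase k, α l := Finset.sum_nonneg fun l _ => hα l
        have h0 : ∑ l ∈ Finset.univ.erase k, α l = 0 := by linarith
        rw [Finset.sum_eq_zero_iff_of_nonneg (fun l _ => hα l)] at h0
        funext l
        by_cases hl : l = k
        · subst hl; rw [Pi.single_eq_same]; linarith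
        · rw [Pi.single_eq_of_ne hl]; exact h0 l (by simp [hl])
      rw [Dmat, Dmat]
      exact mul_le_mul_of_nonpos_left (Real.log_le_log (fP α) hle)
        (one_div_nonpos.2 (by linarith))
    · have hle : ∑ i ∈ suppIdx Q, ∏ k, Q k i ^ α k ≤ ∑ i ∈ suppIdx P, ∏ k, P k i ^ α k := by
        refine le_of_pow_le_pow_left₀ hn0 (fP α).le ?_
        rw [← aux_kpow_sum P hP0, ← aux_kpow_sum Q hQ0,
          ← aux_swap s t T hT1 (fun f => ∏ k, kpow (P k) n f ^ α k)]
        exact Finset.sum_le_sum fun i hi => aux_reverse_holder s (T i) (hT.1 i)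
          (fun k => kpow (P k) n) posPn (fun k => kpow (Q k) n i) (fun k => posQn k i hi)
          (hTs i) α k₀ hk hα hα1
      have hmax : 1 ≤ ⨆ k, α k := hk.trans (le_ciSup (Set.finite_range α).bddAbove k₀)
      rw [Dmat, Dmat]
      exact mul_le_mul_of_nonneg_left (Real.log_le_log (fQ α) hle)
        (one_div_nonneg.2 (by linarith))
  · rintro β ⟨hβ0, k₀, hk, hβ⟩ hne
    have hsum := Finset.add_sum_erase Finset.univ β (Finset.mem_univ k₀)
    have hk0 : 0 < β k₀ := by
      refine lt_of_le_of_ne hk fun h => hne ?_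
      have hnp : ∀ l ∈ Finset.univ.erase k₀, β l ≤ 0 := fun l hl =>
        hβ l (Finset.ne_of_mem_erase hl)
      have h0 : ∑ l ∈ Finset.univ.erase k₀, β l = 0 := by linarith
      rw [Finset.sum_eq_zero_iff_of_nonpos hnp] at h0
      funext l
      by_cases hl : l = k₀
      · subst hl; exact h.symm
      · exact h0 l (by simp [hl])
    have hmax : 0 ≤ ⨆ k, β k := hk.trans (le_ciSup (Set.finite_range β).bddAbove k₀)
    have gP : ∀ i ∈ suppIdx P, 0 < ∏ k, P k i ^ β k := fun i hi =>
      Finset.prod_pos fun k _ => Real.rpow_pos_of_pos (posP k i hi) _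
    have gQ : ∀ i ∈ suppIdx Q, 0 < ∏ k, Q k i ^ β k := fun i hi =>
      Finset.prod_pos fun k _ => Real.rpow_pos_of_pos (posQ k i hi) _
    set M := ⨆ i ∈ suppIdx P, ∏ k, P k i ^ β k with hM
    have leM : ∀ i ∈ suppIdx P, ∏ k, P k i ^ β k ≤ M := by
      intro i hi
      have h := le_ciSup (f := fun i => ⨆ (_ : i ∈ suppIdx P), ∏ k, P k i ^ β k)
        (Set.finite_range _).bddAbove i
      simp only [ciSup_pos hi] at h
      exact h
    obtain ⟨i₁, hi₁⟩ := neP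
    have hMpos : 0 < M := (gP i₁ hi₁).trans_le (leM i₁ hi₁)
    have main : ∀ i ∈ suppIdx Q, ∏ k, Q k i ^ β k ≤ M := by
      intro i hi
      refine le_of_pow_le_pow_left₀ hn0 hMpos.le ?_
      have hmem : (fun _ : Fin n => i) ∈ t := Fintype.mem_piFinset.2 fun _ => hi
      have hQc := aux_kpow_prod Q hQ0 n β (fun _ => i)
      simp only [Finset.prod_const, Finset.card_univ, Fintype.card_fin] at hQc
      rw [← hQc]
      have hPM : ∀ f ∈ s, ∏ k, kpow (P k) n f ^ β k ≤ M ^ n := by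
        intro f hf
        rw [aux_kpow_prod P hP0]
        calc _ ≤ ∏ _j : Fin n, M := Finset.prod_le_prod
              (fun j _ => (gP _ (Fintype.mem_piFinset.1 hf j)).le)
              (fun j _ => leM _ (Fintype.mem_piFinset.1 hf j))
          _ = M ^ n := by simp
      exact aux_tropical s (T fun _ => i) (hT.1 _) (fun k => kpow (P k) n) posPn
        (fun k => kpow (Q k) n (fun _ => i)) (fun k => posQn k _ hmem) (hTs _) β k₀ hk0 hβ hβ0
        (M ^ n) (pow_pos hMpos n) hPM
    have hsup : (⨆ i ∈ suppIdx Q, ∏ k, Q k i ^ β k) ≤ M :=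
      Real.iSup_le (fun i => Real.iSup_le (fun hi => main i hi) hMpos.le) hMpos.le
    obtain ⟨i₂, hi₂⟩ := neQ
    have hQpos : 0 < ⨆ i ∈ suppIdx Q, ∏ k, Q k i ^ β k := by
      have h := le_ciSup (f := fun i => ⨆ (_ : i ∈ suppIdx Q), ∏ k, Q k i ^ β k)
        (Set.finite_range _).bddAbove i₂
      simp only [ciSup_pos hi₂] at h
      exact (gQ i₂ hi₂).trans_le h
    rw [DmatT, DmatT]
    exact mul_le_mul_of_nonneg_left (Real.log_le_log hQpos hsup) (one_div_nonneg.2 hmax)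
  · intro k l _
    have eP : KL (P k) (P l) = ∑ i ∈ suppIdx P, P k i * Real.log (P k i / P l i) := by
      rw [KL]; symm
      exact Finset.sum_subset (Finset.subset_univ _) fun i _ hi => by rw [zeroP k i hi, zero_mul]
    have eQ : KL (Q k) (Q l) = ∑ i ∈ suppIdx Q, Q k i * Real.log (Q k i / Q l i) := by
      rw [KL]; symm
      exact Finset.sum_subset (Finset.subset_univ _) fun i _ hi => by rw [zeroQ k i hi, zero_mul]
    have hnpos : (0 : ℝ) < n := by exact_mod_cast hn
    refine le_of_mul_le_mul_left ?_ hnpos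
    rw [eP, eQ, ← aux_kpow_KL (P k) (P l) n _ (posP k) (posP l) (sumP k),
      ← aux_kpow_KL (Q k) (Q l) n _ (posQ k) (posQ l) (sumQ k),
      ← aux_swap s t T hT1 (fun f => kpow (P k) n f * Real.log (kpow (P k) n f / kpow (P l) n f))]
    exact Finset.sum_le_sum fun i hi => aux_KL s (T i) (hT.1 i) _ _ (posPn k) (posPn l) _ _
      (posQn k i hi) (posQn l i hi) (hTs i k) (hTs i l)
end
end
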